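/- arXiv:2409.06465 — 2 statements merged into one kernel-verified Lean document; each statement's English description precedes it below -/
import Mathlib

section
/- Fix ν ≥ 2, positive integers s,t, and f_{i,j} ∈ L¹([-π,π]; ℂ^{s×t}) for i,j = 1,…,ν. Let A_n be the ν×ν block matrix with (i,j) block T_{n_i,n_j}(f_{i,j}), where n = n_1+⋯+n_ν, n_i/n → c_i ∈ (0,1), c_1+⋯+c_ν = 1, and each c_j is rational: c_j = m_j/m with m_j, m positive integers and m a common denominator (so m_1+⋯+m_ν = m). Define, for j,k = 1,…,ν, the matrix-valued functions E_{j,k} : [-π,π] → ℂ^{sm_j×tm_k} by: E_{j,j} = I_{m_j} ⊗ f_{j,j}; for j ≠ k with m_k ≥ m_j, E_{j,k} = [I_{m_j} ⊗ f_{j,k} | O_{sm_j×t(m_k−m_j)}]; for j ≠ k with m_j ≥ m_k, E_{j,k} = [I_{m_k} ⊗ f_{j,k}; O_{s(m_j−m_k)×tm_k}]. Set F = (E_{j,k})_{j,k=1}^ν : [-π,π] → ℂ^{sm×tm}. Then {A_n}_n ∼_σ F, and if in addition every A_n is Hermitian then {A_n}_n ∼_λ F. -/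
open MeasureTheory Filter Topology Matrix
open scoped Real

noncomputable section

/-- Sum of `F` over the eigenvalues (with multiplicity) of a square complex matrix,
the eigenvalues being the roots of the characteristic polynomial. -/
def eigSum {ι : Type*} [Fintype ι] [DecidableEq ι] (F : ℂ → ℂ) (A : Matrix ι ι ℂ) : ℂ :=
  (A.charpoly.roots.map F).sum

/-- Sum of `F` over the singular values `σ_1, …, σ_{min(#rows,#cols)}` of a rectangular
complex matrix: the singular values are the square roots of the eigenvalues of `A * Aᴴ`,
discarding the `#rows - min(#rows,#cols)` superfluous zero ones. -/
def svSum {m n : Type*} [Fintype m] [Fintype n] [DecidableEq m]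
    (F : ℝ → ℂ) (A : Matrix m n ℂ) : ℂ :=
  (∑ i, F (Real.sqrt ((Matrix.isHermitian_mul_conjTranspose_self A).eigenvalues i))) -
    ((Fintype.card m - min (Fintype.card m) (Fintype.card n) : ℕ) : ℂ) * F 0

/-- `{A_n}_n ∼_σ f` : the matrix-sequence `A` is distributed as the matrix-valued
symbol `f : Ω → ℂ^{ρ×τ}` in the sense of the singular values (Weyl sense). -/
def DistributedSV {Θ : Type*} [MeasureSpace Θ] (Ω : Set Θ)
    {ρ τ : Type*} [Fintype ρ] [Fintype τ] [DecidableEq ρ]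
    (f : Θ → Matrix ρ τ ℂ)
    {ι κ : ℕ → Type} [∀ n, Fintype (ι n)] [∀ n, Fintype (κ n)] [∀ n, DecidableEq (ι n)]
    (A : ∀ n, Matrix (ι n) (κ n) ℂ) : Prop :=
  ∀ F : ℝ → ℂ, Continuous F → HasCompactSupport F →
    Tendsto
      (fun n => ((min (Fintype.card (ι n)) (Fintype.card (κ n)) : ℕ) : ℂ)⁻¹ * svSum F (A n))
      atTop
      (𝓝 (((volume Ω).toReal : ℂ)⁻¹ *
        ∫ θ in Ω, ((min (Fintype.card ρ) (Fintype.card τ) : ℕ) : ℂ)⁻¹ * svSum F (f θ)))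

/-- `{A_n}_n ∼_λ f` : the matrix-sequence `A` is distributed as the matrix-valued
symbol `f : Ω → ℂ^{ρ×ρ}` in the sense of the eigenvalues (Weyl sense). -/
def DistributedEig {Θ : Type*} [MeasureSpace Θ] (Ω : Set Θ)
    {ρ : Type*} [Fintype ρ] [DecidableEq ρ]
    (f : Θ → Matrix ρ ρ ℂ)
    {ι : ℕ → Type} [∀ n, Fintype (ι n)] [∀ n, DecidableEq (ι n)]
    (A : ∀ n, Matrix (ι n) (ι n) ℂ) : Prop :=
  ∀ F : ℂ → ℂ, Continuous F → HasCompactSupport F →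
    Tendsto (fun n => ((Fintype.card (ι n) : ℕ) : ℂ)⁻¹ * eigSum F (A n)) atTop
      (𝓝 (((volume Ω).toReal : ℂ)⁻¹ *
        ∫ θ in Ω, ((Fintype.card ρ : ℕ) : ℂ)⁻¹ * eigSum F (f θ)))

/-- `{A_n}_n ∼_σ α I` (constant symbol `α I_s`, `α = 0` being the notion of a
zero-distributed matrix-sequence): the limit of the singular value averages is `F(α)`. -/
def DistributedSVConst (α : ℝ)
    {ι κ : ℕ → Type} [∀ n, Fintype (ι n)] [∀ n, Fintype (κ n)] [∀ n, DecidableEq (ι n)]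
    (A : ∀ n, Matrix (ι n) (κ n) ℂ) : Prop :=
  ∀ F : ℝ → ℂ, Continuous F → HasCompactSupport F →
    Tendsto
      (fun n => ((min (Fintype.card (ι n)) (Fintype.card (κ n)) : ℕ) : ℂ)⁻¹ * svSum F (A n))
      atTop (𝓝 (F α))

/-- `{A_n}_n ∼_λ α I` (constant symbol `α I_s`, `α` real): the limit of the eigenvalue
averages is `F(α)`. -/
def DistributedEigConst (α : ℝ)
    {ι : ℕ → Type} [∀ n, Fintype (ι n)] [∀ n, DecidableEq (ι n)]
    (A : ∀ n, Matrix (ι n) (ι n) ℂ) : Prop :=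
  ∀ F : ℂ → ℂ, Continuous F → HasCompactSupport F →
    Tendsto (fun n => ((Fintype.card (ι n) : ℕ) : ℂ)⁻¹ * eigSum F (A n)) atTop
      (𝓝 (F (α : ℂ)))

/-- The `k`-th Fourier coefficient (computed entrywise) of a matrix-valued function on
`[-π, π]`: `f̂_k = (1/2π) ∫_{-π}^{π} f(θ) e^{-ικθ} dθ`. -/
def fCoeff {ρ τ : Type*} (f : ℝ → Matrix ρ τ ℂ) (k : ℤ) : Matrix ρ τ ℂ :=
  Matrix.of fun a b =>
    ((2 * π : ℝ) : ℂ)⁻¹ *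
      ∫ θ in (-π : ℝ)..π, f θ a b * Complex.exp (-(Complex.I * (k : ℂ) * (θ : ℂ)))

/-- The (rectangular) block Toeplitz matrix `T_{n,n'}(f) = [f̂_{i-j}]`, of size
`sn × tn'` when `f` is `s × t` matrix-valued. -/
def blockToeplitz {ρ τ : Type*} (f : ℝ → Matrix ρ τ ℂ) (n n' : ℕ) :
    Matrix (Fin n × ρ) (Fin n' × τ) ℂ :=
  Matrix.of fun p q => fCoeff f (((p.1 : ℕ) : ℤ) - ((q.1 : ℕ) : ℤ)) p.2 q.2

/-- The `ν × ν` block matrix with `(i,j)` block the rectangular block Toeplitz matrix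
`T_{n_i,n_j}(f_{i,j})`; the row index `⟨i,(k,a)⟩` consists of the block row `i`, the
Toeplitz row `k` and the intra-block row `a`. -/
def blockMat (ν s t : ℕ) (f : Fin ν → Fin ν → ℝ → Matrix (Fin s) (Fin t) ℂ)
    (ns : Fin ν → ℕ) :
    Matrix ((i : Fin ν) × (Fin (ns i) × Fin s)) ((j : Fin ν) × (Fin (ns j) × Fin t)) ℂ :=
  Matrix.of fun P Q =>
    fCoeff (f P.1 Q.1) (((P.2.1 : ℕ) : ℤ) - ((Q.2.1 : ℕ) : ℤ)) P.2.2 Q.2.2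

/-- Recasting of the column index of a `ν × ν` block matrix along an equality `s = t`,
realizing it as a square matrix. -/
def sigCast (ν s t : ℕ) (ns : Fin ν → ℕ) (hst : s = t) :
    ((j : Fin ν) × (Fin (ns j) × Fin s)) → ((j : Fin ν) × (Fin (ns j) × Fin t)) :=
  fun Q => ⟨Q.1, (Q.2.1, Fin.cast hst Q.2.2)⟩

/-- The `sm × tm` matrix-valued symbol `F = (E_{j,k})_{j,k=1}^ν` of Theorem
`th:general`: `E_{j,j} = I_{m_j} ⊗ f_{j,j}` and, for `j ≠ k`,
`E_{j,k} = I_{min{m_j,m_k}} ⊗ f_{j,k}` padded with zero columns (if `m_k ≥ m_j`) or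
zero rows (if `m_j ≥ m_k`); entrywise, the `((j,(p,a)),(k,(q,b)))` entry is
`f_{j,k} a b` if `p = q` and `0` otherwise. -/
def generalSymbol (ν s t : ℕ) (f : Fin ν → Fin ν → ℝ → Matrix (Fin s) (Fin t) ℂ)
    (mj : Fin ν → ℕ) :
    ℝ → Matrix ((j : Fin ν) × (Fin (mj j) × Fin s)) ((k : Fin ν) × (Fin (mj k) × Fin t)) ℂ :=
  fun θ => Matrix.of fun P Q =>
    if (P.2.1 : ℕ) = (Q.2.1 : ℕ) then f P.1 Q.1 θ P.2.2 Q.2.2 else 0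

section

section linalg
variable {ι : Type*} [Fintype ι] [DecidableEq ι]

/-- Sum of a function of a real variable over (real parts of) the eigenvalues. -/
def eSum (φ : ℝ → ℂ) (A : Matrix ι ι ℂ) : ℂ := eigSum (fun z => φ z.re) A

lemma eigSum_herm (F : ℂ → ℂ) {A : Matrix ι ι ℂ} (hA : A.IsHermitian) :
    eigSum F A = ∑ i, F (hA.eigenvalues i) := by
  unfold eigSum
  rw [hA.roots_charpoly_eq_eigenvalues, Multiset.map_map]
  rfl

lemma eSum_herm (φ : ℝ → ℂ) {A : Matrix ι ι ℂ} (hA : A.IsHermitian) :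
    eSum φ A = ∑ i, φ (hA.eigenvalues i) := by
  unfold eSum
  rw [eigSum_herm _ hA]
  simp

lemma eSum_sub_le (φ χ : ℝ → ℂ) {A : Matrix ι ι ℂ} (hA : A.IsHermitian) (ε : ℝ)
    (h : ∀ x, ‖φ x - χ x‖ ≤ ε) : ‖eSum φ A - eSum χ A‖ ≤ Fintype.card ι * ε := by
  rw [eSum_herm _ hA, eSum_herm _ hA, ← Finset.sum_sub_distrib]
  refine (norm_sum_le _ _).trans ((Finset.sum_le_sum fun i _ => h _).trans ?_)
  simp

/-- Functional calculus of a Hermitian matrix. -/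
def mfun {A : Matrix ι ι ℂ} (hA : A.IsHermitian) (φ : ℝ → ℂ) : Matrix ι ι ℂ :=
  (hA.eigenvectorUnitary : Matrix ι ι ℂ) * diagonal (fun i => φ (hA.eigenvalues i)) *
    star (hA.eigenvectorUnitary : Matrix ι ι ℂ)

lemma mfun_mul {A : Matrix ι ι ℂ} (hA : A.IsHermitian) (φ χ : ℝ → ℂ) :
    mfun hA φ * mfun hA χ = mfun hA (fun x => φ x * χ x) := by
  unfold mfun
  have h : star (hA.eigenvectorUnitary : Matrix ι ι ℂ) * (hA.eigenvectorUnitary : Matrix ι ι ℂ) = 1 :=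
    Unitary.coe_star_mul_self _
  calc _ = (hA.eigenvectorUnitary : Matrix ι ι ℂ) * diagonal (fun i => φ (hA.eigenvalues i)) *
        (star (hA.eigenvectorUnitary : Matrix ι ι ℂ) * (hA.eigenvectorUnitary : Matrix ι ι ℂ)) *
        diagonal (fun i => χ (hA.eigenvalues i)) * star (hA.eigenvectorUnitary : Matrix ι ι ℂ) := by
          simp only [Matrix.mul_assoc]
    _ = _ := by
      rw [h, Matrix.mul_one, Matrix.mul_assoc _ (diagonal _) (diagonal _), diagonal_mul_diagonal]

lemma mfun_one {A : Matrix ι ι ℂ} (hA : A.IsHermitian) : mfun hA (fun _ => 1) = 1 := by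
  unfold mfun
  have : (diagonal (fun _ => 1) : Matrix ι ι ℂ) = 1 := diagonal_one
  rw [this, Matrix.mul_one]
  exact Unitary.coe_mul_star_self _

lemma mfun_id {A : Matrix ι ι ℂ} (hA : A.IsHermitian) : mfun hA (fun x => (x : ℂ)) = A := by
  conv_rhs => rw [hA.spectral_theorem, Unitary.conjStarAlgAut_apply]
  rfl

lemma mfun_add {A : Matrix ι ι ℂ} (hA : A.IsHermitian) (φ χ : ℝ → ℂ) :
    mfun hA (fun x => φ x + χ x) = mfun hA φ + mfun hA χ := by
  unfold mfun
  rw [← diagonal_add, Matrix.mul_add, Matrix.add_mul]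

lemma mfun_smul {A : Matrix ι ι ℂ} (hA : A.IsHermitian) (c : ℂ) (φ : ℝ → ℂ) :
    mfun hA (fun x => c * φ x) = c • mfun hA φ := by
  unfold mfun
  have : (diagonal fun i => c * φ (hA.eigenvalues i)) = c • diagonal fun i => φ (hA.eigenvalues i) := by
    rw [← diagonal_smul]; rfl
  rw [this, Matrix.mul_smul, Matrix.smul_mul]

lemma mfun_pow {A : Matrix ι ι ℂ} (hA : A.IsHermitian) (φ : ℝ → ℂ) (k : ℕ) :
    mfun hA φ ^ k = mfun hA (fun x => φ x ^ k) := by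
  induction k with
  | zero => simp [mfun_one]
  | succ k ih => rw [pow_succ, ih, mfun_mul]; simp [pow_succ]

lemma trace_mfun {A : Matrix ι ι ℂ} (hA : A.IsHermitian) (φ : ℝ → ℂ) :
    (mfun hA φ).trace = eSum φ A := by
  unfold mfun
  rw [Matrix.trace_mul_comm, ← Matrix.mul_assoc, Unitary.coe_star_mul_self, Matrix.one_mul,
    eSum_herm _ hA, trace_diagonal]

open scoped Matrix.Norms.L2Operator in
/-- Contractions for the operator norm. -/
def IsContr (X : Matrix ι ι ℂ) : Prop := ‖X‖ ≤ 1

open scoped Matrix.Norms.L2Operator in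
lemma IsContr.mul {X Y : Matrix ι ι ℂ} (hX : IsContr X) (hY : IsContr Y) : IsContr (X * Y) := by
  unfold IsContr at *
  exact (norm_mul_le _ _).trans (by nlinarith [norm_nonneg X, norm_nonneg Y])

lemma isContr_one : IsContr (1 : Matrix ι ι ℂ) := by
  unfold IsContr
  rw [← diagonal_one, l2_opNorm_diagonal]
  exact (pi_norm_le_iff_of_nonneg zero_le_one).2 (fun i => by simp)

open scoped Matrix.Norms.L2Operator in
lemma isContr_mfun {A : Matrix ι ι ℂ} (hA : A.IsHermitian) (φ : ℝ → ℂ) (h : ∀ x, ‖φ x‖ ≤ 1) :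
    IsContr (mfun hA φ) := by
  unfold IsContr mfun
  rw [← Unitary.coe_star, CStarRing.norm_mul_coe_unitary, CStarRing.norm_coe_unitary_mul,
    l2_opNorm_diagonal]
  exact (pi_norm_le_iff_of_nonneg zero_le_one).2 (fun i => h _)

open scoped Matrix.Norms.L2Operator in
lemma IsContr.bilin {X : Matrix ι ι ℂ} (hX : IsContr X) (a b : ι → ℂ) :
    ‖∑ i, ∑ j, a i * X i j * b j‖ ≤ √(∑ i, ‖a i‖ ^ 2) * √(∑ i, ‖b i‖ ^ 2) := by
  have h1 := l2_opNorm_mulVec X (WithLp.toLp 2 b)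
  have h2 := norm_inner_le_norm (𝕜 := ℂ) (WithLp.toLp 2 (fun i => star (a i)) : EuclideanSpace ℂ ι)
    (WithLp.toLp 2 (X *ᵥ b))
  have h3 : inner ℂ (WithLp.toLp 2 (fun i => star (a i)) : EuclideanSpace ℂ ι)
    (WithLp.toLp 2 (X *ᵥ b)) = ∑ i, ∑ j, a i * X i j * b j := by
    simp [PiLp.inner_apply, mulVec, dotProduct, Finset.sum_mul]
    refine Finset.sum_congr rfl fun i _ => Finset.sum_congr rfl fun j _ => by ring
  rw [h3] at h2
  have h4 : ‖(WithLp.toLp 2 (fun i => star (a i)) : EuclideanSpace ℂ ι)‖ = √(∑ i, ‖a i‖ ^ 2) := by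
    simp [EuclideanSpace.norm_eq]
  have h5 : ‖(WithLp.toLp 2 b : EuclideanSpace ℂ ι)‖ = √(∑ i, ‖b i‖ ^ 2) := by
    simp [EuclideanSpace.norm_eq]
  rw [h4] at h2
  refine h2.trans (mul_le_mul_of_nonneg_left ?_ (Real.sqrt_nonneg _))
  rw [← h5]
  refine h1.trans ?_
  have := norm_nonneg (WithLp.toLp 2 b : EuclideanSpace ℂ ι)
  unfold IsContr at hX
  nlinarith

lemma IsContr.bilin_card {X : Matrix ι ι ℂ} (hX : IsContr X) (a b : ι → ℂ)
    (ha : ∀ i, ‖a i‖ ≤ 1) (hb : ∀ i, ‖b i‖ ≤ 1) :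
    ‖∑ i, ∑ j, a i * X i j * b j‖ ≤ Fintype.card ι := by
  refine (hX.bilin a b).trans ?_
  have key : ∀ c : ι → ℂ, (∀ i, ‖c i‖ ≤ 1) → ∑ i, ‖c i‖ ^ 2 ≤ Fintype.card ι := by
    intro c hc
    refine (Finset.sum_le_sum (g := fun _ => (1:ℝ)) fun i _ => ?_).trans (by simp)
    exact pow_le_one₀ (norm_nonneg _) (hc i)
  calc _ ≤ √(Fintype.card ι) * √(Fintype.card ι) := by
        gcongr
        · exact key a ha
        · exact key b hb
    _ = _ := Real.mul_self_sqrt (by positivity)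

lemma IsContr.entry {X : Matrix ι ι ℂ} (hX : IsContr X) (i j : ι) : ‖X i j‖ ≤ 1 := by
  have := hX.bilin (Pi.single i 1) (Pi.single j 1)
  have h1 : ∀ i : ι, ∑ x, ‖(Pi.single i 1 : ι → ℂ) x‖ ^ 2 = 1 := by
    intro i
    rw [Finset.sum_eq_single i] <;> simp +contextual
  rw [h1, h1] at this
  simpa [Pi.single_apply] using this

/-- The Cayley function. -/
def cay (x : ℝ) : ℂ := ((x : ℂ) - Complex.I) / ((x : ℂ) + Complex.I)

lemma add_I_ne (x : ℝ) : (x : ℂ) + Complex.I ≠ 0 := by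
  intro h; have := congrArg Complex.im h; simp at this

lemma norm_cay (x : ℝ) : ‖cay x‖ = 1 := by
  unfold cay
  have : (x : ℂ) - Complex.I = (starRingEnd ℂ) ((x : ℂ) + Complex.I) := by
    simp [sub_eq_add_neg]
  rw [norm_div, this, RCLike.norm_conj, div_self (norm_ne_zero_iff.2 (add_I_ne x))]

def resol (x : ℝ) : ℂ := ((x : ℂ) + Complex.I)⁻¹

lemma norm_resol (x : ℝ) : ‖resol x‖ ≤ 1 := by
  unfold resol
  rw [norm_inv]
  apply inv_le_one_of_one_le₀
  have := Complex.abs_im_le_norm ((x : ℂ) + Complex.I)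
  simpa using this

lemma cay_eq (x : ℝ) : cay x = 1 + (-2 * Complex.I) * resol x := by
  unfold cay resol
  field_simp [add_I_ne x]
  ring

lemma mfun_cay {A : Matrix ι ι ℂ} (hA : A.IsHermitian) :
    mfun hA cay = 1 + (-2 * Complex.I) • mfun hA resol := by
  rw [← mfun_smul, ← mfun_one hA, ← mfun_add]
  congr 1; funext x; exact cay_eq x

lemma mfun_resol_sub {A B : Matrix ι ι ℂ} (hA : A.IsHermitian) (hB : B.IsHermitian) :
    mfun hA resol - mfun hB resol = mfun hA resol * (B - A) * mfun hB resol := by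
  have key : ∀ {A : Matrix ι ι ℂ} (hA : A.IsHermitian),
      mfun hA (fun x => (x : ℂ) + Complex.I) = A + Complex.I • 1 := by
    intro A hA
    rw [mfun_add, mfun_id]
    congr 1
    rw [← mfun_one hA, ← mfun_smul]; simp
  have hA1 : mfun hA resol * (A + Complex.I • 1) = 1 := by
    rw [← key hA, mfun_mul, ← mfun_one hA]
    congr 1; funext x; exact inv_mul_cancel₀ (add_I_ne x)
  have hB1 : (B + Complex.I • 1) * mfun hB resol = 1 := by
    rw [← key hB, mfun_mul, ← mfun_one hB]
    congr 1; funext x; exact mul_inv_cancel₀ (add_I_ne x)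
  calc _ = mfun hA resol * ((B + Complex.I • 1) * mfun hB resol) -
        (mfun hA resol * (A + Complex.I • 1)) * mfun hB resol := by
          rw [hA1, hB1, Matrix.mul_one, Matrix.one_mul]
    _ = _ := by noncomm_ring

lemma trace_pert_aux {A B : Matrix ι ι ℂ} (hA : A.IsHermitian) (hB : B.IsHermitian) (c : ℝ)
    (hc : ∀ X : Matrix ι ι ℂ, IsContr X → ‖(X * (B - A)).trace‖ ≤ c) (k : ℕ) :
    ∀ Y, IsContr Y →
    ‖(Y * mfun hA cay ^ k).trace - (Y * mfun hB cay ^ k).trace‖ ≤ 2 * k * c := by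
  induction k with
  | zero => intro Y hY; simp
  | succ k ih =>
    intro Y hY
    have hcayA : IsContr (mfun hA cay ^ k) := by
      rw [mfun_pow]; exact isContr_mfun _ _ (fun x => by simp [norm_cay])
    have hcayB : IsContr (mfun hB cay) := isContr_mfun _ _ (fun x => by simp [norm_cay])
    have h1 : (Y * mfun hA cay ^ (k+1)).trace - (Y * mfun hB cay ^ (k+1)).trace =
        (-2 * Complex.I) * ((mfun hB resol * (Y * mfun hA cay ^ k) * mfun hA resol) * (B - A)).trace
        + (((mfun hB cay * Y) * mfun hA cay ^ k).trace -
          ((mfun hB cay * Y) * mfun hB cay ^ k).trace) := by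
      have e1 : (mfun hB resol * (Y * mfun hA cay ^ k) * mfun hA resol * (B - A)).trace =
        (Y * mfun hA cay ^ k * (mfun hA resol - mfun hB resol)).trace := by
        rw [mfun_resol_sub, ← Matrix.mul_assoc, ← Matrix.mul_assoc, Matrix.trace_mul_comm _ (mfun hB resol)]
        simp only [Matrix.mul_assoc]
      have e2 : ∀ Z : Matrix ι ι ℂ, (mfun hB cay * Y * Z).trace = (Y * Z * mfun hB cay).trace := by
        intro Z
        rw [Matrix.mul_assoc, Matrix.trace_mul_comm]
      rw [e1, e2, e2, ← smul_eq_mul (-2 * Complex.I), ← Matrix.trace_smul, ← Matrix.trace_sub, ← Matrix.trace_sub,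
        ← Matrix.trace_add]
      congr 1
      rw [pow_succ, pow_succ, ← Matrix.mul_smul, smul_sub]
      have e3 : (-2 * Complex.I) • mfun hA resol - (-2 * Complex.I) • mfun hB resol =
        mfun hA cay - mfun hB cay := by rw [mfun_cay, mfun_cay]; abel
      rw [e3]
      noncomm_ring
    rw [h1]
    refine (norm_add_le _ _).trans ?_
    have h2 := hc (mfun hB resol * (Y * mfun hA cay ^ k) * mfun hA resol)
      (((isContr_mfun hB _ norm_resol).mul (hY.mul hcayA)).mul (isContr_mfun hA _ norm_resol))
    have h3 := ih (mfun hB cay * Y) (hcayB.mul hY)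
    rw [norm_mul]
    have h4 : ‖(-2 * Complex.I : ℂ)‖ = 2 := by simp
    rw [h4]
    push_cast
    linarith

lemma eSum_cay_pert {A B : Matrix ι ι ℂ} (hA : A.IsHermitian) (hB : B.IsHermitian) (c : ℝ)
    (hc : ∀ X : Matrix ι ι ℂ, IsContr X → ‖(X * (B - A)).trace‖ ≤ c) (k : ℕ) :
    ‖eSum (fun x => cay x ^ k) A - eSum (fun x => cay x ^ k) B‖ ≤ 2 * k * c := by
  have := trace_pert_aux hA hB c hc k 1 isContr_one
  rwa [Matrix.one_mul, Matrix.one_mul, mfun_pow, mfun_pow, trace_mfun, trace_mfun] at this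

lemma eSum_cay_l1 {A B : Matrix ι ι ℂ} (hA : A.IsHermitian) (hB : B.IsHermitian) (k : ℕ) :
    ‖eSum (fun x => cay x ^ k) A - eSum (fun x => cay x ^ k) B‖ ≤
      2 * k * ∑ i, ∑ j, ‖A i j - B i j‖ := by
  refine eSum_cay_pert hA hB _ (fun X hX => ?_) k
  simp only [Matrix.trace, Matrix.diag, Matrix.mul_apply]
  rw [Finset.sum_comm]
  refine (norm_sum_le _ _).trans (Finset.sum_le_sum fun i _ => (norm_sum_le _ _).trans
    (Finset.sum_le_sum fun j _ => ?_))
  rw [norm_mul, Matrix.sub_apply, norm_sub_rev]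
  have := hX.entry j i
  nlinarith [norm_nonneg (A i j - B i j)]

end linalg

end

section

section blocks
variable {ι κ : Type*} [Fintype ι] [DecidableEq ι] [Fintype κ] [DecidableEq κ]

lemma eigSum_reindex (F : ℂ → ℂ) (e : ι ≃ κ) (A : Matrix ι ι ℂ) :
    eigSum F (Matrix.reindex e e A) = eigSum F A := by
  unfold eigSum; rw [Matrix.charpoly_reindex]

lemma eigSum_submatrix (F : ℂ → ℂ) (e : κ ≃ ι) (A : Matrix ι ι ℂ) :
    eigSum F (A.submatrix e e) = eigSum F A := by
  have := eigSum_reindex F e.symm A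
  simpa [Matrix.reindex_apply] using this

lemma eigSum_fromBlocks (F : ℂ → ℂ) (A : Matrix ι ι ℂ) (B : Matrix κ κ ℂ) :
    eigSum F (fromBlocks A 0 0 B) = eigSum F A + eigSum F B := by
  unfold eigSum
  rw [Matrix.charpoly_fromBlocks_zero₁₂, Polynomial.roots_mul, Multiset.map_add, Multiset.sum_add]
  exact (A.charpoly_monic.mul B.charpoly_monic).ne_zero

lemma eigSum_zero (F : ℂ → ℂ) : eigSum F (0 : Matrix ι ι ℂ) = Fintype.card ι * F 0 := by
  unfold eigSum
  rw [Matrix.charpoly_zero]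
  simp [Multiset.nsmul_singleton]

lemma eigSum_pad (F : ℂ → ℂ) (p : ι → Prop) [DecidablePred p] (A : Matrix ι ι ℂ)
    (h : ∀ i j, ¬ (p i ∧ p j) → A i j = 0) :
    eigSum F A = eigSum F (A.submatrix (Subtype.val : {i // p i} → ι) Subtype.val) +
      Fintype.card {i // ¬ p i} * F 0 := by
  rw [← eigSum_submatrix F (Equiv.sumCompl p) A, ← eigSum_zero, ← eigSum_fromBlocks]
  congr 1
  ext i j
  rcases i with i | i <;> rcases j with j | j
  · simp
  · simp [h i j (fun hh => j.2 hh.2)]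
  · simp [h i j (fun hh => i.2 hh.1)]
  · simp [h i j (fun hh => i.2 hh.1)]

lemma eigSum_blockDiagonal (F : ℂ → ℂ) (M : κ → Matrix ι ι ℂ) :
    eigSum F (blockDiagonal M) = ∑ k, eigSum F (M k) := by
  unfold eigSum
  have h : (blockDiagonal M).charpoly = ∏ k, (M k).charpoly := by
    unfold Matrix.charpoly
    rw [← det_blockDiagonal]
    congr 1
    ext1 ⟨i, k⟩ ⟨j, l⟩
    rw [blockDiagonal_apply]
    by_cases hkl : k = l
    · subst hkl
      by_cases hij : i = j
      · subst hij; simp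
      · simp [hij]
    · simp [blockDiagonal_apply, hkl]
  rw [h, Polynomial.roots_prod]
  · simp [Multiset.map_bind, Multiset.sum_bind]
  · exact Finset.prod_ne_zero_iff.2 fun k _ => (M k).charpoly_monic.ne_zero

lemma eigSum_conj (F : ℂ → ℂ) (W W' A : Matrix ι ι ℂ) (h : W' * W = 1) :
    eigSum F (W * A * W') = eigSum F A := by
  unfold eigSum
  rw [Matrix.mul_assoc, Matrix.charpoly_mul_comm, Matrix.mul_assoc, h, Matrix.mul_one]

lemma eigSum_sq (F : ℂ → ℂ) {A : Matrix ι ι ℂ} (hA : A.IsHermitian) :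
    eigSum F (A * A) = eigSum (fun z => F (z * z)) A := by
  have h : A * A = (hA.eigenvectorUnitary : Matrix ι ι ℂ) *
     diagonal (fun i => (hA.eigenvalues i : ℂ) * hA.eigenvalues i) *
    star (hA.eigenvectorUnitary : Matrix ι ι ℂ) := by
    have := mfun_mul hA (fun x => (x:ℂ)) (fun x => (x:ℂ))
    rw [mfun_id] at this
    exact this
  rw [eigSum_herm _ hA, h, eigSum_conj _ _ _ _ (Unitary.coe_star_mul_self _)]
  unfold eigSum
  rw [charpoly_diagonal, Polynomial.roots_prod]
  · simp [-map_mul]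
  · simp [Finset.prod_ne_zero_iff, Polynomial.X_sub_C_ne_zero, -map_mul]

lemma eigSum_mul_comm' (F : ℂ → ℂ) (A : Matrix ι κ ℂ) (B : Matrix κ ι ℂ) :
    eigSum F (A * B) + Fintype.card κ * F 0 = eigSum F (B * A) + Fintype.card ι * F 0 := by
  have h := Matrix.charpoly_mul_comm' A B
  have h2 := congrArg (fun p => (p.roots.map F).sum) h
  unfold eigSum
  beta_reduce at h2
  rw [Polynomial.roots_mul, Polynomial.roots_mul] at h2
  · simp [Multiset.nsmul_singleton] at h2
    rw [add_comm, h2, add_comm]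
  · exact ((Polynomial.monic_X_pow _).mul (Matrix.charpoly_monic _)).ne_zero
  · exact ((Polynomial.monic_X_pow _).mul (Matrix.charpoly_monic _)).ne_zero

/-- Hermitian dilation. -/
def dil (A : Matrix ι κ ℂ) : Matrix (ι ⊕ κ) (ι ⊕ κ) ℂ := fromBlocks 0 A Aᴴ 0

lemma dil_herm (A : Matrix ι κ ℂ) : (dil A).IsHermitian := by
  unfold dil Matrix.IsHermitian
  rw [fromBlocks_conjTranspose]; simp

lemma svSum_dil (φ : ℝ → ℂ) (A : Matrix ι κ ℂ) :
    eSum (fun x => φ |x|) (dil A) = 2 * svSum φ A +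
      (((Fintype.card ι + Fintype.card κ : ℕ) : ℂ) -
        2 * ((min (Fintype.card ι) (Fintype.card κ) : ℕ) : ℂ)) * φ 0 := by
  have h1 : eSum (fun x => φ |x|) (dil A) = eigSum (fun z => φ √z.re) (dil A * dil A) := by
    rw [eigSum_sq _ (dil_herm A), eSum_herm _ (dil_herm A), eigSum_herm _ (dil_herm A)]
    refine Finset.sum_congr rfl fun i _ => ?_
    rw [← Complex.ofReal_mul, Complex.ofReal_re, Real.sqrt_mul_self_eq_abs]
  have h2 : dil A * dil A = fromBlocks (A * Aᴴ) 0 0 (Aᴴ * A) := by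
    unfold dil; rw [fromBlocks_multiply]; simp
  have h3 := eigSum_mul_comm' (fun z => φ √z.re) A Aᴴ
  have h4 : svSum φ A = eigSum (fun z => φ √z.re) (A * Aᴴ) -
    ((Fintype.card ι - min (Fintype.card ι) (Fintype.card κ) : ℕ) : ℂ) * φ 0 := by
    unfold svSum
    rw [eigSum_herm _ (Matrix.isHermitian_mul_conjTranspose_self A)]
    simp
  rw [h1, h2, eigSum_fromBlocks, h4, Nat.cast_sub (min_le_left _ _)]
  simp at h3
  have h5 : eigSum (fun z => φ √z.re) (Aᴴ * A) = eigSum (fun z => φ √z.re) (A * Aᴴ) +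
    Fintype.card κ * φ 0 - Fintype.card ι * φ 0 := by rw [h3]; ring
  rw [h5]
  push_cast
  ring

end blocks

end

section

lemma cay_re (x : ℝ) : (cay x).re = (x ^ 2 - 1) / (x ^ 2 + 1) := by
  unfold cay
  rw [Complex.div_re]
  have : x ^ 2 + 1 ≠ 0 := by positivity
  have h2 : x * x + 1 ≠ 0 := by nlinarith [sq_nonneg x]
  simp [Complex.normSq_apply]
  field_simp
  ring

lemma cay_im (x : ℝ) : (cay x).im = (-2 * x) / (x ^ 2 + 1) := by
  unfold cay
  rw [Complex.div_im]
  have : x ^ 2 + 1 ≠ 0 := by positivity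
  have h2 : x * x + 1 ≠ 0 := by nlinarith [sq_nonneg x]
  simp [Complex.normSq_apply]
  field_simp
  ring

/-- Transport of a compactly supported function to the circle by the Cayley transform. -/
def circFun (φ : ℝ → ℂ) (w : Circle) : ℂ :=
  if (w : ℂ).re = 1 then 0 else φ ((w : ℂ).im / ((w : ℂ).re - 1))

lemma circFun_cay (φ : ℝ → ℂ) (w : Circle) (x : ℝ) (hw : (w : ℂ) = cay x) : circFun φ w = φ x := by
  unfold circFun
  have h0 : x ^ 2 + 1 ≠ 0 := by positivity
  have h1 : (cay x).re - 1 = -2 / (x ^ 2 + 1) := by rw [cay_re]; field_simp; ring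
  have h2 : (cay x).re ≠ 1 := by
    intro h
    rw [h] at h1
    have : (-2 / (x ^ 2 + 1) : ℝ) ≠ 0 := by positivity
    exact this (by rw [← h1]; ring)
  rw [hw, if_neg h2, h1, cay_im]
  congr 1
  field_simp

lemma circFun_continuous (φ : ℝ → ℂ) (hφ : Continuous φ) (hc : HasCompactSupport φ) :
    Continuous (circFun φ) := by
  rw [continuous_iff_continuousAt]
  intro w
  have hre : Continuous (fun w : Circle => (w : ℂ).re) := Complex.continuous_re.comp continuous_induced_dom
  have him : Continuous (fun w : Circle => (w : ℂ).im) := Complex.continuous_im.comp continuous_induced_dom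
  by_cases h : (w : ℂ).re = 1
  · obtain ⟨R, hR⟩ := hc.isCompact.isBounded.exists_norm_le
    have hR' : ∀ x, φ x ≠ 0 → x ^ 2 ≤ R ^ 2 := by
      intro x hx
      have := hR x (subset_tsupport _ hx)
      rw [Real.norm_eq_abs] at this
      exact sq_le_sq' (by linarith [neg_abs_le x]) ((le_abs_self x).trans this)
    have hev : ∀ᶠ v : Circle in 𝓝 w, circFun φ v = 0 := by
      have h1 : ∀ᶠ v : Circle in 𝓝 w, (R ^ 2 - 1) / (R ^ 2 + 1) < (v : ℂ).re := by
        apply hre.continuousAt.eventually_const_lt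
        change (R ^ 2 - 1) / (R ^ 2 + 1) < (w : ℂ).re
        rw [h, div_lt_one (by positivity)]
        linarith
      filter_upwards [h1] with v hv
      unfold circFun
      split_ifs with h3
      · rfl
      · by_contra h4
        have h5 := hR' _ h4
        have hn : (v : ℂ).re ^ 2 + (v : ℂ).im ^ 2 = 1 := by
          have := Circle.normSq_coe v
          rw [Complex.normSq_apply] at this
          linarith
        have h6 : (v : ℂ).re < 1 := by
          refine lt_of_le_of_ne ?_ h3
          nlinarith [sq_nonneg (v : ℂ).im]
        rw [div_lt_iff₀ (by positivity)] at hv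
        have h7 : 0 < ((v : ℂ).re - 1) ^ 2 := by nlinarith
        rw [div_pow, div_le_iff₀ h7] at h5
        have h8 : (v : ℂ).im ^ 2 = (1 - (v : ℂ).re) * (1 + (v : ℂ).re) := by nlinarith
        rw [h8] at h5
        have h9 : (1 + (v : ℂ).re) ≤ R ^ 2 * (1 - (v : ℂ).re) := by
          have : 0 < 1 - (v : ℂ).re := by linarith
          nlinarith
        nlinarith
    have h0 : circFun φ w = 0 := by unfold circFun; rw [if_pos h]
    rw [ContinuousAt, h0]
    exact tendsto_const_nhds.congr' (hev.mono fun v hv => hv.symm)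
  · have hev : ∀ᶠ v : Circle in 𝓝 w, φ ((v : ℂ).im / ((v : ℂ).re - 1)) = circFun φ v := by
      filter_upwards [hre.continuousAt.eventually_ne h] with v hv
      unfold circFun; rw [if_neg hv]
    refine ContinuousAt.congr ?_ hev
    refine hφ.continuousAt.comp (f := fun v : Circle => (v : ℂ).im / ((v : ℂ).re - 1)) ?_
    exact him.continuousAt.div (hre.continuousAt.sub continuousAt_const) (sub_ne_zero.2 h)

instance fact_two_pi : Fact (0 < 2 * π) := ⟨by positivity⟩

lemma cay_approx (φ : ℝ → ℂ) (hφ : Continuous φ) (hc : HasCompactSupport φ) {ε : ℝ} (hε : 0 < ε) :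
    ∃ χ ∈ Submodule.span ℂ (Set.range fun (k : ℤ) (x : ℝ) => cay x ^ k),
      ∀ x, ‖φ x - χ x‖ ≤ ε := by
  let h : C(AddCircle (2 * π), ℂ) :=
    ⟨fun α => circFun φ (AddCircle.toCircle α),
      (circFun_continuous φ hφ hc).comp AddCircle.continuous_toCircle⟩
  have h1 : h ∈ (Submodule.span ℂ (Set.range <| @fourier (2 * π))).topologicalClosure := by
    rw [span_fourier_closure_eq_top]; trivial
  have h2 : h ∈ closure ((Submodule.span ℂ (Set.range <| @fourier (2 * π)) :
    Submodule ℂ C(AddCircle (2 * π), ℂ)) : Set C(AddCircle (2 * π), ℂ)) := h1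
  obtain ⟨p, hp, hd⟩ := Metric.mem_closure_iff.1 h2 ε hε
  have hsurj : ∀ x : ℝ, ∃ α : AddCircle (2 * π), (AddCircle.toCircle α : ℂ) = cay x := by
    intro x
    obtain ⟨α, hα⟩ := (AddCircle.homeomorphCircle (T := 2 * π) (by positivity)).surjective
      ⟨cay x, by simp [Submonoid.unitSphere, norm_cay]⟩
    refine ⟨α, ?_⟩
    rw [AddCircle.homeomorphCircle_apply] at hα
    rw [hα]
  choose α hα using hsurj
  refine ⟨fun x => p (α x), ?_, ?_⟩
  · let Φ : C(AddCircle (2 * π), ℂ) →ₗ[ℂ] (ℝ → ℂ) :=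
      { toFun := fun q x => q (α x), map_add' := fun _ _ => rfl, map_smul' := fun _ _ => rfl }
    have h3 : Φ p ∈ Submodule.map Φ (Submodule.span ℂ (Set.range <| @fourier (2 * π))) :=
      Submodule.mem_map_of_mem hp
    rw [Submodule.map_span] at h3
    refine Submodule.span_mono ?_ h3
    rintro _ ⟨_, ⟨k, rfl⟩, rfl⟩
    refine ⟨k, ?_⟩
    funext x
    change cay x ^ k = fourier k (α x)
    rw [fourier_apply, AddCircle.toCircle_zsmul, Circle.coe_zpow, hα]
  · intro x
    have h4 := (ContinuousMap.dist_apply_le_dist (f := h) (g := p) (α x)).trans hd.le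
    rw [dist_eq_norm] at h4
    have h5 : h (α x) = φ x := circFun_cay φ _ x (hα x)
    rwa [h5] at h4


end

section

/-- Exponential monomials. -/
def ex (r : ℤ) (θ : ℝ) : ℂ := Complex.exp (Complex.I * r * θ)

/-- Trigonometric polynomials. -/
def TP : Submodule ℂ (ℝ → ℂ) := Submodule.span ℂ (Set.range ex)

lemma ex_continuous (r : ℤ) : Continuous (ex r) := by unfold ex; fun_prop

lemma norm_ex (r : ℤ) (θ : ℝ) : ‖ex r θ‖ = 1 := by
  unfold ex
  rw [Complex.norm_exp]; simp

lemma tp_continuous {h : ℝ → ℂ} (hh : h ∈ TP) : Continuous h := by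
  induction hh using Submodule.span_induction with
  | mem x hx => obtain ⟨r, rfl⟩ := hx; exact ex_continuous r
  | zero => exact continuous_const
  | add x y _ _ hx hy => exact hx.add hy
  | smul a x _ hx => exact hx.const_smul a

lemma tp_dense (g : ℝ → ℂ) (hg : IntervalIntegrable g volume (-π) π) {ε : ℝ} (hε : 0 < ε) :
    ∃ h ∈ TP, ∫ θ in (-π)..π, ‖g θ - h θ‖ ≤ ε := by
  have hpi : -π + 2 * π = π := by ring
  have h1 : MemLp g 1 (volume.restrict (Set.Ioc (-π) (-π + 2 * π))) := by
    rw [hpi, memLp_one_iff_integrable]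
    exact (intervalIntegrable_iff_integrableOn_Ioc_of_le (by linarith [Real.pi_pos])).1 hg
  have h2 := (h1.memLp_liftIoc).haarAddCircle
  set G := AddCircle.liftIoc (2 * π) (-π) g with hG
  have h3 : h2.toLp G ∈ (Submodule.span ℂ (Set.range (@fourierLp (2 * π) _ 1 _))).topologicalClosure := by
    rw [span_fourierLp_closure_eq_top (by simp)]; trivial
  have h4 : h2.toLp G ∈ closure (Submodule.span ℂ (Set.range (@fourierLp (2 * π) _ 1 _)) : Set _) := h3
  obtain ⟨q, hq, hd⟩ := Metric.mem_closure_iff.1 h4 (ε / (2 * π)) (by positivity)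
  have h5 : Set.range (@fourierLp (2 * π) _ 1 _) =
      (ContinuousMap.toLp (E := ℂ) 1 AddCircle.haarAddCircle ℂ).toLinearMap '' (Set.range (@fourier (2 * π))) := by
    rw [← Set.range_comp]; rfl
  rw [h5, ← Submodule.map_span] at hq
  obtain ⟨p, hp, rfl⟩ := hq
  refine ⟨fun θ => p θ, ?_, ?_⟩
  · let Φ : C(AddCircle (2 * π), ℂ) →ₗ[ℂ] (ℝ → ℂ) :=
      { toFun := fun q x => q x, map_add' := fun _ _ => rfl, map_smul' := fun _ _ => rfl }
    have h6 : Φ p ∈ Submodule.map Φ (Submodule.span ℂ (Set.range <| @fourier (2 * π))) :=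
      Submodule.mem_map_of_mem hp
    rw [Submodule.map_span] at h6
    refine Submodule.span_mono ?_ h6
    rintro _ ⟨_, ⟨k, rfl⟩, rfl⟩
    refine ⟨k, ?_⟩
    funext x
    change ex k x = fourier k (x : AddCircle (2 * π))
    rw [fourier_coe_apply]
    unfold ex
    congr 1
    push_cast
    have : (π : ℂ) ≠ 0 := by exact_mod_cast Real.pi_ne_zero
    field_simp
  · rw [dist_eq_norm, L1.norm_eq_integral_norm, AddCircle.integral_haarAddCircle] at hd
    have h7 : ∫ t : AddCircle (2 * π), ‖(h2.toLp G - (ContinuousMap.toLp (E := ℂ) 1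
        AddCircle.haarAddCircle ℂ).toLinearMap p) t‖ = ∫ t : AddCircle (2 * π), ‖G t - p t‖ := by
      apply integral_congr_ae
      have e1 := Lp.coeFn_sub (h2.toLp G) (ContinuousMap.toLp (E := ℂ) 1 AddCircle.haarAddCircle ℂ p)
      have e2 := h2.coeFn_toLp
      have e3 := ContinuousMap.coeFn_toLp (p := 1) (𝕜 := ℂ) (@AddCircle.haarAddCircle (2 * π) _) p
      rw [AddCircle.volume_eq_smul_haarAddCircle]
      apply Measure.ae_smul_measure
      filter_upwards [e1, e2, e3] with t h1 h2 h3
      simp only [ContinuousLinearMap.coe_coe] at *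
      rw [h1, Pi.sub_apply, h2, h3]
    rw [h7, ← AddCircle.intervalIntegral_preimage (2 * π) (-π)] at hd
    rw [hpi] at hd
    have h8 : ∫ a in (-π)..π, ‖G (a : AddCircle (2 * π)) - p (a : AddCircle (2 * π))‖ =
        ∫ a in (-π)..π, ‖g a - p (a : AddCircle (2 * π))‖ := by
      apply intervalIntegral.integral_congr_ae
      refine .of_forall fun x hx ↦ ?_
      rw [Set.uIoc_of_le (by linarith [Real.pi_pos])] at hx
      rw [hG, AddCircle.liftIoc_coe_apply (by rwa [hpi])]
    rw [h8, smul_eq_mul, inv_mul_lt_iff₀ (by positivity)] at hd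
    rw [mul_div_cancel₀ _ (by positivity)] at hd
    exact hd.le

/-- Scalar Fourier coefficients. -/
def fc (g : ℝ → ℂ) (k : ℤ) : ℂ :=
  ((2 * π : ℝ) : ℂ)⁻¹ * ∫ θ in (-π : ℝ)..π, g θ * Complex.exp (-(Complex.I * (k : ℂ) * (θ : ℂ)))

lemma fc_integrable {g : ℝ → ℂ} (hg : IntervalIntegrable g volume (-π) π) (k : ℤ) :
    IntervalIntegrable (fun θ : ℝ => g θ * Complex.exp (-(Complex.I * (k : ℂ) * (θ : ℂ)))) volume (-π) π :=
  hg.mul_continuousOn (by fun_prop)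

lemma fc_add {g h : ℝ → ℂ} (hg : IntervalIntegrable g volume (-π) π)
    (hh : IntervalIntegrable h volume (-π) π) (k : ℤ) : fc (g + h) k = fc g k + fc h k := by
  unfold fc
  rw [← mul_add, ← intervalIntegral.integral_add (fc_integrable hg k) (fc_integrable hh k)]
  simp only [Pi.add_apply, add_mul]

lemma fc_sub {g h : ℝ → ℂ} (hg : IntervalIntegrable g volume (-π) π)
    (hh : IntervalIntegrable h volume (-π) π) (k : ℤ) : fc (fun θ => g θ - h θ) k = fc g k - fc h k := by
  unfold fc
  rw [← mul_sub, ← intervalIntegral.integral_sub (fc_integrable hg k) (fc_integrable hh k)]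
  simp only [sub_mul]

lemma fc_smul (c : ℂ) (g : ℝ → ℂ) (k : ℤ) : fc (c • g) k = c * fc g k := by
  unfold fc
  have h0 : ∀ θ : ℝ, (c • g) θ * Complex.exp (-(Complex.I * (k : ℂ) * (θ : ℂ))) =
      c * (g θ * Complex.exp (-(Complex.I * (k : ℂ) * (θ : ℂ)))) := by
    intro θ; simp only [Pi.smul_apply, smul_eq_mul, mul_assoc]
  simp_rw [h0]
  rw [intervalIntegral.integral_const_mul]
  ring

lemma fc_conj (g : ℝ → ℂ) (k : ℤ) :
    fc (fun θ => (starRingEnd ℂ) (g θ)) k = (starRingEnd ℂ) (fc g (-k)) := by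
  unfold fc
  rw [map_mul]
  congr 1
  · rw [map_inv₀, Complex.conj_ofReal]
  · rw [← intervalIntegral.intervalIntegral_conj]
    apply intervalIntegral.integral_congr
    intro θ _
    simp only [map_mul, ← Complex.exp_conj]
    congr 2
    simp

lemma fc_ex (r k : ℤ) : fc (ex r) k = if k = r then 1 else 0 := by
  unfold fc ex
  have h0 : ∀ θ : ℝ, Complex.exp (Complex.I * r * θ) * Complex.exp (-(Complex.I * (k : ℂ) * (θ : ℂ))) =
    Complex.exp ((Complex.I * ((r - k : ℤ) : ℂ)) * θ) := by
    intro θ; rw [← Complex.exp_add]; congr 1; push_cast; ring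
  simp_rw [h0]
  split_ifs with h
  · subst h
    simp
    field_simp [Real.pi_ne_zero]
    norm_num
  · have hne : Complex.I * ((r - k : ℤ) : ℂ) ≠ 0 := by
      apply mul_ne_zero Complex.I_ne_zero
      exact_mod_cast sub_ne_zero.2 (Ne.symm h)
    rw [integral_exp_mul_complex hne]
    have : Complex.exp (Complex.I * ((r - k : ℤ) : ℂ) * (π : ℝ)) =
       Complex.exp (Complex.I * ((r - k : ℤ) : ℂ) * ((-π : ℝ))) := by
      rw [Complex.exp_eq_exp_iff_exists_int]
      exact ⟨r - k, by push_cast; ring⟩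
    rw [this]; simp

lemma tp_integrable {h : ℝ → ℂ} (hh : h ∈ TP) : IntervalIntegrable h volume (-π) π :=
  (tp_continuous hh).intervalIntegrable _ _

lemma tp_conj {h : ℝ → ℂ} (hh : h ∈ TP) : (fun θ => (starRingEnd ℂ) (h θ)) ∈ TP := by
  induction hh using Submodule.span_induction with
  | mem x hx =>
    obtain ⟨r, rfl⟩ := hx
    refine Submodule.subset_span ⟨-r, ?_⟩
    funext θ
    unfold ex
    rw [← Complex.exp_conj]; congr 1; simp
  | zero =>
    have : (fun θ => (starRingEnd ℂ) ((0 : ℝ → ℂ) θ)) = 0 := by funext; simp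
    rw [this]; exact TP.zero_mem
  | add x y _ _ hx hy =>
    have := TP.add_mem hx hy
    convert this using 1
    funext θ; simp
  | smul a x _ hx =>
    have := TP.smul_mem ((starRingEnd ℂ) a) hx
    convert this using 1
    funext θ; simp


end

section

/-- Block Toeplitz matrix with scalar symbols. -/
def TM {K : Type*} (g : K → K → ℝ → ℂ) (ns : K → ℕ) :
    Matrix ((k : K) × Fin (ns k)) ((k : K) × Fin (ns k)) ℂ :=
  Matrix.of fun P Q => fc (g P.1 Q.1) (((P.2 : ℕ) : ℤ) - ((Q.2 : ℕ) : ℤ))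

/-- Symbol with scalar symbols. -/
def Gs {K : Type*} (g : K → K → ℝ → ℂ) (mk : K → ℕ) (θ : ℝ) :
    Matrix ((k : K) × Fin (mk k)) ((k : K) × Fin (mk k)) ℂ :=
  Matrix.of fun P Q => if (P.2 : ℕ) = (Q.2 : ℕ) then g P.1 Q.1 θ else 0

lemma TM_herm {K : Type*} (g : K → K → ℝ → ℂ) (ns : K → ℕ)
    (hH : ∀ k l θ, g l k θ = (starRingEnd ℂ) (g k l θ)) : (TM g ns).IsHermitian := by
  apply Matrix.IsHermitian.ext
  intro P Q
  simp only [TM, of_apply]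
  have : g Q.1 P.1 = fun θ => (starRingEnd ℂ) (g P.1 Q.1 θ) := by funext θ; exact hH _ _ _
  rw [this, fc_conj]
  simp

lemma Gs_herm {K : Type*} (g : K → K → ℝ → ℂ) (mk : K → ℕ) (θ : ℝ)
    (hH : ∀ k l, g l k θ = (starRingEnd ℂ) (g k l θ)) : (Gs g mk θ).IsHermitian := by
  apply Matrix.IsHermitian.ext
  intro P Q
  simp only [Gs, of_apply]
  by_cases h : (P.2 : ℕ) = (Q.2 : ℕ)
  · rw [if_pos h, if_pos h.symm, hH Q.1 P.1]; simp
  · rw [if_neg h, if_neg (Ne.symm h)]; simp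

lemma ii_sum {K E : Type*} [Fintype K] [NormedAddCommGroup E] {f : K → ℝ → E} {a b : ℝ}
    (h : ∀ k, IntervalIntegrable (f k) volume a b) :
    IntervalIntegrable (fun θ => ∑ k, f k θ) volume a b := by
  have h1 : ∀ s : Finset K, IntervalIntegrable (fun θ => ∑ k ∈ s, f k θ) volume a b := by
    classical
    intro s
    induction s using Finset.induction_on with
    | empty => simp
    | insert k s hk ih =>
      simp_rw [Finset.sum_insert hk]
      exact (h k).add ih
  exact h1 _

lemma trace_bound_aux {K I : Type*} [Fintype K] [DecidableEq K] [Fintype I] [DecidableEq I]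
    (d : K → K → ℝ → ℂ)
    (hd : ∀ k l, IntervalIntegrable (d k l) volume (-π) π) (bl : I → K) (ps : I → ℤ)
    (X : Matrix I I ℂ) (hX : IsContr X) :
    ‖(X * Matrix.of fun P Q : I => fc (d (bl P) (bl Q)) (ps P - ps Q)).trace‖ ≤ Fintype.card I *
      ∑ k, ∑ l, ∫ θ in (-π)..π, ‖d k l θ‖ := by
  have hpi : -π ≤ π := by linarith [Real.pi_pos]
  -- the integrand
  let e : ℤ → ℝ → ℂ := fun k θ => Complex.exp (-(Complex.I * (k : ℂ) * (θ : ℂ)))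
  have he : ∀ k θ, ‖e k θ‖ = 1 := by
    intro k θ; simp only [e]; rw [Complex.norm_exp]; simp
  have h1 : (X * Matrix.of fun P Q : I => fc (d (bl P) (bl Q)) (ps P - ps Q)).trace = ((2 * π : ℝ) : ℂ)⁻¹ * ∫ θ in (-π)..π,
      ∑ P : I, ∑ Q : I, X P Q * (d (bl Q) (bl P) θ * e (ps Q - ps P) θ) := by
    rw [intervalIntegral.integral_finsetSum]
    · rw [Finset.mul_sum]
      simp only [trace, diag, mul_apply]
      refine Finset.sum_congr rfl fun P _ => ?_
      rw [intervalIntegral.integral_finsetSum]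
      · rw [Finset.mul_sum]
        refine Finset.sum_congr rfl fun Q _ => ?_
        rw [intervalIntegral.integral_const_mul]
        simp only [of_apply, fc, e]
        push_cast
        ring
      · intro Q _
        exact (fc_integrable (hd _ _) _).const_mul _
    · intro P _
      exact ii_sum fun Q => (fc_integrable (hd _ _) _).const_mul _
  have h2 : ∀ θ, ‖∑ P : I, ∑ Q : I, X P Q * (d (bl Q) (bl P) θ * e (ps Q - ps P) θ)‖ ≤
      ∑ k, ∑ l, ‖d k l θ‖ * Fintype.card I := by
    intro θ
    have h3 : ∑ P : I, ∑ Q : I, X P Q * (d (bl Q) (bl P) θ * e (ps Q - ps P) θ) =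
        ∑ k, ∑ l, d k l θ * ∑ P : I, ∑ Q : I, (if (bl P) = l then e (-ps P) θ else 0) * X P Q *
          (if (bl Q) = k then e (ps Q) θ else 0) := by
      simp_rw [Finset.mul_sum]
      simp_rw [Finset.sum_comm (s := (Finset.univ : Finset K)) (t := (Finset.univ : Finset I))]
      refine Finset.sum_congr rfl fun P _ => Finset.sum_congr rfl fun Q _ => ?_
      rw [Finset.sum_eq_single (bl Q), Finset.sum_eq_single (bl P)]
      · simp only [if_true]
        have : e (ps Q - ps P) θ = e (-ps P) θ * e (ps Q) θ := by
          simp only [e]; rw [← Complex.exp_add]; congr 1; push_cast; ring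
        rw [this]; ring
      · intro l _ hl; rw [if_neg (Ne.symm hl)]; simp
      · simp
      · intro k _ hk
        refine Finset.sum_eq_zero fun l _ => ?_
        rw [if_neg (Ne.symm hk)]; simp
      · simp
    rw [h3]
    refine (norm_sum_le _ _).trans (Finset.sum_le_sum fun k _ => (norm_sum_le _ _).trans
      (Finset.sum_le_sum fun l _ => ?_))
    rw [norm_mul]
    refine mul_le_mul_of_nonneg_left ?_ (norm_nonneg _)
    apply hX.bilin_card
    · intro P; split_ifs
      · exact (he _ _).le
      · simp
    · intro P; split_ifs
      · exact (he _ _).le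
      · simp
  have hhi : ∀ k l, IntervalIntegrable (fun θ => ‖d k l θ‖ * (Fintype.card I : ℝ)) volume (-π) π :=
    fun k l => (hd k l).norm.mul_const _
  have hhi1 : ∀ k, IntervalIntegrable (fun θ => ∑ l, ‖d k l θ‖ * (Fintype.card I : ℝ)) volume (-π) π := by
    exact fun k => ii_sum fun l => hhi k l
  have hhi2 : IntervalIntegrable (fun θ => ∑ k, ∑ l, ‖d k l θ‖ * (Fintype.card I : ℝ)) volume (-π) π := by
    exact ii_sum fun k => hhi1 k
  have h4 := intervalIntegral.norm_integral_le_of_norm_le hpi (.of_forall fun θ _ => h2 θ) hhi2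
  rw [h1, norm_mul]
  rw [intervalIntegral.integral_finsetSum (fun k _ => hhi1 k)] at h4
  simp_rw [intervalIntegral.integral_finsetSum (fun l _ => hhi _ l),
    intervalIntegral.integral_mul_const, ← Finset.sum_mul] at h4
  have h5 : ‖((2 * π : ℝ) : ℂ)⁻¹‖ ≤ 1 := by
    rw [norm_inv, Complex.norm_real, Real.norm_of_nonneg (by positivity)]
    apply inv_le_one_of_one_le₀
    linarith [Real.pi_gt_three]
  calc _ ≤ 1 * _ := mul_le_mul h5 h4 (norm_nonneg _) zero_le_one
    _ = _ := by ring

lemma TM_trace_bound {K : Type*} [Fintype K] [DecidableEq K] (d : K → K → ℝ → ℂ)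
    (hd : ∀ k l, IntervalIntegrable (d k l) volume (-π) π) (ns : K → ℕ)
    (X : Matrix ((k : K) × Fin (ns k)) ((k : K) × Fin (ns k)) ℂ) (hX : IsContr X) :
    ‖(X * TM d ns).trace‖ ≤ Fintype.card ((k : K) × Fin (ns k)) *
      ∑ k, ∑ l, ∫ θ in (-π)..π, ‖d k l θ‖ := by
  have h := trace_bound_aux (I := (k : K) × Fin (ns k)) d hd (fun P => P.1) (fun P => ((P.2 : ℕ) : ℤ)) X hX
  have h2 : TM d ns = Matrix.of fun P Q : (k : K) × Fin (ns k) => fc (d P.1 Q.1) (((P.2 : ℕ) : ℤ) - ((Q.2 : ℕ) : ℤ)) := rfl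
  rw [h2]
  exact h

lemma TM_sub {K : Type*} (g h : K → K → ℝ → ℂ)
    (hg : ∀ k l, IntervalIntegrable (g k l) volume (-π) π)
    (hh : ∀ k l, IntervalIntegrable (h k l) volume (-π) π) (ns : K → ℕ) :
    TM g ns - TM h ns = TM (fun k l θ => g k l θ - h k l θ) ns := by
  ext P Q
  simp only [TM, of_apply, Matrix.sub_apply]
  rw [fc_sub (hg _ _) (hh _ _)]

lemma TM_pert {K : Type*} [Fintype K] [DecidableEq K] (g h : K → K → ℝ → ℂ)
    (hg : ∀ k l, IntervalIntegrable (g k l) volume (-π) π)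
    (hh : ∀ k l, IntervalIntegrable (h k l) volume (-π) π)
    (hHg : ∀ k l θ, g l k θ = (starRingEnd ℂ) (g k l θ))
    (hHh : ∀ k l θ, h l k θ = (starRingEnd ℂ) (h k l θ)) (ns : K → ℕ) (k : ℕ) :
    ‖eSum (fun x => cay x ^ k) (TM g ns) - eSum (fun x => cay x ^ k) (TM h ns)‖ ≤
      2 * k * (Fintype.card ((k : K) × Fin (ns k)) *
      ∑ k, ∑ l, ∫ θ in (-π)..π, ‖g k l θ - h k l θ‖) := by
  rw [norm_sub_rev]
  apply eSum_cay_pert (TM_herm h ns hHh) (TM_herm g ns hHg)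
  intro X hX
  rw [TM_sub g h hg hh]
  exact TM_trace_bound _ (fun k l => (hg k l).sub (hh k l)) ns X hX

/-- Symbol perturbation. -/
lemma Gs_pert {K : Type*} [Fintype K] [DecidableEq K] (g h : K → K → ℝ → ℂ)
    (mk : K → ℕ) (k : ℕ) (θ : ℝ)
    (hHg : ∀ k l, g l k θ = (starRingEnd ℂ) (g k l θ))
    (hHh : ∀ k l, h l k θ = (starRingEnd ℂ) (h k l θ)) :
    ‖eSum (fun x => cay x ^ k) (Gs g mk θ) - eSum (fun x => cay x ^ k) (Gs h mk θ)‖ ≤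
      2 * k * ((∑ k, (mk k : ℝ)) ^ 2 * ∑ k, ∑ l, ‖g k l θ - h k l θ‖) := by
  refine (eSum_cay_l1 (Gs_herm g mk θ hHg) (Gs_herm h mk θ hHh) k).trans ?_
  refine mul_le_mul_of_nonneg_left ?_ (by positivity)
  have h1 : ∀ P Q : (k : K) × Fin (mk k), ‖Gs g mk θ P Q - Gs h mk θ P Q‖ ≤
      ∑ k, ∑ l, ‖g k l θ - h k l θ‖ := by
    intro P Q
    simp only [Gs, of_apply]
    have h2 : ‖g P.1 Q.1 θ - h P.1 Q.1 θ‖ ≤ ∑ k, ∑ l, ‖g k l θ - h k l θ‖ := by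
      refine le_trans ?_ (Finset.single_le_sum (f := fun k => ∑ l, ‖g k l θ - h k l θ‖) (fun k _ => by positivity) (Finset.mem_univ P.1))
      exact Finset.single_le_sum (f := fun l => ‖g P.1 l θ - h P.1 l θ‖) (fun k _ => by positivity) (Finset.mem_univ Q.1)
    split_ifs
    · exact h2
    · simp; positivity
  refine (Finset.sum_le_sum fun P _ => Finset.sum_le_sum fun Q _ => h1 P Q).trans ?_
  simp only [Finset.sum_const, Finset.card_univ, nsmul_eq_mul, Fintype.card_sigma, Fintype.card_fin]
  push_cast
  apply le_of_eq; ring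


end

section

/-- Grid points. -/
def gp (N j : ℕ) : ℝ := 2 * π * j / N

/-- Discrete Fourier coefficients. -/
def cc (h : ℝ → ℂ) (N : ℕ) (k : ℤ) : ℂ :=
  (N : ℂ)⁻¹ * ∑ j : Fin N, h (gp N j) * ex (-k) (gp N j)

lemma cc_add (g h : ℝ → ℂ) (N : ℕ) (k : ℤ) : cc (g + h) N k = cc g N k + cc h N k := by
  unfold cc
  rw [← mul_add, ← Finset.sum_add_distrib]
  simp only [Pi.add_apply, add_mul]

lemma cc_smul (c : ℂ) (h : ℝ → ℂ) (N : ℕ) (k : ℤ) : cc (c • h) N k = c * cc h N k := by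
  unfold cc
  simp only [Pi.smul_apply, smul_eq_mul, mul_assoc, ← Finset.mul_sum]
  ring

lemma cc_conj (g : ℝ → ℂ) (N : ℕ) (k : ℤ) :
    cc (fun θ => (starRingEnd ℂ) (g θ)) N k = (starRingEnd ℂ) (cc g N (-k)) := by
  unfold cc
  rw [map_mul, map_sum]
  congr 1
  · simp
  · refine Finset.sum_congr rfl fun j _ => ?_
    rw [map_mul]
    congr 1
    unfold ex
    rw [← Complex.exp_conj]; congr 1; simp

lemma ex_mul (a b : ℤ) (θ : ℝ) : ex a θ * ex b θ = ex (a + b) θ := by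
  unfold ex
  rw [← Complex.exp_add]; congr 1; push_cast; ring

lemma ex_zero (θ : ℝ) : ex 0 θ = 1 := by simp [ex]

lemma cc_ex (r : ℤ) {N : ℕ} (hN : 0 < N) (k : ℤ) :
    cc (ex r) N k = if (N : ℤ) ∣ k - r then 1 else 0 := by
  unfold cc
  have hN' : (N : ℂ) ≠ 0 := by exact_mod_cast hN.ne'
  have hpi : (π : ℂ) ≠ 0 := by exact_mod_cast Real.pi_ne_zero
  set z : ℂ := Complex.exp (2 * π * Complex.I * ((r - k : ℤ) : ℂ) / N) with hz
  have h1 : ∀ j : ℕ, ex r (gp N j) * ex (-k) (gp N j) = z ^ j := by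
    intro j
    rw [ex_mul, hz, ← Complex.exp_nat_mul]
    unfold ex gp
    congr 1
    push_cast
    ring
  simp_rw [h1]
  rw [Fin.sum_univ_eq_sum_range (fun j => z ^ j)]
  split_ifs with h
  · have : z = 1 := by
      obtain ⟨c, hc⟩ := h
      rw [hz, Complex.exp_eq_one_iff]
      refine ⟨-c, ?_⟩
      have : r - k = - (N * c) := by omega
      rw [this]; push_cast; field_simp
    rw [this]; simp [hN']
  · have hz1 : z ≠ 1 := by
      intro h2
      apply h
      rw [hz, Complex.exp_eq_one_iff] at h2
      obtain ⟨c, hc⟩ := h2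
      refine ⟨-c, ?_⟩
      have h3 : ((r - k : ℤ) : ℂ) = ((c * N : ℤ) : ℂ) := by
        push_cast at hc ⊢
        field_simp at hc
        linear_combination hc
      have h4 : r - k = c * N := by exact_mod_cast h3
      rw [mul_neg, mul_comm]; omega
    have hzN : z ^ N = 1 := by
      rw [hz, ← Complex.exp_nat_mul, Complex.exp_eq_one_iff]
      exact ⟨r - k, by field_simp⟩
    rw [geom_sum_eq hz1, hzN]; simp

lemma count_aux (r : ℤ) (N : ℕ) :
    ∑ p : Fin N, (if ((p : ℕ) : ℤ) < r ∨ N + r ≤ ((p : ℕ) : ℤ) then (1 : ℝ) else 0) ≤ 2 * |r| := by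
  rw [← Finset.sum_filter, Finset.sum_const, nsmul_eq_mul, mul_one]
  have h1 : (Finset.univ.filter fun p : Fin N => ((p : ℕ) : ℤ) < r ∨ N + r ≤ ((p : ℕ) : ℤ)).card ≤
      (Finset.Ico (0 : ℤ) r ∪ Finset.Ico (N + r) (N : ℤ)).card := by
    apply Finset.card_le_card_of_injOn (fun p : Fin N => ((p : ℕ) : ℤ))
    · intro p hp
      have := p.2
      simp only [Finset.coe_filter, Set.mem_ofPred_eq, Finset.mem_univ, true_and] at hp
      simp only [Finset.coe_union, Finset.coe_Ico, Set.mem_union, Set.mem_Ico]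
      omega
    · intro p _ q _ h
      simp only at h
      ext; omega
  have h2 := Finset.card_union_le (Finset.Ico (0 : ℤ) r) (Finset.Ico (N + r) (N : ℤ))
  rw [Int.card_Ico, Int.card_Ico] at h2
  have h3 : ((Finset.univ.filter fun p : Fin N => ((p : ℕ) : ℤ) < r ∨ N + r ≤ ((p : ℕ) : ℤ)).card : ℤ) ≤ 2 * |r| := by
    have : |r| = r ∨ |r| = -r := abs_choice r
    have : 0 ≤ |r| := abs_nonneg r
    omega
  exact_mod_cast h3

lemma tp_circ {h : ℝ → ℂ} (hh : h ∈ TP) : ∃ C : ℝ, 0 ≤ C ∧ ∀ N : ℕ, 0 < N → ∀ u v : ℕ,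
    ∑ p : Fin N, ∑ q : Fin N, ‖fc h (((u * N + p : ℕ) : ℤ) - ((v * N + q : ℕ) : ℤ)) -
      (if u = v then cc h N (((p : ℕ) : ℤ) - ((q : ℕ) : ℤ)) else 0)‖ ≤ C := by
  induction hh using Submodule.span_induction with
  | mem x hx =>
    obtain ⟨r, rfl⟩ := hx
    refine ⟨2 * |r|, by positivity, ?_⟩
    intro N hN u v
    refine le_trans ?_ (count_aux r N)
    refine Finset.sum_le_sum fun p _ => ?_
    simp_rw [fc_ex, cc_ex r hN]
    have hp := p.2
    by_cases h1 : ((p : ℕ) : ℤ) < r ∨ N + r ≤ ((p : ℕ) : ℤ)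
    · rw [if_pos h1]
      let q0 : Fin N := ⟨(((p : ℕ) : ℤ) - r).natMod N, by
        exact Int.natMod_lt hN.ne'⟩
      rw [Finset.sum_eq_single q0]
      · split_ifs <;> simp
      · intro q _ hq
        have hq2 := q.2
        have key : ¬ (N : ℤ) ∣ ((p : ℕ) : ℤ) - ((q : ℕ) : ℤ) - r := by
          intro hd
          apply hq
          ext
          simp only [q0, Int.natMod]
          have : (((p : ℕ) : ℤ) - r) % N = ((q : ℕ) : ℤ) := by
            have h3 : (((p : ℕ) : ℤ) - r) % N = ((q : ℕ) : ℤ) % N := by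
              apply Int.modEq_iff_dvd.2
              obtain ⟨c, hc⟩ := hd
              exact ⟨-c, by linear_combination -hc⟩
            rw [h3, Int.emod_eq_of_lt (by positivity) (by exact_mod_cast hq2)]
          omega
        rw [if_neg, if_neg key]
        · simp
        · intro h2
          apply key
          refine ⟨(v : ℤ) - u, ?_⟩
          push_cast at h2
          linear_combination h2
      · simp
    · rw [if_neg h1]
      push Not at h1
      refine le_of_eq (Finset.sum_eq_zero fun q _ => ?_)
      have hq := q.2
      by_cases hd : (N : ℤ) ∣ ((p : ℕ) : ℤ) - ((q : ℕ) : ℤ) - r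
      · have h0 : ((p : ℕ) : ℤ) - ((q : ℕ) : ℤ) - r = 0 := by
          apply Int.eq_zero_of_abs_lt_dvd hd
          rw [abs_lt]; omega
        by_cases huv : u = v
        · subst huv
          rw [if_pos, if_pos rfl, if_pos hd]
          · simp
          · push_cast; linarith
        · rw [if_neg, if_neg huv]
          · simp
          · intro h3
            push_cast at h3
            have : ((u : ℤ) - v) * N = 0 := by linear_combination h3 - h0
            rcases mul_eq_zero.1 this with h4 | h4
            · omega
            · omega
      · rw [if_neg, if_neg hd]
        · simp
        · intro h2
          apply hd
          refine ⟨(v : ℤ) - u, ?_⟩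
          push_cast at h2
          linear_combination h2
  | zero =>
    refine ⟨0, le_rfl, fun N _ u v => ?_⟩
    have : ∀ k, fc 0 k = 0 := fun k => by simp [fc]
    have h2 : ∀ k, cc 0 N k = 0 := fun k => by simp [cc]
    simp [this, h2]
  | add x y hx hy ihx ihy =>
    obtain ⟨C, hC, h1⟩ := ihx
    obtain ⟨D, hD, h2⟩ := ihy
    refine ⟨C + D, by positivity, fun N hN u v => ?_⟩
    refine le_trans ?_ (add_le_add (h1 N hN u v) (h2 N hN u v))
    simp_rw [← Finset.sum_add_distrib]
    refine Finset.sum_le_sum fun p _ => Finset.sum_le_sum fun q _ => ?_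
    refine le_trans (le_of_eq ?_) (norm_add_le _ _)
    rw [fc_add (tp_integrable hx) (tp_integrable hy), cc_add]
    congr 1
    split_ifs <;> ring
  | smul a x _ ihx =>
    obtain ⟨C, hC, h1⟩ := ihx
    refine ⟨‖a‖ * C, by positivity, fun N hN u v => ?_⟩
    refine le_trans (le_of_eq ?_) (mul_le_mul_of_nonneg_left (h1 N hN u v) (norm_nonneg a))
    simp_rw [Finset.mul_sum]
    refine Finset.sum_congr rfl fun p _ => Finset.sum_congr rfl fun q _ => ?_
    rw [← norm_mul, fc_smul, cc_smul]
    congr 1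
    split_ifs <;> ring

lemma tp_summable {h : ℝ → ℂ} (hh : h ∈ TP) : Summable fun k : ℤ => ‖fc h k‖ := by
  induction hh using Submodule.span_induction with
  | mem x hx =>
    obtain ⟨r, rfl⟩ := hx
    simp_rw [fc_ex]
    apply summable_of_ne_finset_zero (s := {r})
    intro b hb
    rw [if_neg (by simpa using hb)]; simp
  | zero =>
    have : ∀ k, fc 0 k = 0 := fun k => by simp [fc]
    simp [this]
  | add x y hx hy ihx ihy =>
    refine Summable.of_nonneg_of_le (fun _ => norm_nonneg _) (fun k => ?_) (ihx.add ihy)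
    rw [fc_add (tp_integrable hx) (tp_integrable hy)]
    exact norm_add_le _ _
  | smul a x _ ihx =>
    simp_rw [fc_smul, norm_mul]
    exact ihx.mul_left _

lemma tp_sum_inj {h : ℝ → ℂ} (hh : h ∈ TP) {κ : Type*} [Fintype κ] (i : κ → ℤ)
    (hi : Function.Injective i) : ∑ x, ‖fc h (i x)‖ ≤ ∑' k, ‖fc h k‖ := by
  rw [← Finset.sum_image (f := fun k => ‖fc h k‖) (g := i) (s := Finset.univ) (by intro a _ b _ h; exact hi h)]
  exact (tp_summable hh).sum_le_tsum _ (fun _ _ => norm_nonneg _)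


end

section

/-- Linear position of an index. -/
def pos {K : Type*} {mk : K → ℕ} {N : ℕ} (x : ((k : K) × Fin (mk k)) × Fin N) : ℕ :=
  (x.1.2 : ℕ) * N + (x.2 : ℕ)

/-- Validity of an index. -/
def good {K : Type*} {mk : K → ℕ} {N : ℕ} (ns : K → ℕ) (x : ((k : K) × Fin (mk k)) × Fin N) : Prop :=
  pos x < ns x.1.1

/-- Padded Toeplitz matrix. -/
def At {K : Type*} (h : K → K → ℝ → ℂ) (mk ns : K → ℕ) (N : ℕ) :
    Matrix (((k : K) × Fin (mk k)) × Fin N) (((k : K) × Fin (mk k)) × Fin N) ℂ :=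
  open Classical in
  Matrix.of fun x y => if good ns x ∧ good ns y then
    fc (h x.1.1 y.1.1) (((pos x : ℕ) : ℤ) - ((pos y : ℕ) : ℤ)) else 0

/-- Block circulant matrix. -/
def Ct {K : Type*} (h : K → K → ℝ → ℂ) (mk : K → ℕ) (N : ℕ) :
    Matrix (((k : K) × Fin (mk k)) × Fin N) (((k : K) × Fin (mk k)) × Fin N) ℂ :=
  Matrix.of fun x y => cc (fun θ => Gs h mk θ x.1 y.1) N (((x.2 : ℕ) : ℤ) - ((y.2 : ℕ) : ℤ))

/-- Indices. -/
def idxEquiv {K : Type*} (mk ns : K → ℕ) {N : ℕ} (hN : 0 < N) (hle : ∀ k, ns k ≤ mk k * N) :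
    ((k : K) × Fin (ns k)) ≃ {x : ((k : K) × Fin (mk k)) × Fin N // good ns x} where
  toFun P := ⟨(⟨P.1, ⟨(P.2 : ℕ) / N, by
      rw [Nat.div_lt_iff_lt_mul hN]; exact P.2.2.trans_le (hle _)⟩⟩, ⟨(P.2 : ℕ) % N, Nat.mod_lt _ hN⟩), by
      unfold good pos
      rw [Nat.div_add_mod']
      exact P.2.2⟩
  invFun x := ⟨x.1.1.1, ⟨pos x.1, x.2⟩⟩
  left_inv := by
    rintro ⟨k, p, hp⟩
    simp only [pos, Nat.div_add_mod']
  right_inv := by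
    rintro ⟨⟨⟨k, u, hu⟩, ⟨p, hp⟩⟩, hx⟩
    have h1 : (u * N + p) / N = u := by
      rw [mul_comm, Nat.mul_add_div hN, Nat.div_eq_of_lt hp, add_zero]
    have h2 : (u * N + p) % N = p := by
      rw [mul_comm, Nat.mul_add_mod, Nat.mod_eq_of_lt hp]
    simp only [pos, h1, h2]

lemma card_bad {K : Type*} [Fintype K] (mk ns : K → ℕ) {N : ℕ} (hN : 0 < N)
    (hle : ∀ k, ns k ≤ mk k * N)
    [Fintype {x : ((k : K) × Fin (mk k)) × Fin N // ¬ good ns x}] :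
    (Fintype.card {x : ((k : K) × Fin (mk k)) × Fin N // ¬ good ns x} : ℝ) =
      ∑ k, ((mk k : ℝ) * N - ns k) := by
  classical
  have h1 := Fintype.card_subtype_compl (fun x : ((k : K) × Fin (mk k)) × Fin N => good ns x)
  have h2 : Fintype.card {x : ((k : K) × Fin (mk k)) × Fin N // good ns x} = ∑ k, ns k := by
    rw [← Fintype.card_congr (idxEquiv mk ns hN hle)]; simp
  have h3 : Fintype.card (((k : K) × Fin (mk k)) × Fin N) = ∑ k, mk k * N := by
    simp [Finset.sum_mul]
  have h4 : (∑ k, ns k) ≤ ∑ k, mk k * N := Finset.sum_le_sum fun k _ => hle k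
  rw [h2, h3] at h1
  have h5 : Fintype.card {x : ((k : K) × Fin (mk k)) × Fin N // ¬ good ns x} = (∑ k, mk k * N) - ∑ k, ns k := by
    rw [← h1]
  rw [h5, Nat.cast_sub h4, Finset.sum_sub_distrib]
  push_cast
  rfl

lemma eigSum_At {K : Type*} [Fintype K] [DecidableEq K] (F : ℂ → ℂ) (h : K → K → ℝ → ℂ)
    (mk ns : K → ℕ) {N : ℕ} (hN : 0 < N)
    (hle : ∀ k, ns k ≤ mk k * N) :
    eigSum F (At h mk ns N) = eigSum F (TM h ns) + ((∑ k, ((mk k : ℝ) * N - ns k) : ℝ) : ℂ) * F 0 := by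
  classical
  rw [eigSum_pad F (good ns) (At h mk ns N)]
  · congr 1
    · rw [← eigSum_submatrix F (idxEquiv mk ns hN hle)]
      congr 1
      ext P Q
      have hp : ∀ P, pos (idxEquiv mk ns hN hle P).1 = P.2 := by
        intro P; exact Nat.div_add_mod' _ _
      simp only [submatrix_apply, At, TM, of_apply]
      rw [if_pos ⟨(idxEquiv mk ns hN hle P).2, (idxEquiv mk ns hN hle Q).2⟩, hp, hp]
      rfl
    · rw [← card_bad mk ns hN hle]; norm_cast
  · intro x y hxy
    simp only [At, of_apply]
    rw [if_neg hxy]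

lemma At_herm {K : Type*} (h : K → K → ℝ → ℂ) (mk ns : K → ℕ) (N : ℕ)
    (hH : ∀ k l θ, h l k θ = (starRingEnd ℂ) (h k l θ)) : (At h mk ns N).IsHermitian := by
  classical
  apply Matrix.IsHermitian.ext
  intro P Q
  simp only [At, of_apply]
  by_cases h1 : good ns P ∧ good ns Q
  · rw [if_pos h1, if_pos h1.symm]
    have : h Q.1.1 P.1.1 = fun θ => (starRingEnd ℂ) (h P.1.1 Q.1.1 θ) := by funext θ; exact hH _ _ _
    rw [this, fc_conj]
    simp
  · rw [if_neg h1, if_neg (fun h2 => h1 h2.symm)]; simp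

lemma Ct_herm {K : Type*} (h : K → K → ℝ → ℂ) (mk : K → ℕ) (N : ℕ)
    (hH : ∀ k l θ, h l k θ = (starRingEnd ℂ) (h k l θ)) : (Ct h mk N).IsHermitian := by
  apply Matrix.IsHermitian.ext
  intro P Q
  simp only [Ct, of_apply]
  have : (fun θ => Gs h mk θ Q.1 P.1) = fun θ => (starRingEnd ℂ) (Gs h mk θ P.1 Q.1) := by
    funext θ
    exact ((Gs_herm h mk θ (fun k l => hH k l θ)).apply _ _).symm
  rw [this, cc_conj]
  simp

lemma eigSum_Ct {K : Type*} [Fintype K] [DecidableEq K] (F : ℂ → ℂ) (h : K → K → ℝ → ℂ)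
    (mk : K → ℕ) {N : ℕ} (hN : 0 < N) :
    eigSum F (Ct h mk N) = ∑ j : Fin N, eigSum F (Gs h mk (gp N j)) := by
  rw [← eigSum_blockDiagonal F (fun j : Fin N => Gs h mk (gp N j))]
  let W : Matrix (((k : K) × Fin (mk k)) × Fin N) (((k : K) × Fin (mk k)) × Fin N) ℂ :=
    Matrix.of fun x y => if x.1 = y.1 then ex (-((x.2 : ℕ) : ℤ)) (gp N y.2) else 0
  let W' : Matrix (((k : K) × Fin (mk k)) × Fin N) (((k : K) × Fin (mk k)) × Fin N) ℂ :=
    Matrix.of fun x y => if x.1 = y.1 then (N : ℂ)⁻¹ * ex ((y.2 : ℕ) : ℤ) (gp N x.2) else 0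
  have h1 : W * W' = 1 := by
    ext x y
    simp only [W, W', mul_apply, of_apply, Fintype.sum_prod_type, ite_mul, mul_ite, zero_mul, mul_zero]
    rw [Finset.sum_eq_single x.1]
    · simp only [if_true]
      by_cases hxy : x.1 = y.1
      · simp only [hxy, if_true]
        have := cc_ex 0 hN ((x.2 : ℕ) - (y.2 : ℕ))
        simp only [cc, ex_zero, one_mul] at this
        have h2 : ∀ j : Fin N, ex (-((x.2 : ℕ) : ℤ)) (gp N j) * ((N : ℂ)⁻¹ * ex ((y.2 : ℕ) : ℤ) (gp N j)) =
            (N : ℂ)⁻¹ * ex (-(((x.2 : ℕ) : ℤ) - ((y.2 : ℕ) : ℤ))) (gp N j) := by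
          intro j
          rw [mul_left_comm, ex_mul]; congr 2; ring
        simp_rw [h2, ← Finset.mul_sum]
        rw [this, one_apply]
        congr 1
        rw [eq_iff_iff]
        constructor
        · intro hd
          have hx := x.2.2
          have hy := y.2.2
          have := Int.eq_zero_of_abs_lt_dvd hd (by rw [abs_lt]; omega)
          ext1
          · exact hxy
          · ext; omega
        · intro hxy; rw [hxy]; simp
      · simp only [hxy, if_false, Finset.sum_const_zero]
        rw [one_apply_ne]
        intro h3; rw [h3] at hxy; exact hxy rfl
    · intro l _ hl
      refine Finset.sum_eq_zero fun j _ => ?_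
      rw [if_neg (Ne.symm hl)]
      simp
    · simp
  have h2 : W' * W = 1 := mul_eq_one_comm.1 h1
  have h3 : ∀ x y, (W * blockDiagonal (fun j : Fin N => Gs h mk (gp N j))) x y =
      ex (-((x.2 : ℕ) : ℤ)) (gp N y.2) * Gs h mk (gp N y.2) x.1 y.1 := by
    intro x y
    simp only [W, mul_apply, of_apply, Fintype.sum_prod_type, blockDiagonal_apply]
    rw [Finset.sum_eq_single x.1, Finset.sum_eq_single y.2]
    · simp
    · intro j _ hj; rw [if_neg hj]; simp
    · simp
    · intro l _ hl
      refine Finset.sum_eq_zero fun j _ => ?_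
      rw [if_neg (Ne.symm hl)]; simp
    · simp
  have h4 : Ct h mk N = W * blockDiagonal (fun j : Fin N => Gs h mk (gp N j)) * W' := by
    ext x y
    rw [mul_apply]
    simp_rw [h3]
    simp only [W', of_apply, Fintype.sum_prod_type]
    rw [Finset.sum_eq_single y.1]
    · simp only [if_true, Ct, of_apply, cc, Finset.mul_sum]
      refine Finset.sum_congr rfl fun j _ => ?_
      rw [neg_sub, sub_eq_neg_add, ← ex_mul]
      ring
    · intro l _ hl
      refine Finset.sum_eq_zero fun j _ => ?_
      rw [if_neg hl]; simp
    · simp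
  rw [h4, eigSum_conj F W W' _ h2]


end

section

lemma At_Ct {K : Type*} [Fintype K] [DecidableEq K] (h : K → K → ℝ → ℂ)
    (hTP : ∀ k l, h k l ∈ TP) (mk : K → ℕ) :
    ∃ C : ℝ, 0 ≤ C ∧ ∀ (N : ℕ) (ns : K → ℕ), 0 < N → (∀ k, ns k ≤ mk k * N) →
      ∑ x, ∑ y, ‖At h mk ns N x y - Ct h mk N x y‖ ≤ C * (1 + ∑ k, ((mk k : ℝ) * N - ns k)) := by
  classical
  choose C hC0 hC using fun k l => tp_circ (hTP k l)
  set S : K → K → ℝ := fun k l => ∑' r, ‖fc (h k l) r‖ with hS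
  have hS0 : ∀ k l, 0 ≤ S k l := fun k l => tsum_nonneg fun _ => norm_nonneg _
  set D1 : ℝ := ∑ x : (k : K) × Fin (mk k), ∑ y : (k : K) × Fin (mk k), C x.1 y.1 with hD1
  set D2 : ℝ := ∑ x : (k : K) × Fin (mk k), ∑ y : (k : K) × Fin (mk k), S x.1 y.1 with hD2
  have hD10 : 0 ≤ D1 := Finset.sum_nonneg fun _ _ => Finset.sum_nonneg fun _ _ => hC0 _ _
  have hD20 : 0 ≤ D2 := Finset.sum_nonneg fun _ _ => Finset.sum_nonneg fun _ _ => hS0 _ _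
  refine ⟨D1 + 2 * D2, by positivity, fun N ns hN hle => ?_⟩
  have hbad := card_bad mk ns hN hle
  rw [← hbad]
  set a : Matrix (((k : K) × Fin (mk k)) × Fin N) (((k : K) × Fin (mk k)) × Fin N) ℂ :=
    Matrix.of fun x y => fc (h x.1.1 y.1.1) (((pos x : ℕ) : ℤ) - ((pos y : ℕ) : ℤ)) with ha
  have h1 : ∀ x y, ‖At h mk ns N x y - Ct h mk N x y‖ ≤ ‖a x y - Ct h mk N x y‖ +
      ((if ¬ good ns x then ‖a x y‖ else 0) + (if ¬ good ns y then ‖a x y‖ else 0)) := by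
    intro x y
    have hb : ‖0 - Ct h mk N x y‖ ≤ ‖a x y - Ct h mk N x y‖ + ‖a x y‖ := by
      have : 0 - Ct h mk N x y = (a x y - Ct h mk N x y) - a x y := by ring
      rw [this]; exact norm_sub_le _ _
    have hna := norm_nonneg (a x y)
    simp only [At, of_apply]
    by_cases hx : good ns x <;> by_cases hy : good ns y <;> simp only [hx, hy, and_self, and_true, true_and, not_true, not_false_iff, if_true, if_false, and_false] 
    · simp [ha]
    · linarith
    · linarith
    · linarith
  have h2 : ∑ x, ∑ y, ‖a x y - Ct h mk N x y‖ ≤ D1 := by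
    have : ∑ x, ∑ y, ‖a x y - Ct h mk N x y‖ = ∑ l : (k : K) × Fin (mk k), ∑ l' : (k : K) × Fin (mk k),
        ∑ p : Fin N, ∑ q : Fin N, ‖a (l, p) (l', q) - Ct h mk N (l, p) (l', q)‖ := by
      simp_rw [Fintype.sum_prod_type]
      refine Finset.sum_congr rfl fun l _ => ?_
      rw [Finset.sum_comm]
    rw [this]
    refine Finset.sum_le_sum fun l _ => Finset.sum_le_sum fun l' _ => ?_
    refine le_trans (le_of_eq ?_) (hC l.1 l'.1 N hN l.2 l'.2)
    refine Finset.sum_congr rfl fun p _ => Finset.sum_congr rfl fun q _ => ?_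
    simp only [ha, of_apply, pos, Ct, Gs]
    congr 2
    split_ifs with hh
    · rfl
    · simp [cc]
  have h3 : ∀ x, ∑ y, ‖a x y‖ ≤ D2 := by
    intro x
    rw [Fintype.sum_prod_type]
    refine le_trans ?_ (Finset.single_le_sum (f := fun l : (k : K) × Fin (mk k) => ∑ y : (k : K) × Fin (mk k), S l.1 y.1)
      (fun l _ => Finset.sum_nonneg fun _ _ => hS0 _ _) (Finset.mem_univ x.1))
    refine Finset.sum_le_sum fun l' _ => ?_
    simp only [ha, of_apply]
    apply tp_sum_inj (hTP _ _)
    intro q q' hq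
    simp only [pos] at hq
    ext; push_cast at hq; omega
  have h4 : ∀ y, ∑ x, ‖a x y‖ ≤ D2 := by
    intro y
    rw [Fintype.sum_prod_type]
    have hD2' : D2 = ∑ y : (k : K) × Fin (mk k), ∑ x : (k : K) × Fin (mk k), S x.1 y.1 := Finset.sum_comm
    rw [hD2']
    refine le_trans ?_ (Finset.single_le_sum (f := fun l : (k : K) × Fin (mk k) => ∑ x : (k : K) × Fin (mk k), S x.1 l.1)
      (fun l _ => Finset.sum_nonneg fun _ _ => hS0 _ _) (Finset.mem_univ y.1))
    refine Finset.sum_le_sum fun l' _ => ?_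
    simp only [ha, of_apply]
    apply tp_sum_inj (hTP _ _)
    intro q q' hq
    simp only [pos] at hq
    ext; push_cast at hq; omega
  have hcard : ∑ x : ((k : K) × Fin (mk k)) × Fin N, (if ¬ good ns x then D2 else 0) =
      Fintype.card {x : ((k : K) × Fin (mk k)) × Fin N // ¬ good ns x} * D2 := by
    rw [← Finset.sum_filter, Finset.sum_const, nsmul_eq_mul, Fintype.card_subtype]
  have h5 : ∑ x, ∑ y, (if ¬ good ns x then ‖a x y‖ else 0) ≤
      Fintype.card {x : ((k : K) × Fin (mk k)) × Fin N // ¬ good ns x} * D2 := by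
    rw [← hcard]
    refine Finset.sum_le_sum fun x _ => ?_
    by_cases hx : good ns x
    · simp [hx]
    · simp only [hx, not_false_iff, if_true]; exact h3 x
  have h6 : ∑ x, ∑ y, (if ¬ good ns y then ‖a x y‖ else 0) ≤
      Fintype.card {x : ((k : K) × Fin (mk k)) × Fin N // ¬ good ns x} * D2 := by
    rw [← hcard, Finset.sum_comm]
    refine Finset.sum_le_sum fun x _ => ?_
    by_cases hx : good ns x
    · simp [hx]
    · simp only [hx, not_false_iff, if_true]; exact h4 x
  have h7 := Finset.sum_le_sum fun x (_ : x ∈ Finset.univ) => Finset.sum_le_sum fun y (_ : y ∈ Finset.univ) => h1 x y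
  simp_rw [Finset.sum_add_distrib] at h7
  refine h7.trans ?_
  have hb0 : (0 : ℝ) ≤ Fintype.card {x : ((k : K) × Fin (mk k)) × Fin N // ¬ good ns x} := by positivity
  nlinarith [mul_nonneg hD10 hb0]

lemma tp_main_bound {K : Type*} [Fintype K] [DecidableEq K] (h : K → K → ℝ → ℂ)
    (hTP : ∀ k l, h k l ∈ TP) (mk : K → ℕ)
    (hH : ∀ k l θ, h l k θ = (starRingEnd ℂ) (h k l θ)) (i : ℕ) :
    ∃ C : ℝ, 0 ≤ C ∧ ∀ (N : ℕ) (ns : K → ℕ), 0 < N → (∀ k, ns k ≤ mk k * N) →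
      ‖eSum (fun x => cay x ^ i) (TM h ns) - ∑ j : Fin N, eSum (fun x => cay x ^ i) (Gs h mk (gp N j))‖ ≤
        C * (1 + ∑ k, ((mk k : ℝ) * N - ns k)) := by
  obtain ⟨C, hC0, hC⟩ := At_Ct h hTP mk
  refine ⟨2 * i * C + 1, by positivity, fun N ns hN hle => ?_⟩
  have h1 := eSum_cay_l1 (At_herm h mk ns N hH) (Ct_herm h mk N hH) i
  have h2 := hC N ns hN hle
  have hE : 0 ≤ ∑ k, ((mk k : ℝ) * N - ns k) := Finset.sum_nonneg fun k _ => by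
    have := hle k
    have : (ns k : ℝ) ≤ mk k * N := by exact_mod_cast this
    linarith
  set E := ∑ k, ((mk k : ℝ) * N - ns k) with hEd
  have h3 : eSum (fun x => cay x ^ i) (Ct h mk N) = _ := eigSum_Ct _ h mk hN
  have h4 : eSum (fun x => cay x ^ i) (At h mk ns N) = _ := eigSum_At _ h mk ns hN hle
  have h5 : eSum (fun x => cay x ^ i) (TM h ns) - ∑ j : Fin N, eSum (fun x => cay x ^ i) (Gs h mk (gp N j)) =
    (eSum (fun x => cay x ^ i) (At h mk ns N) - eSum (fun x => cay x ^ i) (Ct h mk N)) -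
      (E : ℂ) * cay 0 ^ i := by
    rw [h3, h4]; unfold eSum; simp only [Complex.zero_re]; ring
  rw [h5]
  refine (norm_sub_le _ _).trans ?_
  rw [norm_mul, norm_pow, norm_cay, one_pow, mul_one, Complex.norm_real, Real.norm_of_nonneg hE]
  have h6 : 2 * (i : ℝ) * ∑ x, ∑ y, ‖At h mk ns N x y - Ct h mk N x y‖ ≤ 2 * i * (C * (1 + E)) :=
    mul_le_mul_of_nonneg_left h2 (by positivity)
  nlinarith


end

section

lemma eSum_add {ι : Type*} [Fintype ι] [DecidableEq ι] (x y : ℝ → ℂ) {A : Matrix ι ι ℂ}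
    (hA : A.IsHermitian) : eSum (x + y) A = eSum x A + eSum y A := by
  rw [eSum_herm _ hA, eSum_herm _ hA, eSum_herm _ hA, ← Finset.sum_add_distrib]; rfl

lemma eSum_smul {ι : Type*} [Fintype ι] [DecidableEq ι] (a : ℂ) (x : ℝ → ℂ) {A : Matrix ι ι ℂ}
    (hA : A.IsHermitian) : eSum (a • x) A = a * eSum x A := by
  rw [eSum_herm _ hA, eSum_herm _ hA, Finset.mul_sum]; rfl

lemma eSum_zero {ι : Type*} [Fintype ι] [DecidableEq ι] {A : Matrix ι ι ℂ}
    (hA : A.IsHermitian) : eSum 0 A = 0 := by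
  rw [eSum_herm _ hA]; simp

lemma eSum_cay_neg {ι : Type*} [Fintype ι] [DecidableEq ι] {A : Matrix ι ι ℂ}
    (hA : A.IsHermitian) (n : ℕ) : eSum (fun x => cay x ^ (-(n : ℤ))) A =
      (starRingEnd ℂ) (eSum (fun x => cay x ^ n) A) := by
  rw [eSum_herm _ hA, eSum_herm _ hA, map_sum]
  refine Finset.sum_congr rfl fun i _ => ?_
  rw [map_pow, ← Complex.inv_eq_conj (norm_cay _)]; simp

/-- Hermitian part. -/
def hp {ι : Type*} (A : Matrix ι ι ℂ) : Matrix ι ι ℂ := (1 / 2 : ℂ) • (A + Aᴴ)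

lemma hp_herm {ι : Type*} (A : Matrix ι ι ℂ) : (hp A).IsHermitian := by
  unfold hp Matrix.IsHermitian
  rw [conjTranspose_smul, conjTranspose_add, conjTranspose_conjTranspose, add_comm]
  simp

lemma hp_eq {ι : Type*} {A : Matrix ι ι ℂ} (hA : A.IsHermitian) : hp A = A := by
  unfold hp; rw [hA.eq, ← two_smul ℂ, smul_smul]; simp

lemma hp_continuous {ι : Type*} : Continuous (hp : Matrix ι ι ℂ → Matrix ι ι ℂ) := by
  unfold hp
  have : Continuous fun A : Matrix ι ι ℂ => Aᴴ := continuous_id.matrix_conjTranspose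
  exact (continuous_id.add this).const_smul (1 / 2 : ℂ)

lemma eSum_cay_continuous {ι : Type*} [Fintype ι] [DecidableEq ι] (k : ℕ) :
    Continuous fun A : Matrix ι ι ℂ => eSum (fun x => cay x ^ k) (hp A) := by
  rw [continuous_iff_continuousAt]
  intro B
  rw [ContinuousAt, tendsto_iff_norm_sub_tendsto_zero]
  refine squeeze_zero (fun _ => norm_nonneg _) (fun A => eSum_cay_l1 (hp_herm A) (hp_herm B) k) ?_
  have h1 : Continuous fun A : Matrix ι ι ℂ => 2 * (k : ℝ) * ∑ i, ∑ j, ‖hp A i j - hp B i j‖ := by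
    refine continuous_const.mul (continuous_finsetSum _ fun i _ => continuous_finsetSum _ fun j _ => ?_)
    exact ((hp_continuous.matrix_elem i j).sub continuous_const).norm
  have h2 := h1.tendsto B
  simpa using h2

lemma eSum_continuous {ι : Type*} [Fintype ι] [DecidableEq ι] {φ : ℝ → ℂ} (hφ : Continuous φ)
    (hc : HasCompactSupport φ) : Continuous fun A : Matrix ι ι ℂ => eSum φ (hp A) := by
  have hz : ∀ k : ℤ, Continuous fun A : Matrix ι ι ℂ => eSum (fun x => cay x ^ k) (hp A) := by
    intro k
    obtain ⟨n, rfl | rfl⟩ := k.eq_nat_or_neg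
    · simpa using eSum_cay_continuous (ι := ι) n
    · have := Complex.continuous_conj.comp (eSum_cay_continuous (ι := ι) n)
      convert this using 1
      funext A
      simp only [Function.comp]
      exact eSum_cay_neg (hp_herm A) n
  have hspan : ∀ χ ∈ Submodule.span ℂ (Set.range fun (k : ℤ) (x : ℝ) => cay x ^ k),
      Continuous fun A : Matrix ι ι ℂ => eSum χ (hp A) := by
    intro χ hχ
    induction hχ using Submodule.span_induction with
    | mem x hx => obtain ⟨k, rfl⟩ := hx; exact hz k
    | zero =>
      convert (continuous_const : Continuous fun _ : Matrix ι ι ℂ => (0 : ℂ)) using 1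
      funext A
      exact eSum_zero (hp_herm A)
    | add x y _ _ hx hy =>
      convert hx.add hy using 1
      funext A
      exact eSum_add x y (hp_herm A)
    | smul a x _ hx =>
      convert hx.const_smul a using 1
      funext A
      exact eSum_smul a x (hp_herm A)
  rw [← continuousOn_univ]
  refine continuousOn_of_uniform_approx_of_continuousOn ?_
  intro u hu
  obtain ⟨ε, hε, hεu⟩ := Metric.mem_uniformity_dist.1 hu
  obtain ⟨χ, hχ, hb⟩ := cay_approx φ hφ hc (ε := ε / (2 * (Fintype.card ι + 1))) (by positivity)
  refine ⟨_, (hspan χ hχ).continuousOn, fun A _ => hεu ?_⟩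
  rw [dist_eq_norm]
  refine (eSum_sub_le φ χ (hp_herm A) _ hb).trans_lt ?_
  rw [mul_div_assoc', div_lt_iff₀ (by positivity)]
  nlinarith [(Nat.cast_nonneg (Fintype.card ι) : (0 : ℝ) ≤ _)]

lemma riemann {F : ℝ → ℂ} (hF : Continuous F) (hper : Function.Periodic F (2 * π)) :
    Tendsto (fun N : ℕ => (N : ℂ)⁻¹ * ∑ j : Fin N, F (gp N j)) atTop
      (𝓝 (((2 * π : ℝ) : ℂ)⁻¹ * ∫ θ in (-π)..π, F θ)) := by
  have hI : ∫ θ in (-π)..π, F θ = ∫ θ in (0:ℝ)..(2 * π), F θ := by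
    have := hper.intervalIntegral_add_eq (-π) 0
    rw [show -π + 2 * π = π by ring, zero_add] at this
    exact this
  rw [hI]
  rw [Metric.tendsto_atTop]
  intro ε hε
  have huc := isCompact_Icc.uniformContinuousOn_of_continuous (hF.continuousOn (s := Set.Icc 0 (2 * π)))
  obtain ⟨δ, hδ, hd⟩ := Metric.uniformContinuousOn_iff.1 huc (ε / 2) (by positivity)
  obtain ⟨N0, hN0⟩ := exists_nat_gt (2 * π / δ)
  refine ⟨N0 + 1, fun N hN => ?_⟩
  have hNpos : (0 : ℝ) < N := by exact_mod_cast (by omega : 0 < N)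
  have hNδ : 2 * π / N < δ := by
    rw [div_lt_iff₀ hNpos]
    rw [div_lt_iff₀ hδ] at hN0
    have : (N0 : ℝ) ≤ N := by exact_mod_cast (by omega : N0 ≤ N)
    nlinarith
  have hstep : ∀ j : ℕ, gp N (j + 1) - gp N j = 2 * π / N := by
    intro j; unfold gp; push_cast; field_simp; ring
  have hsum : ∫ θ in (0:ℝ)..(2 * π), F θ = ∑ j ∈ Finset.range N, ∫ θ in (gp N j)..(gp N (j + 1)), F θ := by
    rw [intervalIntegral.sum_integral_adjacent_intervals (fun k _ => hF.intervalIntegrable _ _)]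
    congr 1
    · simp [gp]
    · unfold gp; field_simp
  have hloc : ∀ j ∈ Finset.range N, ‖(2 * π / N : ℝ) * F (gp N j) - ∫ θ in (gp N j)..(gp N (j + 1)), F θ‖ ≤
      ε / 2 * (2 * π / N) := by
    intro j hj
    have hjN : (j : ℝ) + 1 ≤ N := by exact_mod_cast Finset.mem_range.1 hj
    have h0 : ∫ θ in (gp N j)..(gp N (j + 1)), F (gp N j) = (2 * π / N : ℝ) * F (gp N j) := by
      rw [intervalIntegral.integral_const, hstep]; rfl
    rw [← h0, ← intervalIntegral.integral_sub (by simp) (hF.intervalIntegrable _ _)]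
    have hle : gp N j ≤ gp N (j + 1) := by
      have := hstep j
      have : 0 ≤ 2 * π / N := by positivity
      linarith
    refine (intervalIntegral.norm_integral_le_of_norm_le_const (C := ε / 2) ?_).trans ?_
    · intro θ hθ
      rw [Set.uIoc_of_le hle] at hθ
      have ha : 0 ≤ gp N j := by unfold gp; positivity
      have hb : gp N (j + 1) ≤ 2 * π := by
        unfold gp; push_cast
        rw [div_le_iff₀ hNpos]
        nlinarith [Real.pi_pos]
      have := hd (gp N j) ⟨ha, by linarith⟩ θ ⟨by linarith [hθ.1], by linarith [hθ.2]⟩ (by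
        rw [Real.dist_eq, abs_sub_comm, abs_of_nonneg (by linarith [hθ.1])]
        have := hstep j
        linarith [hθ.2])
      rw [dist_eq_norm] at this
      exact this.le
    · rw [hstep, abs_of_nonneg (by positivity)]
  have hpi : ((2 * π : ℝ) : ℂ) ≠ 0 := by exact_mod_cast (by positivity : (2 * π : ℝ) ≠ 0)
  have hkey : (N : ℂ)⁻¹ * ∑ j : Fin N, F (gp N j) - ((2 * π : ℝ) : ℂ)⁻¹ * ∫ θ in (0:ℝ)..(2 * π), F θ =
      ((2 * π : ℝ) : ℂ)⁻¹ * ∑ j ∈ Finset.range N, (((2 * π / N : ℝ) : ℂ) * F (gp N j) - ∫ θ in (gp N j)..(gp N (j + 1)), F θ) := by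
    rw [hsum, Finset.sum_sub_distrib, mul_sub, ← Finset.mul_sum, Fin.sum_univ_eq_sum_range (fun j => F (gp N j)) N]
    congr 1
    rw [← mul_assoc]
    congr 1
    push_cast at hpi ⊢
    field_simp
  rw [dist_eq_norm, hkey, norm_mul, norm_inv, Complex.norm_real, Real.norm_of_nonneg (by positivity)]
  rw [inv_mul_lt_iff₀ (by positivity)]
  calc _ ≤ ∑ j ∈ Finset.range N, ε / 2 * (2 * π / N) := norm_sum_le_of_le _ hloc
    _ = 2 * π * (ε / 2) := by rw [Finset.sum_const, Finset.card_range, nsmul_eq_mul]; field_simp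
    _ < _ := by nlinarith [Real.pi_pos]

lemma tp_periodic {h : ℝ → ℂ} (hh : h ∈ TP) : Function.Periodic h (2 * π) := by
  induction hh using Submodule.span_induction with
  | mem x hx =>
    obtain ⟨r, rfl⟩ := hx
    intro θ
    unfold ex
    rw [Complex.exp_eq_exp_iff_exists_int]
    exact ⟨r, by push_cast; ring⟩
  | zero => intro θ; rfl
  | add x y _ _ hx hy => exact hx.add hy
  | smul a x _ hx => exact hx.smul a

lemma tp_limit {K : Type*} [Fintype K] [DecidableEq K] (h : K → K → ℝ → ℂ)
    (hTP : ∀ k l, h k l ∈ TP) (mk : K → ℕ)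
    (hH : ∀ k l θ, h l k θ = (starRingEnd ℂ) (h k l θ)) (i : ℕ)
    (nk : ℕ → K → ℕ) (N : ℕ → ℕ) (hN : Tendsto N atTop atTop) (hle : ∀ n k, nk n k ≤ mk k * N n)
    (hlim : ∀ k, Tendsto (fun n => (nk n k : ℝ) / N n) atTop (𝓝 (mk k))) :
    Tendsto (fun n => (N n : ℂ)⁻¹ * eSum (fun x => cay x ^ i) (TM h (nk n))) atTop
      (𝓝 (((2 * π : ℝ) : ℂ)⁻¹ * ∫ θ in (-π)..π, eSum (fun x => cay x ^ i) (Gs h mk θ))) := by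
  obtain ⟨C, hC0, hC⟩ := tp_main_bound h hTP mk hH i
  have hcont : Continuous fun θ => eSum (fun x => cay x ^ i) (Gs h mk θ) := by
    have h1 : (fun θ => eSum (fun x => cay x ^ i) (Gs h mk θ)) =
        fun θ => eSum (fun x => cay x ^ i) (hp (Gs h mk θ)) := by
      funext θ; rw [hp_eq (Gs_herm h mk θ fun k l => hH k l θ)]
    rw [h1]
    refine (eSum_cay_continuous i).comp (continuous_matrix fun P Q => ?_)
    simp only [Gs, of_apply]
    split_ifs
    · exact tp_continuous (hTP _ _)
    · exact continuous_const
  have hper : Function.Periodic (fun θ => eSum (fun x => cay x ^ i) (Gs h mk θ)) (2 * π) := by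
    intro θ
    have : Gs h mk (θ + 2 * π) = Gs h mk θ := by
      ext P Q
      simp only [Gs, of_apply, tp_periodic (hTP _ _) θ]
    simp only [this]
  have h1 := (riemann hcont hper).comp hN
  have h2 : Tendsto (fun n => (N n : ℂ)⁻¹ * eSum (fun x => cay x ^ i) (TM h (nk n)) -
      (N n : ℂ)⁻¹ * ∑ j : Fin (N n), eSum (fun x => cay x ^ i) (Gs h mk (gp (N n) j))) atTop (𝓝 0) := by
    have hNr : Tendsto (fun n => (N n : ℝ)) atTop atTop := tendsto_natCast_atTop_atTop.comp hN
    have hb : Tendsto (fun n => C * ((N n : ℝ)⁻¹ + ∑ k, ((mk k : ℝ) - (nk n k : ℝ) / N n))) atTop (𝓝 0) := by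
      have e1 : Tendsto (fun n => ∑ k, ((mk k : ℝ) - (nk n k : ℝ) / N n)) atTop (𝓝 (∑ k : K, ((mk k : ℝ) - mk k))) :=
        tendsto_finsetSum _ fun k _ => tendsto_const_nhds.sub (hlim k)
      have e2 := ((tendsto_inv_atTop_zero.comp hNr).add e1).const_mul C
      simpa using e2
    refine squeeze_zero_norm' ?_ hb
    filter_upwards [hN.eventually_gt_atTop 0] with n hn
    have hn' : (0 : ℝ) < N n := by exact_mod_cast hn
    rw [← mul_sub, norm_mul, norm_inv, Complex.norm_natCast, inv_mul_le_iff₀ hn']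
    refine (hC (N n) (nk n) hn (hle n)).trans (le_of_eq ?_)
    rw [mul_left_comm]
    congr 1
    rw [mul_add, mul_inv_cancel₀ hn'.ne', Finset.mul_sum]
    congr 1
    refine Finset.sum_congr rfl fun k _ => ?_
    field_simp
  have h3 := h2.add h1
  simpa using h3


end

section

lemma tendsto_of_approx {a : ℕ → ℂ} {I : ℂ}
    (h : ∀ ε > 0, ∃ (b : ℕ → ℂ) (J : ℂ), Tendsto b atTop (𝓝 J) ∧ (∀ᶠ n in atTop, ‖a n - b n‖ ≤ ε) ∧ ‖I - J‖ ≤ ε) :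
    Tendsto a atTop (𝓝 I) := by
  rw [Metric.tendsto_nhds]
  intro ε hε
  obtain ⟨b, J, hb, h1, h2⟩ := h (ε / 4) (by positivity)
  have h3 := Metric.tendsto_nhds.1 hb (ε / 4) (by positivity)
  filter_upwards [h1, h3] with n h4 h5
  rw [dist_eq_norm] at *
  have : a n - I = (a n - b n) + (b n - J) - (I - J) := by ring
  rw [this]
  calc _ ≤ _ := (norm_sub_le _ _).trans (add_le_add_left (norm_add_le _ _) _)
    _ < ε := by linarith

lemma eSum_integrable {K : Type*} [Fintype K] [DecidableEq K] (g : K → K → ℝ → ℂ)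
    (hg : ∀ k l, IntervalIntegrable (g k l) volume (-π) π) (mk : K → ℕ)
    (hH : ∀ k l θ, g l k θ = (starRingEnd ℂ) (g k l θ)) (φ : ℝ → ℂ) (B : ℝ) (hB : ∀ x, ‖φ x‖ ≤ B)
    (hφ : Continuous fun A : Matrix ((k : K) × Fin (mk k)) ((k : K) × Fin (mk k)) ℂ => eSum φ (hp A)) :
    IntervalIntegrable (fun θ => eSum φ (Gs g mk θ)) volume (-π) π := by
  have hle : -π ≤ π := by linarith [Real.pi_pos]
  have h1 : (fun θ => eSum φ (Gs g mk θ)) = fun θ => eSum φ (hp (Gs g mk θ)) := by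
    funext θ; rw [hp_eq (Gs_herm g mk θ fun k l => hH k l θ)]
  rw [intervalIntegrable_iff_integrableOn_Ioc_of_le hle]
  refine Integrable.of_bound (C := Fintype.card ((k : K) × Fin (mk k)) * B) ?_ (.of_forall fun θ => ?_)
  · rw [h1]
    refine hφ.comp_aestronglyMeasurable (f := fun θ => Gs g mk θ) ?_
    let G : ℝ → ((k : K) × Fin (mk k)) → ((k : K) × Fin (mk k)) → ℂ := fun θ P Q =>
      if (P.2 : ℕ) = (Q.2 : ℕ) then g P.1 Q.1 θ else 0
    have : AEMeasurable G (volume.restrict (Set.Ioc (-π) π)) := by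
      refine aemeasurable_pi_lambda _ fun P => aemeasurable_pi_lambda _ fun Q => ?_
      simp only [G]
      split_ifs
      · exact ((intervalIntegrable_iff_integrableOn_Ioc_of_le hle).1 (hg _ _)).aestronglyMeasurable.aemeasurable
      · exact aemeasurable_const
    exact this.aestronglyMeasurable
  · rw [eSum_herm _ (Gs_herm g mk θ fun k l => hH k l θ)]
    refine (norm_sum_le_of_le _ fun i _ => hB _).trans ?_
    simp

lemma exists_approx {K : Type*} [Fintype K] (g : K → K → ℝ → ℂ)
    (hg : ∀ k l, IntervalIntegrable (g k l) volume (-π) π)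
    (hH : ∀ k l θ, g l k θ = (starRingEnd ℂ) (g k l θ)) {ε : ℝ} (hε : 0 < ε) :
    ∃ h : K → K → ℝ → ℂ, (∀ k l, h k l ∈ TP) ∧ (∀ k l θ, h l k θ = (starRingEnd ℂ) (h k l θ)) ∧
      ∑ k, ∑ l, ∫ θ in (-π)..π, ‖g k l θ - h k l θ‖ ≤ ε := by
  have hle : -π ≤ π := by linarith [Real.pi_pos]
  set η : ℝ := ε / ((Fintype.card K : ℝ) ^ 2 + 1) with hη
  have hη0 : 0 < η := by positivity
  choose h0 hTP hb using fun k l => tp_dense (g k l) (hg k l) hη0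
  refine ⟨fun k l θ => (1 / 2 : ℂ) * (h0 k l θ + (starRingEnd ℂ) (h0 l k θ)), ?_, ?_, ?_⟩
  · intro k l
    exact TP.smul_mem (1 / 2 : ℂ) (TP.add_mem (hTP k l) (tp_conj (hTP l k)))
  · intro k l θ
    simp only [map_mul, map_add, Complex.conj_conj, map_div₀, map_one, map_ofNat]
    rw [add_comm]
  · have hone : ∀ k l, ∫ θ in (-π)..π, ‖g k l θ - (1 / 2 : ℂ) * (h0 k l θ + (starRingEnd ℂ) (h0 l k θ))‖ ≤ η := by
      intro k l
      have hi : ∀ k l, IntervalIntegrable (fun θ => ‖g k l θ - h0 k l θ‖) volume (-π) π :=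
        fun k l => ((hg k l).sub (tp_integrable (hTP k l))).norm
      calc _ ≤ ∫ θ in (-π)..π, (1 / 2 * ‖g k l θ - h0 k l θ‖ + 1 / 2 * ‖g l k θ - h0 l k θ‖) := by
            apply intervalIntegral.integral_mono_on hle
            · have := tp_integrable (TP.smul_mem (1 / 2 : ℂ) (TP.add_mem (hTP k l) (tp_conj (hTP l k))))
              exact ((hg k l).sub this).norm
            · exact ((hi k l).const_mul _).add ((hi l k).const_mul _)
            · intro θ _
              have h1 : ‖g l k θ - h0 l k θ‖ = ‖g k l θ - (starRingEnd ℂ) (h0 l k θ)‖ := by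
                rw [hH l k, ← map_sub, RCLike.norm_conj]
              rw [h1]
              have h2 : g k l θ - (1 / 2 : ℂ) * (h0 k l θ + (starRingEnd ℂ) (h0 l k θ)) =
                (1 / 2 : ℂ) * (g k l θ - h0 k l θ) + (1 / 2 : ℂ) * (g k l θ - (starRingEnd ℂ) (h0 l k θ)) := by ring
              rw [h2]
              refine (norm_add_le _ _).trans (le_of_eq ?_)
              simp
        _ = 1 / 2 * (∫ θ in (-π)..π, ‖g k l θ - h0 k l θ‖) + 1 / 2 * ∫ θ in (-π)..π, ‖g l k θ - h0 l k θ‖ := by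
            rw [intervalIntegral.integral_add ((hi k l).const_mul _) ((hi l k).const_mul _),
              intervalIntegral.integral_const_mul, intervalIntegral.integral_const_mul]
        _ ≤ η := by linarith [hb k l, hb l k]
    refine (Finset.sum_le_sum fun k _ => Finset.sum_le_sum fun l _ => hone k l).trans ?_
    simp only [Finset.sum_const, Finset.card_univ, nsmul_eq_mul]
    rw [hη, ← mul_assoc, mul_div_assoc', div_le_iff₀ (by positivity)]
    nlinarith

lemma cay_limit {K : Type*} [Fintype K] [DecidableEq K] (g : K → K → ℝ → ℂ)
    (hg : ∀ k l, IntervalIntegrable (g k l) volume (-π) π) (mk : K → ℕ)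
    (hH : ∀ k l θ, g l k θ = (starRingEnd ℂ) (g k l θ)) (i : ℕ)
    (nk : ℕ → K → ℕ) (N : ℕ → ℕ) (hN : Tendsto N atTop atTop) (hle : ∀ n k, nk n k ≤ mk k * N n)
    (hlim : ∀ k, Tendsto (fun n => (nk n k : ℝ) / N n) atTop (𝓝 (mk k))) :
    Tendsto (fun n => (N n : ℂ)⁻¹ * eSum (fun x => cay x ^ i) (TM g (nk n))) atTop
      (𝓝 (((2 * π : ℝ) : ℂ)⁻¹ * ∫ θ in (-π)..π, eSum (fun x => cay x ^ i) (Gs g mk θ))) := by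
  have hpi : -π ≤ π := by linarith [Real.pi_pos]
  set M : ℝ := ∑ k, (mk k : ℝ) with hM
  have hM0 : 0 ≤ M := by positivity
  apply tendsto_of_approx
  intro ε hε
  obtain ⟨h, hTP, hHh, hδ⟩ := exists_approx g hg hH (ε := ε / (2 * i * (M + M ^ 2) + 1)) (by positivity)
  set δ := ∑ k, ∑ l, ∫ θ in (-π)..π, ‖g k l θ - h k l θ‖ with hδd
  have hδ0 : 0 ≤ δ := Finset.sum_nonneg fun k _ => Finset.sum_nonneg fun l _ =>
    intervalIntegral.integral_nonneg hpi fun _ _ => norm_nonneg _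
  rw [le_div_iff₀ (by positivity)] at hδ
  have hi0 : (0 : ℝ) ≤ i := Nat.cast_nonneg i
  refine ⟨_, _, tp_limit h hTP mk hHh i nk N hN hle hlim, ?_, ?_⟩
  · filter_upwards [hN.eventually_gt_atTop 0] with n hn
    have hn' : (0 : ℝ) < N n := by exact_mod_cast hn
    rw [← mul_sub, norm_mul, norm_inv, Complex.norm_natCast, inv_mul_le_iff₀ hn']
    refine (TM_pert g h hg (fun k l => tp_integrable (hTP k l)) hH hHh (nk n) i).trans ?_
    rw [← hδd]
    have hc : (Fintype.card ((k : K) × Fin (nk n k)) : ℝ) ≤ M * N n := by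
      rw [Fintype.card_sigma, hM, Finset.sum_mul]
      push_cast
      refine Finset.sum_le_sum fun k _ => ?_
      rw [Fintype.card_fin]
      exact_mod_cast hle n k
    have h1 : Fintype.card ((k : K) × Fin (nk n k)) * δ ≤ M * N n * δ := mul_le_mul_of_nonneg_right hc hδ0
    have h2 : 2 * (i : ℝ) * (Fintype.card ((k : K) × Fin (nk n k)) * δ) ≤ 2 * i * (M * N n * δ) :=
      mul_le_mul_of_nonneg_left h1 (by positivity)
    refine h2.trans ?_
    have h3 : 2 * (i : ℝ) * (M * δ) ≤ ε := by
      have : 0 ≤ 2 * (i : ℝ) * (M ^ 2 * δ) := by positivity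
      nlinarith
    nlinarith
  · have hig := eSum_integrable g hg mk hH (fun x => cay x ^ i) 1 (fun x => by rw [norm_pow, norm_cay, one_pow]) (eSum_cay_continuous i)
    have hih := eSum_integrable h (fun k l => tp_integrable (hTP k l)) mk hHh (fun x => cay x ^ i) 1 (fun x => by rw [norm_pow, norm_cay, one_pow]) (eSum_cay_continuous i)
    rw [← mul_sub, ← intervalIntegral.integral_sub hig hih, norm_mul]
    have hid : ∀ k l, IntervalIntegrable (fun θ => ‖g k l θ - h k l θ‖) volume (-π) π :=
      fun k l => ((hg k l).sub (tp_integrable (hTP k l))).norm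
    have hid1 : ∀ k, IntervalIntegrable (fun θ => ∑ l, ‖g k l θ - h k l θ‖) volume (-π) π :=
      fun k => ii_sum (hid k)
    have hid2 : IntervalIntegrable (fun θ => ∑ k, ∑ l, ‖g k l θ - h k l θ‖) volume (-π) π :=
      ii_sum hid1
    have h4 := intervalIntegral.norm_integral_le_of_norm_le hpi
      (.of_forall fun θ _ => Gs_pert g h mk i θ (fun k l => hH k l θ) (fun k l => hHh k l θ))
      ((hid2.const_mul (M ^ 2)).const_mul (2 * (i : ℝ)))
    rw [intervalIntegral.integral_const_mul, intervalIntegral.integral_const_mul,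
      intervalIntegral.integral_finsetSum (fun k _ => hid1 k)] at h4
    simp_rw [intervalIntegral.integral_finsetSum (fun l _ => hid _ l)] at h4
    rw [← hδd] at h4
    have h5 : ‖((2 * π : ℝ) : ℂ)⁻¹‖ ≤ 1 := by
      rw [norm_inv, Complex.norm_real, Real.norm_of_nonneg (by positivity)]
      apply inv_le_one_of_one_le₀
      linarith [Real.pi_gt_three]
    refine (mul_le_mul h5 h4 (norm_nonneg _) zero_le_one).trans ?_
    have : 0 ≤ 2 * (i : ℝ) * (M * δ) := by positivity
    nlinarith

theorem theoremH {K : Type*} [Fintype K] [DecidableEq K] (g : K → K → ℝ → ℂ)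
    (hg : ∀ k l, IntervalIntegrable (g k l) volume (-π) π) (mk : K → ℕ)
    (hH : ∀ k l θ, g l k θ = (starRingEnd ℂ) (g k l θ))
    (nk : ℕ → K → ℕ) (N : ℕ → ℕ) (hN : Tendsto N atTop atTop) (hle : ∀ n k, nk n k ≤ mk k * N n)
    (hlim : ∀ k, Tendsto (fun n => (nk n k : ℝ) / N n) atTop (𝓝 (mk k)))
    {φ : ℝ → ℂ} (hφ : Continuous φ) (hc : HasCompactSupport φ) :
    Tendsto (fun n => (N n : ℂ)⁻¹ * eSum φ (TM g (nk n))) atTop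
      (𝓝 (((2 * π : ℝ) : ℂ)⁻¹ * ∫ θ in (-π)..π, eSum φ (Gs g mk θ))) := by
  have hpi : -π ≤ π := by linarith [Real.pi_pos]
  have hGH : ∀ θ, (Gs g mk θ).IsHermitian := fun θ => Gs_herm g mk θ fun k l => hH k l θ
  have hTH : ∀ n, (TM g (nk n)).IsHermitian := fun n => TM_herm g (nk n) hH
  have hhi : ∀ i : ℕ, IntervalIntegrable (fun θ => eSum (fun x => cay x ^ i) (Gs g mk θ)) volume (-π) π :=
    fun i => eSum_integrable g hg mk hH (fun x => cay x ^ i) 1 (fun x => by rw [norm_pow, norm_cay, one_pow]) (eSum_cay_continuous i)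
  have hspan : ∀ χ ∈ Submodule.span ℂ (Set.range fun (k : ℤ) (x : ℝ) => cay x ^ k),
      IntervalIntegrable (fun θ => eSum χ (Gs g mk θ)) volume (-π) π ∧
      Tendsto (fun n => (N n : ℂ)⁻¹ * eSum χ (TM g (nk n))) atTop
      (𝓝 (((2 * π : ℝ) : ℂ)⁻¹ * ∫ θ in (-π)..π, eSum χ (Gs g mk θ))) := by
    intro χ hχ
    induction hχ using Submodule.span_induction with
    | mem x hx =>
      obtain ⟨k, rfl⟩ := hx
      obtain ⟨i, rfl | rfl⟩ := k.eq_nat_or_neg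
      · simp only [zpow_natCast]
        exact ⟨hhi i, cay_limit g hg mk hH i nk N hN hle hlim⟩
      · simp only [eSum_cay_neg (hGH _), eSum_cay_neg (hTH _)]
        constructor
        · have := hhi i
          rw [intervalIntegrable_iff] at this ⊢
          exact (Complex.conjCLE.toContinuousLinearMap.integrable_comp this)
        · have h1 := (Complex.continuous_conj.tendsto _).comp (cay_limit g hg mk hH i nk N hN hle hlim)
          rw [map_mul, ← intervalIntegral.intervalIntegral_conj] at h1
          have h2 : ((starRingEnd ℂ) ((2 * π : ℝ) : ℂ)⁻¹) = ((2 * π : ℝ) : ℂ)⁻¹ := by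
            rw [map_inv₀, Complex.conj_ofReal]
          rw [h2] at h1
          refine h1.congr fun n => ?_
          simp
    | zero =>
      simp only [eSum_zero (hGH _), eSum_zero (hTH _)]
      simp
    | add x y _ _ hx hy =>
      simp only [eSum_add _ _ (hGH _), eSum_add _ _ (hTH _)]
      refine ⟨hx.1.add hy.1, ?_⟩
      rw [intervalIntegral.integral_add hx.1 hy.1, mul_add]
      simp_rw [mul_add]
      exact hx.2.add hy.2
    | smul a x _ hx =>
      simp only [eSum_smul _ _ (hGH _), eSum_smul _ _ (hTH _)]
      refine ⟨hx.1.const_mul a, ?_⟩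
      rw [intervalIntegral.integral_const_mul]
      simp_rw [mul_left_comm _ a]
      exact hx.2.const_mul a
  obtain ⟨B, hB⟩ := hφ.bounded_above_of_compact_support hc
  have hiφ := eSum_integrable g hg mk hH φ B hB (eSum_continuous hφ hc)
  set M : ℝ := ∑ k, (mk k : ℝ) with hM
  have hM0 : 0 ≤ M := by positivity
  apply tendsto_of_approx
  intro ε hε
  obtain ⟨χ, hχ, hb⟩ := cay_approx φ hφ hc (ε := ε / (M + 1)) (by positivity)
  set η := ε / (M + 1) with hη
  have hη0 : 0 < η := by positivity
  have hMη : M * η ≤ ε := by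
    rw [hη, mul_div_assoc', div_le_iff₀ (by positivity)]; nlinarith
  refine ⟨_, _, (hspan χ hχ).2, ?_, ?_⟩
  · filter_upwards [hN.eventually_gt_atTop 0] with n hn
    have hn' : (0 : ℝ) < N n := by exact_mod_cast hn
    rw [← mul_sub, norm_mul, norm_inv, Complex.norm_natCast, inv_mul_le_iff₀ hn']
    refine (eSum_sub_le φ χ (hTH n) η hb).trans ?_
    have hc : (Fintype.card ((k : K) × Fin (nk n k)) : ℝ) ≤ M * N n := by
      rw [Fintype.card_sigma, hM, Finset.sum_mul]
      push_cast
      refine Finset.sum_le_sum fun k _ => ?_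
      rw [Fintype.card_fin]
      exact_mod_cast hle n k
    calc _ ≤ M * N n * η := mul_le_mul_of_nonneg_right hc hη0.le
      _ ≤ _ := by nlinarith
  · rw [← mul_sub, ← intervalIntegral.integral_sub hiφ (hspan χ hχ).1, norm_mul]
    have hcm : (Fintype.card ((k : K) × Fin (mk k)) : ℝ) = M := by
      rw [Fintype.card_sigma, hM]; push_cast; simp
    have h4 := intervalIntegral.norm_integral_le_of_norm_le_const (a := -π) (b := π) (C := M * η)
      (f := fun θ => eSum φ (Gs g mk θ) - eSum χ (Gs g mk θ)) (fun θ _ => by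
        rw [← hcm]; exact eSum_sub_le φ χ (hGH θ) η hb)
    rw [norm_inv, Complex.norm_real, Real.norm_of_nonneg (by positivity), inv_mul_le_iff₀ (by positivity)]
    refine h4.trans ?_
    rw [abs_of_nonneg (by linarith)]
    nlinarith [Real.pi_pos]


end

section

lemma uniq {K : Type*} [Fintype K] [DecidableEq K] (g : K → K → ℝ → ℂ)
    (hg : ∀ k l, IntervalIntegrable (g k l) volume (-π) π)
    (hH : ∀ k l θ, g l k θ = (starRingEnd ℂ) (g k l θ)) (hz : ∀ k l r, fc (g k l) r = 0) :
    ∀ᵐ θ ∂(volume.restrict (Set.Ioc (-π) π)), ∀ k l, g k l θ = 0 := by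
  have hpi : -π ≤ π := by linarith [Real.pi_pos]
  let ψ : ℝ → ℝ := fun x => max 0 (1 - |x|)
  let φ : ℝ → ℂ := fun x => (ψ x : ℂ)
  have hψ : Continuous ψ := by simp only [ψ]; fun_prop
  have hφ : Continuous φ := Complex.continuous_ofReal.comp hψ
  have hc : HasCompactSupport φ := by
    apply HasCompactSupport.of_support_subset_isCompact (isCompact_Icc (a := (-1 : ℝ)) (b := 1))
    intro x hx
    by_contra h
    apply hx
    simp only [φ, ψ]
    rw [Set.mem_Icc, ← abs_le, not_le] at h
    rw [max_eq_left (by linarith)]; simp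
  have hψ1 : ∀ x, ψ x ≤ 1 := fun x => max_le zero_le_one (by linarith [abs_nonneg x])
  have hψe : ∀ x, ψ x = 1 → x = 0 := by
    intro x hx
    simp only [ψ] at hx
    have : |x| ≤ 0 := by
      rcases max_cases 0 (1 - |x|) with h | h
      · rw [h.1] at hx; norm_num at hx
      · linarith
    exact abs_nonpos_iff.1 this
  have hGH : ∀ θ, (Gs g (fun _ => 1) θ).IsHermitian := fun θ => Gs_herm g _ θ fun k l => hH k l θ
  have hlim := theoremH g hg (fun _ => 1) hH (fun n _ => n) (fun n => n) tendsto_id (fun n k => by simp)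
    (fun k => by
      refine tendsto_const_nhds.congr' ?_
      filter_upwards [eventually_gt_atTop 0] with n hn
      have : (n : ℝ) ≠ 0 := by exact_mod_cast hn.ne'
      simp [this]) hφ hc
  have hTM : ∀ n : ℕ, eSum φ (TM g (fun _ => n)) = (Fintype.card K * n : ℂ) := by
    intro n
    have : TM g (fun _ => n) = 0 := by
      ext P Q; simp [TM, hz]
    rw [this]; unfold eSum; rw [eigSum_zero]
    simp [φ, ψ]
  have hlim2 : Tendsto (fun n : ℕ => (n : ℂ)⁻¹ * eSum φ (TM g (fun _ => n))) atTop (𝓝 (Fintype.card K : ℂ)) := by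
    refine tendsto_const_nhds.congr' ?_
    filter_upwards [eventually_gt_atTop 0] with n hn
    have : (n : ℂ) ≠ 0 := by exact_mod_cast hn.ne'
    rw [hTM]; field_simp
  have heq := tendsto_nhds_unique hlim hlim2
  have hi : IntervalIntegrable (fun θ => eSum φ (Gs g (fun _ => 1) θ)) volume (-π) π :=
    eSum_integrable g hg _ hH φ 1 (fun x => by
      simp only [φ, Complex.norm_real]
      rw [Real.norm_of_nonneg (le_max_left _ _)]; exact hψ1 x) (eSum_continuous hφ hc)
  let R : ℝ → ℝ := fun θ => ∑ i, (1 - ψ ((hGH θ).eigenvalues i))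
  have hR : ∀ θ, (R θ : ℂ) = (Fintype.card K : ℂ) - eSum φ (Gs g (fun _ => 1) θ) := by
    intro θ
    simp only [R]
    rw [eSum_herm _ (hGH θ), Finset.sum_sub_distrib]
    push_cast
    simp [φ]
  have hRi0 : IntervalIntegrable (fun θ => (R θ : ℂ)) volume (-π) π := by
    simp_rw [hR]
    exact (by simp : IntervalIntegrable (fun _ => (Fintype.card K : ℂ)) volume (-π) π).sub hi
  have hRc : ∫ θ in (-π)..π, (R θ : ℂ) = 0 := by
    simp_rw [hR]
    rw [intervalIntegral.integral_sub (by simp) hi]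
    have h2 : ((2 * π : ℝ) : ℂ) ≠ 0 := by exact_mod_cast (by positivity : (2 * π : ℝ) ≠ 0)
    rw [inv_mul_eq_iff_eq_mul₀ h2] at heq
    rw [heq, intervalIntegral.integral_const]
    simp only [Complex.real_smul]
    push_cast; ring
  have hRr : ∫ θ in Set.Ioc (-π) π, R θ = 0 := by
    rw [intervalIntegral.integral_ofReal, intervalIntegral.integral_of_le hpi] at hRc
    exact_mod_cast hRc
  have hRi : Integrable R (volume.restrict (Set.Ioc (-π) π)) := by
    have := (intervalIntegrable_iff_integrableOn_Ioc_of_le hpi).1 hRi0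
    have := this.re
    simpa using this
  have hR0 : 0 ≤ R := fun θ => Finset.sum_nonneg fun i _ => by linarith [hψ1 ((hGH θ).eigenvalues i)]
  have hae := (integral_eq_zero_iff_of_nonneg hR0 hRi).1 hRr
  filter_upwards [hae] with θ hθ k l
  have h1 : ∀ i, (hGH θ).eigenvalues i = 0 := by
    intro i
    have := (Finset.sum_eq_zero_iff_of_nonneg (fun i _ => by linarith [hψ1 ((hGH θ).eigenvalues i)])).1 hθ i (Finset.mem_univ i)
    exact hψe _ (by linarith)
  have h2 : Gs g (fun _ => 1) θ = 0 := (hGH θ).eigenvalues_eq_zero_iff.1 (funext h1)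
  have h3 := congrFun (congrFun h2 ⟨k, 0⟩) ⟨l, 0⟩
  simpa [Gs] using h3

lemma exists_N {ν m : ℕ} (hm : 0 < m) (mj : Fin ν → ℕ) (hmj : ∀ j, 0 < mj j)
    (nsz : ℕ → Fin ν → ℕ)
    (htot : Tendsto (fun n => ∑ i, nsz n i) atTop atTop)
    (hratio : ∀ j, Tendsto (fun n => (nsz n j : ℝ) / ((∑ i, nsz n i : ℕ) : ℝ))
      atTop (𝓝 ((mj j : ℝ) / (m : ℝ)))) :
    ∃ N : ℕ → ℕ, Tendsto N atTop atTop ∧ (∀ n j, nsz n j ≤ mj j * N n) ∧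
      (∀ j, Tendsto (fun n => (nsz n j : ℝ) / N n) atTop (𝓝 (mj j))) ∧
      Tendsto (fun n => (N n : ℝ) / ((∑ i, nsz n i : ℕ) : ℝ)) atTop (𝓝 ((m : ℝ)⁻¹)) := by
  have hm' : (0 : ℝ) < m := by exact_mod_cast hm
  set T : ℕ → ℝ := fun n => ((∑ i, nsz n i : ℕ) : ℝ) with hT
  have hT0 : ∀ n, 0 ≤ T n := fun n => Nat.cast_nonneg _
  have hTtop : Tendsto T atTop atTop := tendsto_natCast_atTop_atTop.comp htot
  set x : ℕ → ℝ := fun n => T n / m + ∑ j, |(nsz n j : ℝ) - mj j * (T n / m)| with hx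
  have hxT : ∀ n, T n / m ≤ x n := fun n => by
    have : 0 ≤ ∑ j, |(nsz n j : ℝ) - mj j * (T n / m)| := Finset.sum_nonneg fun _ _ => abs_nonneg _
    simp only [hx]; linarith
  have hx0 : ∀ n, 0 ≤ x n := fun n => le_trans (by have := hT0 n; positivity) (hxT n)
  set N : ℕ → ℕ := fun n => ⌈x n⌉₊ with hN
  have hNx : ∀ n, x n ≤ N n := fun n => Nat.le_ceil _
  have hNx1 : ∀ n, (N n : ℝ) ≤ x n + 1 := fun n => (Nat.ceil_lt_add_one (hx0 n)).le
  have hNtop : Tendsto N atTop atTop := by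
    rw [← tendsto_natCast_atTop_iff (R := ℝ)]
    exact tendsto_atTop_mono (fun n => (hxT n).trans (hNx n)) (hTtop.atTop_div_const hm')
  have hTpos : ∀ᶠ n in atTop, 0 < T n := hTtop.eventually_gt_atTop 0
  have hxlim : Tendsto (fun n => x n / T n) atTop (𝓝 ((m : ℝ)⁻¹)) := by
    have h1 : Tendsto (fun n => (m : ℝ)⁻¹ + ∑ j, |(nsz n j : ℝ) / T n - mj j / m|) atTop
        (𝓝 ((m : ℝ)⁻¹ + ∑ j : Fin ν, |(mj j : ℝ) / m - mj j / m|)) :=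
      tendsto_const_nhds.add (tendsto_finsetSum _ fun j _ => ((hratio j).sub tendsto_const_nhds).abs)
    simp only [sub_self, abs_zero, Finset.sum_const_zero, add_zero] at h1
    refine h1.congr' ?_
    filter_upwards [hTpos] with n hn
    simp only [hx]
    rw [add_div, Finset.sum_div]
    congr 1
    · field_simp
    · refine Finset.sum_congr rfl fun j _ => ?_
      rw [← abs_of_pos hn, ← abs_div, abs_of_pos hn]
      congr 1
      field_simp
  have hNT : Tendsto (fun n => (N n : ℝ) / T n) atTop (𝓝 ((m : ℝ)⁻¹)) := by
    have h2 : Tendsto (fun n => x n / T n + (T n)⁻¹) atTop (𝓝 ((m : ℝ)⁻¹)) := by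
      simpa using hxlim.add (tendsto_inv_atTop_zero.comp hTtop)
    refine tendsto_of_tendsto_of_tendsto_of_le_of_le hxlim h2 (fun n => ?_) (fun n => ?_)
    · exact div_le_div_of_nonneg_right (hNx n) (hT0 n)
    · have := div_le_div_of_nonneg_right (hNx1 n) (hT0 n)
      rw [add_div, one_div] at this
      exact this
  refine ⟨N, hNtop, ?_, ?_, hNT⟩
  · intro n j
    have h1 : (1 : ℝ) ≤ mj j := by exact_mod_cast hmj j
    have h2 : |(nsz n j : ℝ) - mj j * (T n / m)| ≤ ∑ j, |(nsz n j : ℝ) - mj j * (T n / m)| :=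
      Finset.single_le_sum (f := fun j => |(nsz n j : ℝ) - mj j * (T n / m)|) (fun _ _ => abs_nonneg _) (Finset.mem_univ j)
    have h3 := le_abs_self ((nsz n j : ℝ) - mj j * (T n / m))
    have h4 : (nsz n j : ℝ) ≤ mj j * x n := by
      simp only [hx]
      nlinarith [abs_nonneg ((nsz n j : ℝ) - mj j * (T n / m))]
    have h5 : (nsz n j : ℝ) ≤ mj j * N n := h4.trans (mul_le_mul_of_nonneg_left (hNx n) (by linarith))
    exact_mod_cast h5
  · intro j
    have h1 := (hratio j).div hNT (inv_ne_zero hm'.ne')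
    have h2 : (mj j : ℝ) / m / (m : ℝ)⁻¹ = mj j := by field_simp
    rw [h2] at h1
    refine h1.congr' ?_
    filter_upwards [hTpos] with n hn
    simp only [Pi.div_apply]
    rw [div_div_div_cancel_right₀ hn.ne']


end

section

/-- Scalar index regrouping. -/
def sqE (ν s : ℕ) (ns : Fin ν → ℕ) :
    ((i : Fin ν) × (Fin (ns i) × Fin s)) ≃ ((k : Fin ν × Fin s) × Fin (ns k.1)) where
  toFun P := ⟨(P.1, P.2.2), P.2.1⟩
  invFun Q := ⟨Q.1.1, (Q.2, Q.1.2)⟩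
  left_inv _ := rfl
  right_inv _ := rfl

/-- Sizes for the dilation. -/
def dsz (ν s t : ℕ) (ns : Fin ν → ℕ) : (Fin ν × Fin s) ⊕ (Fin ν × Fin t) → ℕ :=
  Sum.elim (fun p => ns p.1) (fun p => ns p.1)

/-- Scalar index regrouping for the dilation. -/
def dlE (ν s t : ℕ) (ns : Fin ν → ℕ) :
    ((i : Fin ν) × (Fin (ns i) × Fin s)) ⊕ ((i : Fin ν) × (Fin (ns i) × Fin t)) ≃
      ((k : (Fin ν × Fin s) ⊕ (Fin ν × Fin t)) × Fin (dsz ν s t ns k)) where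
  toFun := fun
    | Sum.inl P => ⟨Sum.inl (P.1, P.2.2), P.2.1⟩
    | Sum.inr P => ⟨Sum.inr (P.1, P.2.2), P.2.1⟩
  invFun := fun
    | ⟨Sum.inl k, x⟩ => Sum.inl ⟨k.1, (x, k.2)⟩
    | ⟨Sum.inr k, x⟩ => Sum.inr ⟨k.1, (x, k.2)⟩
  left_inv := by rintro (_ | _) <;> rfl
  right_inv := by rintro ⟨_ | _, _⟩ <;> rfl

/-- Symbols of the dilation. -/
def dlg {ν s t : ℕ} (f : Fin ν → Fin ν → ℝ → Matrix (Fin s) (Fin t) ℂ) :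
    (Fin ν × Fin s) ⊕ (Fin ν × Fin t) → (Fin ν × Fin s) ⊕ (Fin ν × Fin t) → ℝ → ℂ
  | Sum.inl _, Sum.inl _ => fun _ => 0
  | Sum.inl p, Sum.inr q => fun θ => f p.1 q.1 θ p.2 q.2
  | Sum.inr q, Sum.inl p => fun θ => (starRingEnd ℂ) (f p.1 q.1 θ p.2 q.2)
  | Sum.inr _, Sum.inr _ => fun _ => 0

lemma dlg_herm {ν s t : ℕ} (f : Fin ν → Fin ν → ℝ → Matrix (Fin s) (Fin t) ℂ) (k l) (θ : ℝ) :
    dlg f l k θ = (starRingEnd ℂ) (dlg f k l θ) := by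
  rcases k with k | k <;> rcases l with l | l <;> simp [dlg]

lemma ii_conj {g : ℝ → ℂ} (hg : IntervalIntegrable g volume (-π) π) :
    IntervalIntegrable (fun θ => (starRingEnd ℂ) (g θ)) volume (-π) π := by
  have hle : -π ≤ π := by linarith [Real.pi_pos]
  rw [intervalIntegrable_iff_integrableOn_Ioc_of_le hle] at hg ⊢
  exact (Complex.conjCLE : ℂ →L[ℝ] ℂ).integrable_comp hg

lemma dlg_int {ν s t : ℕ} (f : Fin ν → Fin ν → ℝ → Matrix (Fin s) (Fin t) ℂ)
    (hf : ∀ i j a b, IntervalIntegrable (fun θ => f i j θ a b) volume (-π) π) (k l) :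
    IntervalIntegrable (dlg f k l) volume (-π) π := by
  rcases k with k | k <;> rcases l with l | l
  · simp [dlg]
  · exact hf _ _ _ _
  · exact ii_conj (hf _ _ _ _)
  · simp [dlg]

lemma fc_zero (k : ℤ) : fc (fun _ => 0) k = 0 := by simp [fc]

lemma dl_TM {ν s t : ℕ} (f : Fin ν → Fin ν → ℝ → Matrix (Fin s) (Fin t) ℂ) (ns : Fin ν → ℕ) :
    (TM (dlg f) (dsz ν s t ns)).submatrix (dlE ν s t ns) (dlE ν s t ns) =
      dil (blockMat ν s t f ns) := by
  ext P Q
  rcases P with P | P <;> rcases Q with Q | Q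
  · exact fc_zero _
  · rfl
  · show fc _ _ = star (fc _ _)
    simp only [dlE, dlg, Equiv.coe_fn_mk]
    rw [fc_conj]
    simp
  · exact fc_zero _

lemma dl_Gs {ν s t : ℕ} (f : Fin ν → Fin ν → ℝ → Matrix (Fin s) (Fin t) ℂ) (ns : Fin ν → ℕ)
    (θ : ℝ) :
    (Gs (dlg f) (dsz ν s t ns) θ).submatrix (dlE ν s t ns) (dlE ν s t ns) =
      dil (generalSymbol ν s t f ns θ) := by
  ext P Q
  rcases P with P | P <;> rcases Q with Q | Q
  · simp [Gs, dil, dlE, dlg]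
  · rfl
  · simp [Gs, dil, dlE, dlg, generalSymbol, apply_ite (starRingEnd ℂ), eq_comm]
  · simp [Gs, dil, dlE, dlg]

lemma card_idx (ν s : ℕ) (ns : Fin ν → ℕ) :
    Fintype.card ((i : Fin ν) × (Fin (ns i) × Fin s)) = (∑ i, ns i) * s := by
  simp [Finset.sum_mul]

lemma vol_eq : ((volume (Set.Icc (-π) π)).toReal : ℂ) = ((2 * π : ℝ) : ℂ) := by
  rw [Real.volume_Icc, ENNReal.toReal_ofReal (by linarith [Real.pi_pos])]
  congr 1; ring

lemma int_Icc (h : ℝ → ℂ) : ∫ θ in Set.Icc (-π) π, h θ = ∫ θ in (-π)..π, h θ := by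
  rw [integral_Icc_eq_integral_Ioc, intervalIntegral.integral_of_le (by linarith [Real.pi_pos])]

lemma sv_eq {ν s t : ℕ} (f : Fin ν → Fin ν → ℝ → Matrix (Fin s) (Fin t) ℂ) (ns : Fin ν → ℕ)
    (F : ℝ → ℂ) (A : Matrix ((i : Fin ν) × (Fin (ns i) × Fin s)) ((i : Fin ν) × (Fin (ns i) × Fin t)) ℂ)
    (B) (h : (B : Matrix _ _ ℂ).submatrix (dlE ν s t ns) (dlE ν s t ns) = dil A) :
    svSum F A = (eSum (fun x => F |x|) B -
      ((∑ i, ns i : ℕ) : ℂ) * ((s : ℂ) + t - 2 * ((min s t : ℕ) : ℂ)) * F 0) / 2 := by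
  have h1 := svSum_dil F A
  rw [← h] at h1
  unfold eSum at h1 ⊢
  rw [eigSum_submatrix, card_idx, card_idx, Nat.mul_min_mul_left] at h1
  rw [h1]
  push_cast
  ring

lemma sv_part
    (ν s t m : ℕ) (hs : 0 < s) (ht : 0 < t) (hm : 0 < m)
    (mj : Fin ν → ℕ) (hmj : ∀ j, 0 < mj j) (hmsum : ∑ j, mj j = m)
    (f : Fin ν → Fin ν → ℝ → Matrix (Fin s) (Fin t) ℂ)
    (hf : ∀ i j a b, IntervalIntegrable (fun θ => f i j θ a b) volume (-π) π)
    (nsz : ℕ → Fin ν → ℕ)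
    (htot : Tendsto (fun n => ∑ i, nsz n i) atTop atTop)
    (hratio : ∀ j, Tendsto (fun n => (nsz n j : ℝ) / ((∑ i, nsz n i : ℕ) : ℝ))
      atTop (𝓝 ((mj j : ℝ) / (m : ℝ)))) :
    DistributedSV (Set.Icc (-π) π) (generalSymbol ν s t f mj)
      (fun n => blockMat ν s t f (nsz n)) := by
  intro F hF hFc
  obtain ⟨N, hN, hle, hlim, hNt⟩ := exists_N hm mj hmj nsz htot hratio
  have hφ : Continuous fun x : ℝ => F |x| := hF.comp continuous_abs
  have hc : HasCompactSupport fun x : ℝ => F |x| := by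
    obtain ⟨R, hR⟩ := hFc.isCompact.isBounded.subset_closedBall 0
    refine HasCompactSupport.of_support_subset_isCompact (isCompact_closedBall (0 : ℝ) R) ?_
    intro x hx
    have := hR (subset_tsupport _ hx)
    simpa using this
  obtain ⟨B, hB⟩ := hφ.bounded_above_of_compact_support hc
  have hT := theoremH (dlg f) (dlg_int f hf) (dsz ν s t mj) (dlg_herm f)
    (fun n => dsz ν s t (nsz n)) N hN
    (by rintro n (k | k) <;> exact hle n _) (by rintro (k | k) <;> exact hlim _) hφ hc
  have hi := eSum_integrable (dlg f) (dlg_int f hf) (dsz ν s t mj) (dlg_herm f)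
    (fun x => F |x|) B hB (eSum_continuous hφ hc)
  have hm' : (m : ℂ) ≠ 0 := by exact_mod_cast hm.ne'
  have hmin : ((min s t : ℕ) : ℂ) ≠ 0 := by
    have : 0 < min s t := lt_min hs ht
    exact_mod_cast this.ne'
  have hpi : ((2 * π : ℝ) : ℂ) ≠ 0 := by exact_mod_cast (by positivity : (2 * π : ℝ) ≠ 0)
  have hNt' : Tendsto (fun n => (N n : ℂ) / ((∑ i, nsz n i : ℕ) : ℂ)) atTop (𝓝 ((m : ℂ)⁻¹)) := by
    have := (Complex.continuous_ofReal.tendsto _).comp hNt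
    simpa [Function.comp_def] using this
  set c : ℂ := ((s : ℂ) + t - 2 * ((min s t : ℕ) : ℂ)) * F 0 with hcdef
  have hmain := (((hNt'.mul hT).sub_const c).const_mul (((min s t : ℕ) : ℂ)⁻¹ / 2))
  have hval : (((volume (Set.Icc (-π) π)).toReal : ℂ)⁻¹ *
        ∫ θ in Set.Icc (-π) π, ((min (Fintype.card ((j : Fin ν) × (Fin (mj j) × Fin s)))
          (Fintype.card ((j : Fin ν) × (Fin (mj j) × Fin t))) : ℕ) : ℂ)⁻¹ *
            svSum F (generalSymbol ν s t f mj θ)) =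
      ((min s t : ℕ) : ℂ)⁻¹ / 2 * ((m : ℂ)⁻¹ * (((2 * π : ℝ) : ℂ)⁻¹ *
        ∫ θ in (-π)..π, eSum (fun x => F |x|) (Gs (dlg f) (dsz ν s t mj) θ)) - c) := by
    rw [vol_eq, int_Icc, card_idx, card_idx, Nat.mul_min_mul_left, hmsum]
    have : ∀ θ, svSum F (generalSymbol ν s t f mj θ) =
        (eSum (fun x => F |x|) (Gs (dlg f) (dsz ν s t mj) θ) - (m : ℂ) * c) / 2 := by
      intro θ
      rw [sv_eq f mj F _ _ (dl_Gs f mj θ), hmsum, hcdef]; ring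
    simp_rw [this]
    rw [intervalIntegral.integral_const_mul, intervalIntegral.integral_div,
      intervalIntegral.integral_sub hi (by simp), intervalIntegral.integral_const]
    have e : (π - -π) • ((m : ℂ) * c) = ((2 * π : ℝ) : ℂ) * ((m : ℂ) * c) := by
      rw [Complex.real_smul]; congr 2; ring
    rw [e]
    push_cast at hpi hmin ⊢
    field_simp
  rw [hval]
  refine hmain.congr' ?_
  filter_upwards [htot.eventually_gt_atTop 0, hN.eventually_gt_atTop 0] with n hn hn2
  have hn' : ((∑ i, nsz n i : ℕ) : ℂ) ≠ 0 := by exact_mod_cast hn.ne'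
  have hn2' : (N n : ℂ) ≠ 0 := by exact_mod_cast hn2.ne'
  rw [card_idx, card_idx, Nat.mul_min_mul_left, sv_eq f (nsz n) F _ _ (dl_TM f (nsz n)), mul_assoc _ _ (F 0), ← hcdef]
  generalize (∑ i, nsz n i) = T at hn' ⊢
  push_cast at hmin ⊢
  field_simp

lemma cs_ofReal {F : ℂ → ℂ} (hc : HasCompactSupport F) :
    HasCompactSupport fun x : ℝ => F (x : ℂ) :=
  hc.comp_isClosedEmbedding Complex.isometry_ofReal.isClosedEmbedding

lemma eig_eq_eSum {ι : Type*} [Fintype ι] [DecidableEq ι] (F : ℂ → ℂ) {A : Matrix ι ι ℂ}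
    (hA : A.IsHermitian) : eigSum F A = eSum (fun x => F (x : ℂ)) A := by
  rw [eigSum_herm _ hA, eSum_herm _ hA]

lemma eig_part
    (ν s m : ℕ) (hs : 0 < s) (hm : 0 < m)
    (mj : Fin ν → ℕ) (hmj : ∀ j, 0 < mj j) (hmsum : ∑ j, mj j = m)
    (f : Fin ν → Fin ν → ℝ → Matrix (Fin s) (Fin s) ℂ)
    (hf : ∀ i j a b, IntervalIntegrable (fun θ => f i j θ a b) volume (-π) π)
    (nsz : ℕ → Fin ν → ℕ)
    (htot : Tendsto (fun n => ∑ i, nsz n i) atTop atTop)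
    (hratio : ∀ j, Tendsto (fun n => (nsz n j : ℝ) / ((∑ i, nsz n i : ℕ) : ℝ))
      atTop (𝓝 ((mj j : ℝ) / (m : ℝ))))
    (hA : ∀ n, (blockMat ν s s f (nsz n)).IsHermitian) :
    DistributedEig (Set.Icc (-π) π) (generalSymbol ν s s f mj)
      (fun n => blockMat ν s s f (nsz n)) := by
  intro F hF hFc
  obtain ⟨N, hN, hle, hlim, hNt⟩ := exists_N hm mj hmj nsz htot hratio
  have hφ : Continuous fun x : ℝ => F (x : ℂ) := hF.comp Complex.continuous_ofReal
  have hc := cs_ofReal hFc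
  set g0 : (Fin ν × Fin s) → (Fin ν × Fin s) → ℝ → ℂ := fun k l θ => f k.1 l.1 θ k.2 l.2 with hg0
  have hg0i : ∀ k l, IntervalIntegrable (g0 k l) volume (-π) π := fun k l => hf _ _ _ _
  set g1 : (Fin ν × Fin s) → (Fin ν × Fin s) → ℝ → ℂ :=
    fun k l θ => (1 / 2 : ℂ) * (g0 k l θ + (starRingEnd ℂ) (g0 l k θ)) with hg1
  have hg1i : ∀ k l, IntervalIntegrable (g1 k l) volume (-π) π := fun k l =>
    ((hg0i k l).add (ii_conj (hg0i l k))).const_mul _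
  have hg1H : ∀ k l θ, g1 l k θ = (starRingEnd ℂ) (g1 k l θ) := by
    intro k l θ; simp only [hg1, Pi.smul_apply, smul_eq_mul, map_mul, map_add, map_sub, Complex.conj_conj, Complex.conj_I, map_div₀, map_one, map_ofNat]; ring
  -- sizes go to infinity
  have hbig : ∀ j (M : ℕ), ∀ᶠ n in atTop, M < nsz n j := by
    intro j M
    have h1 : Tendsto (fun n => ((nsz n j : ℝ) / N n) * N n) atTop atTop :=
      Tendsto.pos_mul_atTop (by exact_mod_cast hmj j) (hlim j) (tendsto_natCast_atTop_atTop.comp hN)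
    filter_upwards [h1.eventually_gt_atTop (M : ℝ), hN.eventually_gt_atTop 0] with n h2 h3
    have h3' : (N n : ℝ) ≠ 0 := by exact_mod_cast h3.ne'
    rw [div_mul_cancel₀ _ h3'] at h2
    exact_mod_cast h2
  have hsym : ∀ k l r, fc (g0 l k) r = (starRingEnd ℂ) (fc (g0 k l) (-r)) := by
    intro k l r
    obtain ⟨n, h1, h2⟩ := ((hbig l.1 r.natAbs).and (hbig k.1 r.natAbs)).exists
    have key : ∀ (p : Fin (nsz n l.1)) (q : Fin (nsz n k.1)), ((p : ℕ) : ℤ) - ((q : ℕ) : ℤ) = r →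
        fc (g0 l k) r = (starRingEnd ℂ) (fc (g0 k l) (-r)) := by
      intro p q hpq
      have h := (hA n).apply ⟨l.1, (p, l.2)⟩ ⟨k.1, (q, k.2)⟩
      have h' : star (fc (g0 k l) (((q : ℕ) : ℤ) - ((p : ℕ) : ℤ))) =
        fc (g0 l k) (((p : ℕ) : ℤ) - ((q : ℕ) : ℤ)) := h
      rw [← hpq, ← h']; simp
    rcases le_total 0 r with hr | hr
    · exact key ⟨r.natAbs, h1⟩ ⟨0, by omega⟩ (by show ((r.natAbs : ℕ) : ℤ) - ((0 : ℕ) : ℤ) = r; omega)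
    · exact key ⟨0, by omega⟩ ⟨r.natAbs, h2⟩ (by show ((0 : ℕ) : ℤ) - ((r.natAbs : ℕ) : ℤ) = r; omega)
  have hfc1 : ∀ k l r, fc (g1 k l) r = fc (g0 k l) r := by
    intro k l r
    have e : g1 k l = (1 / 2 : ℂ) • (g0 k l + fun θ => (starRingEnd ℂ) (g0 l k θ)) := rfl
    rw [e, fc_smul, fc_add (hg0i k l) (ii_conj (hg0i l k)), fc_conj, ← hsym]
    ring
  have hTM : ∀ n, (TM g1 (fun k => nsz n k.1)).submatrix (sqE ν s (nsz n)) (sqE ν s (nsz n)) =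
      blockMat ν s s f (nsz n) := by
    intro n; ext P Q
    exact hfc1 _ _ _
  have hae : ∀ᵐ θ ∂(volume.restrict (Set.Ioc (-π) π)), ∀ k l, g0 k l θ = g1 k l θ := by
    have := uniq (fun k l => Complex.I • (fun θ => g0 k l θ - g1 k l θ))
      (fun k l => ((hg0i k l).sub (hg1i k l)).const_mul _)
      (by
        intro k l θ
        simp only [hg1, Pi.smul_apply, smul_eq_mul, map_mul, map_add, map_sub, Complex.conj_conj, Complex.conj_I, map_div₀, map_one, map_ofNat]; ring)
      (by
        intro k l r
        rw [fc_smul, fc_sub (hg0i k l) (hg1i k l), hfc1]; simp)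
    filter_upwards [this] with θ hθ k l
    have := hθ k l
    simp only [Pi.smul_apply, smul_eq_mul, mul_eq_zero, Complex.I_ne_zero, false_or] at this
    exact sub_eq_zero.mp this
  have hT := theoremH g1 hg1i (fun k => mj k.1) hg1H
    (fun n k => nsz n k.1) N hN (fun n k => hle n _) (fun k => hlim _) hφ hc
  have hm' : (m : ℂ) ≠ 0 := by exact_mod_cast hm.ne'
  have hs' : (s : ℂ) ≠ 0 := by exact_mod_cast hs.ne'
  have hNt' : Tendsto (fun n => (N n : ℂ) / ((∑ i, nsz n i : ℕ) : ℂ)) atTop (𝓝 ((m : ℂ)⁻¹)) := by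
    have := (Complex.continuous_ofReal.tendsto _).comp hNt
    simpa [Function.comp_def] using this
  have hmain := (hNt'.mul hT).const_mul ((s : ℂ)⁻¹)
  have hval : (((volume (Set.Icc (-π) π)).toReal : ℂ)⁻¹ *
        ∫ θ in Set.Icc (-π) π, ((Fintype.card ((j : Fin ν) × (Fin (mj j) × Fin s)) : ℕ) : ℂ)⁻¹ *
            eigSum F (generalSymbol ν s s f mj θ)) =
      (s : ℂ)⁻¹ * ((m : ℂ)⁻¹ * (((2 * π : ℝ) : ℂ)⁻¹ *
        ∫ θ in (-π)..π, eSum (fun x => F (x : ℂ)) (Gs g1 (fun k => mj k.1) θ))) := by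
    rw [vol_eq, int_Icc, card_idx, hmsum, intervalIntegral.integral_const_mul]
    have : ∫ θ in (-π)..π, eigSum F (generalSymbol ν s s f mj θ) =
        ∫ θ in (-π)..π, eSum (fun x => F (x : ℂ)) (Gs g1 (fun k => mj k.1) θ) := by
      have hle' : -π ≤ π := by linarith [Real.pi_pos]
      rw [intervalIntegral.integral_of_le hle', intervalIntegral.integral_of_le hle']
      refine integral_congr_ae ?_
      filter_upwards [hae] with θ hθ
      have h1 : generalSymbol ν s s f mj θ =
          (Gs g1 (fun k => mj k.1) θ).submatrix (sqE ν s mj) (sqE ν s mj) := by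
        ext P Q
        show (if _ then g0 (P.1, P.2.2) (Q.1, Q.2.2) θ else 0) = _
        rw [hθ]; rfl
      rw [h1, eigSum_submatrix, eig_eq_eSum F (Gs_herm g1 _ θ fun k l => hg1H k l θ)]
    rw [this]
    push_cast
    rw [mul_inv]; ring
  rw [hval]
  refine hmain.congr' ?_
  filter_upwards [htot.eventually_gt_atTop 0, hN.eventually_gt_atTop 0] with n hn hn2
  have hn' : ((∑ i, nsz n i : ℕ) : ℂ) ≠ 0 := by exact_mod_cast hn.ne'
  have hn2' : (N n : ℂ) ≠ 0 := by exact_mod_cast hn2.ne'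
  rw [card_idx, ← hTM, eigSum_submatrix, eig_eq_eSum F (TM_herm g1 _ hg1H)]
  generalize (∑ i, nsz n i) = T at hn' ⊢
  push_cast
  field_simp


end

/-- main distribution theorem, rational case: if the block sizes
satisfy `n_i/n → c_i = m_i/m ∈ (0,1)` with `m_1 + ⋯ + m_ν = m` and `n → ∞`, then
`{A_n}_n ∼_σ F` with `F = (E_{j,k})_{j,k=1}^ν`, and `{A_n}_n ∼_λ F` when every `A_n`
is Hermitian. -/
theorem general_rational_distribution
    (ν s t m : ℕ) (hν : 2 ≤ ν) (hs : 0 < s) (ht : 0 < t) (hm : 0 < m)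
    (mj : Fin ν → ℕ) (hmj : ∀ j, 0 < mj j) (hmsum : ∑ j, mj j = m)
    (f : Fin ν → Fin ν → ℝ → Matrix (Fin s) (Fin t) ℂ)
    (hf : ∀ i j a b, IntervalIntegrable (fun θ => f i j θ a b) volume (-π) π)
    (nsz : ℕ → Fin ν → ℕ)
    (htot : Tendsto (fun n => ∑ i, nsz n i) atTop atTop)
    (hratio : ∀ j, Tendsto (fun n => (nsz n j : ℝ) / ((∑ i, nsz n i : ℕ) : ℝ))
      atTop (𝓝 ((mj j : ℝ) / (m : ℝ)))) :
    DistributedSV (Set.Icc (-π) π) (generalSymbol ν s t f mj)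
      (fun n => blockMat ν s t f (nsz n)) ∧
    (∀ hst : s = t,
      (∀ n, ((blockMat ν s t f (nsz n)).submatrix id
        (sigCast ν s t (nsz n) hst)).IsHermitian) →
      DistributedEig (Set.Icc (-π) π)
        (fun θ => (generalSymbol ν s t f mj θ).submatrix id (sigCast ν s t mj hst))
        (fun n => (blockMat ν s t f (nsz n)).submatrix id
          (sigCast ν s t (nsz n) hst))) := by
  refine ⟨sv_part ν s t m hs ht hm mj hmj hmsum f hf nsz htot hratio, ?_⟩
  rintro rfl hA
  exact eig_part ν s m hs hm mj hmj hmsum f hf nsz htot hratio hA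

end
end

section
/- Let {X_n}_n and {Y_n}_n be two sequences of complex matrices of the same sizes d_n × e_n with min{d_n,e_n} → ∞, and suppose the difference sequence is zero-distributed: {X_n − Y_n}_n ∼_σ 0. Then for any measurable G : Ω → ℂ^{s×t} on a measurable set Ω ⊆ ℝ^ℓ with 0 < m_ℓ(Ω) < ∞: {X_n}_n ∼_σ G if and only if {Y_n}_n ∼_σ G. If in addition all X_n and Y_n are Hermitian, then also {X_n}_n ∼_λ G if and only if {Y_n}_n ∼_λ G. -/
open MeasureTheory Filter Topology Matrix
open scoped Real

noncomputable section

lemma mono_core (N k : ℕ) (a b : ℕ → ℝ) (ε η C : ℝ) (F : ℝ → ℝ) (hF : Monotone F)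
    (hη0 : 0 ≤ η)
    (hC : ∀ x, |F x| ≤ C) (hη : ∀ x, F (x + ε) ≤ F x + η)
    (h : ∀ i, i + k < N → a (i + k) ≤ b i + ε) :
    ∑ i ∈ Finset.range N, F (a i) - ∑ i ∈ Finset.range N, F (b i) ≤ 2 * k * C + N * η := by
  have hC0 : 0 ≤ C := (abs_nonneg _).trans (hC 0)
  have up : ∀ (S : Finset ℕ) (c : ℕ → ℝ), ∑ i ∈ S, F (c i) ≤ S.card * C := by
    intro S c
    have := Finset.sum_le_card_nsmul S (fun i => F (c i)) C (fun i _ => (abs_le.1 (hC _)).2)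
    simpa using this
  have lo : ∀ (S : Finset ℕ) (c : ℕ → ℝ), -(S.card * C) ≤ ∑ i ∈ S, F (c i) := by
    intro S c
    have := Finset.card_nsmul_le_sum S (fun i => F (c i)) (-C) (fun i _ => (abs_le.1 (hC _)).1)
    simpa using this
  rcases le_total N k with hNk | hkN
  · have h1 := up (Finset.range N) a
    have h2 := lo (Finset.range N) b
    rw [Finset.card_range] at h1 h2
    have : (N : ℝ) * C ≤ k * C := by gcongr
    have : 0 ≤ (N : ℝ) * η := by positivity
    linarith
  · obtain ⟨r, rfl⟩ := Nat.exists_eq_add_of_le hkN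
    have h1 : ∑ i ∈ Finset.range (k + r), F (a i)
        = ∑ i ∈ Finset.range k, F (a i) + ∑ i ∈ Finset.range r, F (a (k + i)) :=
      Finset.sum_range_add (fun i => F (a i)) k r
    have h2 : ∑ i ∈ Finset.range (k + r), F (b i)
        = ∑ i ∈ Finset.range r, F (b i) + ∑ i ∈ Finset.range k, F (b (r + i)) := by
      rw [add_comm k r]; exact Finset.sum_range_add (fun i => F (b i)) r k
    have h3 : ∑ i ∈ Finset.range r, F (a (k + i)) ≤ ∑ i ∈ Finset.range r, (F (b i) + η) := by
      apply Finset.sum_le_sum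
      intro i hi
      have := h i (by have := Finset.mem_range.1 hi; omega)
      rw [add_comm i k] at this
      exact (hF this).trans (hη _)
    rw [Finset.sum_add_distrib] at h3
    have h4 := up (Finset.range k) a
    have h5 := lo (Finset.range k) (fun i => b (r + i))
    simp only [Finset.sum_const, Finset.card_range, nsmul_eq_mul] at h3 h4 h5
    have : 0 ≤ (k : ℝ) * η := by positivity
    push_cast
    rw [h1, h2]
    linarith

def CloseSeq (N : ℕ → ℕ) (a b : ℕ → ℕ → ℝ) : Prop :=
  ∀ ε : ℝ, 0 < ε → ∃ k : ℕ → ℕ, Tendsto (fun n => (k n : ℝ) / N n) atTop (𝓝 0) ∧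
    ∀ n i, i + k n < N n → a n (i + k n) ≤ b n i + ε ∧ b n (i + k n) ≤ a n i + ε

lemma good_mono {N : ℕ → ℕ} {a b : ℕ → ℕ → ℝ} (hc : CloseSeq N a b) (h : ℝ → ℝ)
    (hm : Monotone h) (C L : ℝ) (hL0 : 0 ≤ L) (hC : ∀ x, |h x| ≤ C)
    (hL : ∀ x y, |h x - h y| ≤ L * |x - y|) :
    Tendsto (fun n => (N n : ℝ)⁻¹ * (∑ i ∈ Finset.range (N n), h (a n i) -
      ∑ i ∈ Finset.range (N n), h (b n i))) atTop (𝓝 0) := by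
  rw [Metric.tendsto_atTop']
  intro δ hδ
  set ε := δ / (2 * (L + 1)) with hε
  have hε0 : 0 < ε := by positivity
  have hLε : L * ε < δ / 2 := by
    rw [hε, ← mul_div_assoc, div_lt_div_iff₀ (by positivity) (by positivity)]
    nlinarith
  obtain ⟨k, hk, hab⟩ := hc ε hε0
  have hk2 : Tendsto (fun n => 2 * C * ((k n : ℝ) / N n)) atTop (𝓝 0) := by
    simpa using hk.const_mul (2 * C)
  have ev := hk2.eventually (gt_mem_nhds (half_pos hδ))
  obtain ⟨n0, hn0⟩ := eventually_atTop.1 ev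
  refine ⟨n0, fun n hn => ?_⟩
  have hn1 := hn0 n hn.le
  have hη : ∀ x, h (x + ε) ≤ h x + L * ε := by
    intro x
    have := (abs_le.1 (hL (x + ε) x)).2
    rw [add_sub_cancel_left, abs_of_pos hε0] at this
    linarith
  have e1 := mono_core (N n) (k n) (a n) (b n) ε (L * ε) C h hm (by positivity) hC hη
    (fun i hi => (hab n i hi).1)
  have e2 := mono_core (N n) (k n) (b n) (a n) ε (L * ε) C h hm (by positivity) hC hη
    (fun i hi => (hab n i hi).2)
  rw [Real.dist_eq, sub_zero, abs_mul, abs_of_nonneg (by positivity)]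
  have e3 : |∑ i ∈ Finset.range (N n), h (a n i) - ∑ i ∈ Finset.range (N n), h (b n i)|
      ≤ 2 * k n * C + N n * (L * ε) := abs_le.2 ⟨by linarith, e1⟩
  calc _ ≤ (N n : ℝ)⁻¹ * (2 * k n * C + N n * (L * ε)) := by gcongr
    _ = 2 * C * ((k n : ℝ) / N n) + ((N n : ℝ)⁻¹ * N n) * (L * ε) := by ring
    _ ≤ 2 * C * ((k n : ℝ) / N n) + 1 * (L * ε) := by
        gcongr
        exact inv_mul_le_one
    _ < δ := by linarith

/-- clamp to `[-M,M]` -/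
def clampM (M x : ℝ) : ℝ := max (-M) (min x M)

lemma clamp_mem {M : ℝ} (hM : 0 ≤ M) (x : ℝ) : clampM M x ∈ Set.Icc (-M) M :=
  ⟨le_max_left _ _, max_le (by linarith) (min_le_right _ _)⟩

lemma clamp_mono (M : ℝ) : Monotone (clampM M) := by
  intro x y hxy
  unfold clampM
  gcongr

lemma clamp_lip (M x y : ℝ) : |clampM M x - clampM M y| ≤ |x - y| := by
  unfold clampM
  refine (abs_max_sub_max_le_max _ _ _ _).trans ?_
  rw [sub_self, abs_zero]
  refine max_le (abs_nonneg _) ((abs_min_sub_min_le_max _ _ _ _).trans ?_)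
  simp

lemma good_poly {N : ℕ → ℕ} {a b : ℕ → ℕ → ℝ} (hc : CloseSeq N a b) (p : Polynomial ℝ)
    (M : ℝ) (hM : 0 ≤ M) :
    Tendsto (fun n => (N n : ℝ)⁻¹ * (∑ i ∈ Finset.range (N n), p.eval (clampM M (a n i)) -
      ∑ i ∈ Finset.range (N n), p.eval (clampM M (b n i)))) atTop (𝓝 0) := by
  obtain ⟨C, hC⟩ := (isCompact_Icc (a := -M) (b := M)).exists_bound_of_continuousOn
    (f := fun x => p.eval x) p.continuous.continuousOn
  obtain ⟨K', hK'⟩ := (isCompact_Icc (a := -M) (b := M)).exists_bound_of_continuousOn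
    (f := fun x => p.derivative.eval x) p.derivative.continuous.continuousOn
  set K := max K' 0
  have hK0 : 0 ≤ K := le_max_right _ _
  have lip : ∀ x ∈ Set.Icc (-M) M, ∀ y ∈ Set.Icc (-M) M, |p.eval x - p.eval y| ≤ K * |x - y| := by
    intro x hx y hy
    have := (convex_Icc (-M) M).norm_image_sub_le_of_norm_deriv_le (𝕜 := ℝ)
      (f := fun x => p.eval x) (C := K)
      (fun z _ => p.differentiable.differentiableAt)
      (fun z hz => by rw [Polynomial.deriv]; exact (hK' z hz).trans (le_max_left _ _)) hy hx
    simpa using this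
  have g1 := good_mono hc (fun x => p.eval (clampM M x) + K * clampM M x) (by
    intro x y hxy
    have h1 := lip _ (clamp_mem hM x) _ (clamp_mem hM y)
    have h2 := clamp_mono M hxy
    rw [abs_of_nonpos (by linarith : clampM M x - clampM M y ≤ 0)] at h1
    have := (abs_le.1 h1).2
    simp only
    nlinarith) (C + K * M) (2 * K) (by positivity) (by
    intro x
    refine (abs_add_le _ _).trans (add_le_add (hC _ (clamp_mem hM x)) ?_)
    rw [abs_mul, abs_of_nonneg hK0]
    gcongr
    exact abs_le.2 (clamp_mem hM x)) (by
    intro x y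
    have h1 := lip _ (clamp_mem hM x) _ (clamp_mem hM y)
    have h2 := clamp_lip M x y
    calc _ = |(p.eval (clampM M x) - p.eval (clampM M y)) + K * (clampM M x - clampM M y)| := by
          congr 1; ring
      _ ≤ K * |clampM M x - clampM M y| + K * |clampM M x - clampM M y| := by
          refine (abs_add_le _ _).trans (add_le_add h1 ?_)
          rw [abs_mul, abs_of_nonneg hK0]
      _ ≤ K * |x - y| + K * |x - y| := by gcongr
      _ = _ := by ring)
  have g2 := good_mono hc (fun x => K * clampM M x) (by
    intro x y hxy
    have h2 := clamp_mono M hxy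
    simp only
    gcongr) (K * M) K hK0 (by
    intro x
    rw [abs_mul, abs_of_nonneg hK0]
    gcongr
    exact abs_le.2 (clamp_mem hM x)) (by
    intro x y
    rw [← mul_sub, abs_mul, abs_of_nonneg hK0]
    exact mul_le_mul_of_nonneg_left (clamp_lip M x y) hK0)
  have := g1.sub g2
  rw [sub_zero] at this
  refine this.congr (fun n => ?_)
  simp only [Finset.sum_add_distrib]
  ring

lemma good_real {N : ℕ → ℕ} {a b : ℕ → ℕ → ℝ} (hc : CloseSeq N a b) (F : ℝ → ℝ)
    (hF : Continuous F) (hs : HasCompactSupport F) :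
    Tendsto (fun n => (N n : ℝ)⁻¹ * (∑ i ∈ Finset.range (N n), F (a n i) -
      ∑ i ∈ Finset.range (N n), F (b n i))) atTop (𝓝 0) := by
  obtain ⟨M, hM0, hM⟩ : ∃ M : ℝ, 0 ≤ M ∧ ∀ x, M ≤ |x| → F x = 0 := by
    obtain ⟨R, hR⟩ := hs.isCompact.isBounded.subset_closedBall (0 : ℝ)
    refine ⟨max R 0 + 1, by positivity, fun x hx => ?_⟩
    by_contra hne
    have := hR (subset_tsupport F hne)
    rw [mem_closedBall_zero_iff, Real.norm_eq_abs] at this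
    have := le_max_left R 0
    linarith
  have hclamp : ∀ x, F (clampM M x) = F x := by
    intro x
    unfold clampM
    rcases le_total x M with h1 | h1
    · rcases le_total (-M) x with h2 | h2
      · rw [min_eq_left h1, max_eq_right h2]
      · rw [min_eq_left h1, max_eq_left h2, hM x (by rw [abs_of_nonpos] <;> linarith),
          hM (-M) (by rw [abs_neg]; exact le_abs_self _)]
    · rw [min_eq_right h1, max_eq_right (by linarith), hM x (by rw [abs_of_nonneg] <;> linarith),
          hM M (le_abs_self _)]
  rw [Metric.tendsto_atTop']
  intro δ hδ
  obtain ⟨p, hp⟩ := exists_polynomial_near_of_continuousOn (-M) M F hF.continuousOn (δ / 4)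
    (by positivity)
  have hp' : ∀ x, |F x - p.eval (clampM M x)| ≤ δ / 4 := by
    intro x
    rw [← hclamp x, abs_sub_comm]
    exact (hp _ (clamp_mem hM0 x)).le
  obtain ⟨n0, hn0⟩ := Metric.tendsto_atTop'.1 (good_poly hc p M hM0) (δ / 2) (by positivity)
  refine ⟨n0, fun n hn => ?_⟩
  have h1 := hn0 n hn
  rw [Real.dist_eq, sub_zero] at h1 ⊢
  have ap : ∀ c : ℕ → ℝ, |(N n : ℝ)⁻¹ * (∑ i ∈ Finset.range (N n), F (c i) -
      ∑ i ∈ Finset.range (N n), p.eval (clampM M (c i)))| ≤ δ / 4 := by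
    intro c
    rw [← Finset.sum_sub_distrib, abs_mul, abs_of_nonneg (by positivity)]
    calc _ ≤ (N n : ℝ)⁻¹ * (N n * (δ / 4)) := by
          gcongr
          refine (Finset.abs_sum_le_sum_abs _ _).trans ?_
          have := Finset.sum_le_card_nsmul (Finset.range (N n))
            (fun i => |F (c i) - p.eval (clampM M (c i))|) (δ / 4) (fun i _ => hp' _)
          simpa using this
      _ = ((N n : ℝ)⁻¹ * N n) * (δ / 4) := by ring
      _ ≤ 1 * (δ / 4) := by
          gcongr
          exact inv_mul_le_one
      _ = _ := one_mul _
  have ha := abs_le.1 (ap (a n))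
  have hb := abs_le.1 (ap (b n))
  have h1 := abs_lt.1 h1
  simp only [mul_sub] at ha hb h1 ⊢
  rw [abs_lt]
  constructor <;> linarith [ha.1, ha.2, hb.1, hb.2, h1.1, h1.2]

lemma good_complex {N : ℕ → ℕ} {a b : ℕ → ℕ → ℝ} (hc : CloseSeq N a b) (F : ℝ → ℂ)
    (hF : Continuous F) (hs : HasCompactSupport F) :
    Tendsto (fun n => (N n : ℂ)⁻¹ * ∑ i ∈ Finset.range (N n), F (a n i) -
      (N n : ℂ)⁻¹ * ∑ i ∈ Finset.range (N n), F (b n i)) atTop (𝓝 0) := by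
  have h1 := good_real hc (fun x => (F x).re) (Complex.continuous_re.comp hF)
    (hs.comp_left (g := Complex.re) Complex.zero_re)
  have h2 := good_real hc (fun x => (F x).im) (Complex.continuous_im.comp hF)
    (hs.comp_left (g := Complex.im) Complex.zero_im)
  have h3 := ((Complex.continuous_ofReal.tendsto 0).comp h1).add
    (((Complex.continuous_ofReal.tendsto 0).comp h2).mul_const Complex.I)
  simp only [Complex.ofReal_zero, zero_mul, add_zero] at h3
  refine h3.congr (fun n => ?_)
  rw [← mul_sub]
  simp only [Function.comp]
  rw [Complex.ofReal_mul, Complex.ofReal_mul, mul_assoc, ← mul_add]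
  rw [Complex.ofReal_inv, Complex.ofReal_natCast]
  congr 1
  apply Complex.ext <;> simp

section LinAlg
variable {m : Type*} [Fintype m] [DecidableEq m]

lemma exists_sorted {A : Matrix m m ℂ} (hA : A.IsHermitian) :
    ∃ b : OrthonormalBasis (Fin (Fintype.card m)) ℂ (EuclideanSpace ℂ m),
      ∀ i, toEuclideanLin A (b i) = (hA.eigenvalues₀ i : ℂ) • b i :=
  ⟨(isSymmetric_toEuclideanLin_iff.mpr hA).eigenvectorBasis finrank_euclideanSpace,
    fun i => (isSymmetric_toEuclideanLin_iff.mpr hA).apply_eigenvectorBasis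
        finrank_euclideanSpace i⟩

/-- spectral subspace lemma -/
lemma exists_subspace {A : Matrix m m ℂ} (hA : A.IsHermitian)
    (S : Finset (Fin (Fintype.card m))) :
    ∃ V : Submodule ℂ (EuclideanSpace ℂ m), Module.finrank ℂ V = S.card ∧
      (∀ c : ℝ, (∀ i ∈ S, c ≤ hA.eigenvalues₀ i) → ∀ x ∈ V,
        c * ‖x‖ ^ 2 ≤ (inner ℂ x (toEuclideanLin A x)).re) ∧
      (∀ c : ℝ, (∀ i ∈ S, hA.eigenvalues₀ i ≤ c) → ∀ x ∈ V,
        (inner ℂ x (toEuclideanLin A x)).re ≤ c * ‖x‖ ^ 2) := by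
  obtain ⟨b, hb⟩ := exists_sorted hA
  have hsym := isSymmetric_toEuclideanLin_iff.mpr hA
  have hz : ∀ x ∈ Submodule.span ℂ (Set.range fun i : S => b i), ∀ i, i ∉ S →
      inner ℂ (b i) x = 0 := by
    intro x hx i hi
    induction hx using Submodule.span_induction with
    | mem x h =>
      obtain ⟨j, rfl⟩ := h
      exact b.orthonormal.2 (fun h => hi (h ▸ j.2))
    | zero => simp
    | add x y _ _ h1 h2 => rw [inner_add_right, h1, h2, add_zero]
    | smul c x _ h => rw [inner_smul_right, h, mul_zero]
  have hq : ∀ x, (inner ℂ x (toEuclideanLin A x)).re =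
      ∑ i, hA.eigenvalues₀ i * ‖inner ℂ (b i) x‖ ^ 2 := by
    intro x
    rw [← b.sum_inner_mul_inner, Complex.re_sum]
    refine Finset.sum_congr rfl fun i _ => ?_
    rw [← hsym (b i) x, hb, inner_smul_left, ← inner_conj_symm x (b i), Complex.conj_ofReal,
      mul_left_comm, ← Complex.normSq_eq_conj_mul_self, ← Complex.ofReal_mul, Complex.ofReal_re,
      Complex.normSq_eq_norm_sq]
  refine ⟨Submodule.span ℂ (Set.range fun i : S => b i), ?_, ?_, ?_⟩
  · rw [finrank_span_eq_card]
    · simp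
    · exact b.orthonormal.linearIndependent.comp _ Subtype.val_injective
  · intro c hc x hx
    rw [hq, ← b.sum_sq_norm_inner_right x, Finset.mul_sum]
    refine Finset.sum_le_sum fun i _ => ?_
    by_cases hi : i ∈ S
    · have := hc i hi
      gcongr
    · simp [hz x hx i hi]
  · intro c hc x hx
    rw [hq, ← b.sum_sq_norm_inner_right x, Finset.mul_sum]
    refine Finset.sum_le_sum fun i _ => ?_
    by_cases hi : i ∈ S
    · have := hc i hi
      gcongr
    · simp [hz x hx i hi]

lemma three_inter (U V W : Submodule ℂ (EuclideanSpace ℂ m))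
    (h : 2 * Fintype.card m < Module.finrank ℂ U + Module.finrank ℂ V + Module.finrank ℂ W) :
    ∃ x, x ∈ U ∧ x ∈ V ∧ x ∈ W ∧ x ≠ 0 := by
  have h1 := Submodule.finrank_sup_add_finrank_inf_eq U V
  have h2 := Submodule.finrank_sup_add_finrank_inf_eq (U ⊓ V) W
  have h3 := Submodule.finrank_le (U ⊔ V)
  have h4 := Submodule.finrank_le ((U ⊓ V) ⊔ W)
  rw [finrank_euclideanSpace] at h3 h4
  have h5 : (U ⊓ V) ⊓ W ≠ ⊥ := by
    intro h0
    rw [h0, finrank_bot] at h2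
    omega
  obtain ⟨x, hx, hx0⟩ := Submodule.exists_mem_ne_zero_of_ne_bot h5
  exact ⟨x, hx.1.1, hx.1.2, hx.2, hx0⟩

lemma inner_mul_conj {n : Type*} [Fintype n] [DecidableEq n] (A : Matrix m n ℂ)
    (x : EuclideanSpace ℂ m) :
    (inner ℂ x (toEuclideanLin (A * Aᴴ) x)).re = ‖toEuclideanLin Aᴴ x‖ ^ 2 := by
  have : toEuclideanLin (A * Aᴴ) x = toEuclideanLin A (toEuclideanLin Aᴴ x) := by
    simp [toLpLin_apply, Matrix.mulVec_mulVec]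
  rw [this, ← LinearMap.adjoint_inner_left, ← toEuclideanLin_conjTranspose_eq_adjoint]
  exact (norm_sq_eq_re_inner (𝕜 := ℂ) _).symm

/-- sorted eigenvalues, extended by zero -/
def evs {A : Matrix m m ℂ} (hA : A.IsHermitian) (i : ℕ) : ℝ :=
  if h : i < Fintype.card m then hA.eigenvalues₀ ⟨i, h⟩ else 0

/-- sorted singular values, extended by zero -/
def svs {n : Type*} [Fintype n] (A : Matrix m n ℂ) (i : ℕ) : ℝ :=
  Real.sqrt (evs (Matrix.isHermitian_mul_conjTranspose_self A) i)

/-- number of singular values exceeding `ε` -/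
def bigCount {n : Type*} [Fintype n] (A : Matrix m n ℂ) (ε : ℝ) : ℕ :=
  ((Finset.range (Fintype.card m)).filter fun i => ε < svs A i).card

lemma evs_congr {A B : Matrix m m ℂ} (hA : A.IsHermitian) (hB : B.IsHermitian) (h : A = B)
    (i : ℕ) : evs hA i = evs hB i := by
  subst h; rfl

lemma evs_fin {A : Matrix m m ℂ} (hA : A.IsHermitian) (i : Fin (Fintype.card m)) :
    evs hA i = hA.eigenvalues₀ i := by
  simp [evs]

lemma exists_small {n : Type*} [Fintype n] [DecidableEq n] (E : Matrix m n ℂ) (ε : ℝ)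
    (hε : 0 < ε) : ∃ U : Submodule ℂ (EuclideanSpace ℂ m),
      Module.finrank ℂ U + bigCount E ε = Fintype.card m ∧
      ∀ x ∈ U, ‖toEuclideanLin Eᴴ x‖ ≤ ε * ‖x‖ := by
  set hE := Matrix.isHermitian_mul_conjTranspose_self E
  obtain ⟨U, hU, -, hU2⟩ := exists_subspace hE
    (Finset.univ.filter fun i => ¬ ε < svs E i)
  refine ⟨U, ?_, ?_⟩
  · have : bigCount E ε = (Finset.univ.filter fun i : Fin (Fintype.card m) => ε < svs E i).card := by
      unfold bigCount
      rw [Finset.card_filter, Finset.card_filter, Finset.sum_range]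
    rw [hU, this, add_comm, Finset.card_filter_add_card_filter_not]
    simp
  · intro x hx
    have := hU2 (ε ^ 2) (by
      intro i hi
      have := (Finset.mem_filter.1 hi).2
      rw [not_lt, svs, evs_fin] at this
      exact (Real.sqrt_le_left hε.le).1 this) x hx
    rw [inner_mul_conj, ← mul_pow] at this
    exact le_of_sq_le_sq this (by positivity)

lemma subs_pair {A B : Matrix m m ℂ} (hA : A.IsHermitian) (hB : B.IsHermitian)
    (U : Submodule ℂ (EuclideanSpace ℂ m)) (k : ℕ) (hU : Module.finrank ℂ U + k = Fintype.card m)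
    (i : ℕ) (hi : i + k < Fintype.card m) :
    ∃ x ∈ U, x ≠ 0 ∧ evs hA (i + k) * ‖x‖ ^ 2 ≤ (inner ℂ x (toEuclideanLin A x)).re ∧
      (inner ℂ x (toEuclideanLin B x)).re ≤ evs hB i * ‖x‖ ^ 2 := by
  have hi' : i < Fintype.card m := by omega
  obtain ⟨V, hV, hV1, -⟩ := exists_subspace hA (Finset.Iic ⟨i + k, hi⟩)
  obtain ⟨W, hW, -, hW1⟩ := exists_subspace hB (Finset.Ici ⟨i, hi'⟩)
  rw [Fin.card_Iic] at hV
  rw [Fin.card_Ici] at hW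
  obtain ⟨x, h1, h2, h3, h4⟩ := three_inter U V W (by rw [hV, hW]; simp only; omega)
  refine ⟨x, h1, h4, hV1 _ (fun j hj => ?_) x h2, hW1 _ (fun j hj => ?_) x h3⟩
  · rw [evs, dif_pos hi]
    exact hA.eigenvalues₀_antitone (Finset.mem_Iic.1 hj)
  · rw [evs, dif_pos hi']
    exact hB.eigenvalues₀_antitone (Finset.mem_Ici.1 hj)

lemma bigCount_neg {n : Type*} [Fintype n] (E : Matrix m n ℂ) (ε : ℝ) :
    bigCount (-E) ε = bigCount E ε := by
  have h : ∀ i, svs (-E) i = svs E i := fun i => by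
    unfold svs
    rw [evs_congr (Matrix.isHermitian_mul_conjTranspose_self (-E))
      (Matrix.isHermitian_mul_conjTranspose_self E) (by simp)]
  simp only [bigCount, h]

lemma weyl_eig {A B : Matrix m m ℂ} (hA : A.IsHermitian) (hB : B.IsHermitian) (ε : ℝ)
    (hε : 0 < ε) (i : ℕ) (hi : i + bigCount (A - B) ε < Fintype.card m) :
    evs hA (i + bigCount (A - B) ε) ≤ evs hB i + ε := by
  obtain ⟨U, hU, hU1⟩ := exists_small (A - B) ε hε
  obtain ⟨x, hx, hx0, h1, h2⟩ := subs_pair hA hB U _ hU i hi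
  have h3 := hU1 x hx
  have hE : (A - B)ᴴ = A - B := (hA.sub hB)
  rw [hE] at h3
  have h4 : (inner ℂ x (toEuclideanLin (A - B) x)).re ≤ ε * ‖x‖ ^ 2 := by
    refine (Complex.re_le_norm _).trans ((norm_inner_le_norm _ _).trans ?_)
    calc _ ≤ ‖x‖ * (ε * ‖x‖) := by gcongr
      _ = _ := by ring
  rw [map_sub, LinearMap.sub_apply, inner_sub_right, Complex.sub_re] at h4
  have hp : 0 < ‖x‖ ^ 2 := by positivity
  refine le_of_mul_le_mul_right ?_ hp
  linarith

lemma evs_nonneg {n : Type*} [Fintype n] [DecidableEq n] (A : Matrix m n ℂ) (i : ℕ) :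
    0 ≤ evs (Matrix.isHermitian_mul_conjTranspose_self A) i := by
  unfold evs
  split_ifs with h
  · obtain ⟨b, hb⟩ := exists_sorted (Matrix.isHermitian_mul_conjTranspose_self A)
    have h1 := inner_mul_conj A (b ⟨i, h⟩)
    rw [hb, inner_smul_right, inner_self_eq_norm_sq_to_K, b.norm_eq_one] at h1
    simp at h1
    rw [h1]; positivity
  · exact le_rfl

lemma weyl_sv {n : Type*} [Fintype n] [DecidableEq n] (A B : Matrix m n ℂ) (ε : ℝ)
    (hε : 0 < ε) (i : ℕ) (hi : i + bigCount (A - B) ε < Fintype.card m) :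
    svs A (i + bigCount (A - B) ε) ≤ svs B i + ε := by
  obtain ⟨U, hU, hU1⟩ := exists_small (A - B) ε hε
  obtain ⟨x, hx, hx0, h1, h2⟩ := subs_pair (Matrix.isHermitian_mul_conjTranspose_self A)
    (Matrix.isHermitian_mul_conjTranspose_self B) U _ hU i hi
  have h3 := hU1 x hx
  rw [inner_mul_conj, ← Real.sq_sqrt (evs_nonneg A _), ← mul_pow] at h1
  rw [inner_mul_conj, ← Real.sq_sqrt (evs_nonneg B _), ← mul_pow] at h2
  change (svs A _ * ‖x‖) ^ 2 ≤ _ at h1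
  change _ ≤ (svs B _ * ‖x‖) ^ 2 at h2
  have h1 := le_of_sq_le_sq h1 (by positivity)
  have h2 := le_of_sq_le_sq h2 (mul_nonneg (Real.sqrt_nonneg _) (by positivity))
  rw [conjTranspose_sub, map_sub, LinearMap.sub_apply] at h3
  have h4 := norm_sub_norm_le (toEuclideanLin Aᴴ x) (toEuclideanLin Bᴴ x)
  have hp : 0 < ‖x‖ := by positivity
  refine le_of_mul_le_mul_right ?_ hp
  linarith

lemma svs_zero {n : Type*} [Fintype n] [DecidableEq n] (A : Matrix m n ℂ) (i : ℕ)
    (hi : min (Fintype.card m) (Fintype.card n) ≤ i) : svs A i = 0 := by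
  unfold svs
  rw [Real.sqrt_eq_zero (evs_nonneg A i)]
  by_cases h : i < Fintype.card m
  swap
  · simp [evs, h]
  have hn : Fintype.card n ≤ i := by omega
  set hM := Matrix.isHermitian_mul_conjTranspose_self A
  by_contra hne
  have hpos : 0 < evs hM i := lt_of_le_of_ne (evs_nonneg A i) (Ne.symm hne)
  obtain ⟨V, hV, hV1, -⟩ := exists_subspace hM (Finset.Iic ⟨i, h⟩)
  rw [Fin.card_Iic] at hV
  have hinj : Function.Injective ((toEuclideanLin Aᴴ).comp V.subtype) := by
    rw [← LinearMap.ker_eq_bot, LinearMap.ker_eq_bot']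
    intro x hx
    have h1 := hV1 (evs hM i) (fun j hj => by
      rw [evs, dif_pos h]
      exact hM.eigenvalues₀_antitone (Finset.mem_Iic.1 hj)) x x.2
    rw [inner_mul_conj] at h1
    simp only [LinearMap.comp_apply, Submodule.subtype_apply] at hx
    rw [hx, norm_zero] at h1
    have h2 : ‖(x : EuclideanSpace ℂ m)‖ ^ 2 ≤ 0 := by
      by_contra h0
      push Not at h0
      have := mul_pos hpos h0
      linarith
    have h3 : ‖(x : EuclideanSpace ℂ m)‖ = 0 := by
      have := sq_nonneg ‖(x : EuclideanSpace ℂ m)‖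
      exact pow_eq_zero_iff two_ne_zero |>.1 (le_antisymm h2 this)
    exact Subtype.ext (norm_eq_zero.1 h3)
  have := LinearMap.finrank_le_finrank_of_injective hinj
  rw [hV, finrank_euclideanSpace] at this
  simp only at this
  omega

lemma sum_eigs {A : Matrix m m ℂ} (hA : A.IsHermitian) (F : ℝ → ℂ) :
    ∑ i, F (hA.eigenvalues i) = ∑ i ∈ Finset.range (Fintype.card m), F (evs hA i) := by
  rw [Finset.sum_range]
  simp only [evs_fin]
  unfold Matrix.IsHermitian.eigenvalues
  exact Equiv.sum_comp (Fintype.equivOfCardEq (Fintype.card_fin _)).symm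
    (fun i => F (hA.eigenvalues₀ i))

lemma svSum_eq {n : Type*} [Fintype n] [DecidableEq n] (A : Matrix m n ℂ) (F : ℝ → ℂ) :
    svSum F A = ∑ i ∈ Finset.range (min (Fintype.card m) (Fintype.card n)), F (svs A i) := by
  unfold svSum
  rw [sum_eigs (Matrix.isHermitian_mul_conjTranspose_self A) (fun x => F (Real.sqrt x))]
  change ∑ i ∈ Finset.range (Fintype.card m), F (svs A i) - _ = _
  obtain ⟨r, hr⟩ := Nat.exists_eq_add_of_le (min_le_left (Fintype.card m) (Fintype.card n))
  have h1 : ∑ i ∈ Finset.range (Fintype.card m), F (svs A i) =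
      ∑ i ∈ Finset.range (min (Fintype.card m) (Fintype.card n)), F (svs A i) + r * F 0 := by
    conv_lhs => rw [hr]
    rw [Finset.sum_range_add]
    congr 1
    rw [Finset.sum_congr rfl (fun i _ => by rw [svs_zero A _ (Nat.le_add_right _ i)])]
    simp
  have h2 : Fintype.card m - min (Fintype.card m) (Fintype.card n) = r := by omega
  rw [h1, h2]
  ring

lemma eigSum_eq {A : Matrix m m ℂ} (hA : A.IsHermitian) (F : ℂ → ℂ) :
    eigSum F A = ∑ i ∈ Finset.range (Fintype.card m), F (evs hA i) := by
  rw [← sum_eigs hA (fun x => F (x : ℂ))]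
  unfold eigSum
  rw [hA.roots_charpoly_eq_eigenvalues, Multiset.map_map]
  rfl

/-- hat function -/
def hat (ε x : ℝ) : ℝ := max 0 (1 - |x| / ε)

lemma bigCount_le {n : Type*} [Fintype n] [DecidableEq n] (A : Matrix m n ℂ) (ε : ℝ)
    (hε : 0 < ε) :
    (bigCount A ε : ℝ) ≤ (min (Fintype.card m) (Fintype.card n) : ℕ) -
      (svSum (fun x => (hat ε x : ℂ)) A).re := by
  set N := min (Fintype.card m) (Fintype.card n) with hN
  have h1 : bigCount A ε ≤ ((Finset.range N).filter fun i => ε < svs A i).card := by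
    apply Finset.card_le_card
    intro i hi
    rw [Finset.mem_filter] at hi ⊢
    refine ⟨?_, hi.2⟩
    rw [Finset.mem_range]
    by_contra hlt
    have := svs_zero A i (not_lt.1 hlt)
    linarith [hi.2]
  rw [svSum_eq, Complex.re_sum, ← hN]
  simp only [Complex.ofReal_re]
  have h2 : ((N : ℕ) : ℝ) = ∑ i ∈ Finset.range N, (1 : ℝ) := by simp
  rw [h2, ← Finset.sum_sub_distrib]
  refine (Nat.cast_le.2 h1).trans ?_
  rw [Finset.card_filter, Nat.cast_sum]
  refine Finset.sum_le_sum fun i _ => ?_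
  split_ifs with h
  · have : hat ε (svs A i) = 0 := by
      refine max_eq_left ?_
      have : 1 ≤ |svs A i| / ε := by
        rw [le_div_iff₀ hε, one_mul]; exact h.le.trans (le_abs_self _)
      linarith
    simp [this]
  · have : hat ε (svs A i) ≤ 1 := by
      refine max_le zero_le_one ?_
      have : 0 ≤ |svs A i| / ε := by positivity
      linarith
    simpa using this

end LinAlg

lemma bigCount_tendsto (d e : ℕ → ℕ)
    (hmin : Tendsto (fun n => min (d n) (e n)) atTop atTop)
    (E : ∀ n, Matrix (Fin (d n)) (Fin (e n)) ℂ) (hE : DistributedSVConst 0 E) (ε : ℝ)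
    (hε : 0 < ε) :
    Tendsto (fun n => (bigCount (E n) ε : ℝ) / (min (d n) (e n) : ℕ)) atTop (𝓝 0) := by
  have hc : Continuous (hat ε) := by unfold hat; fun_prop
  have h1 := hE (fun x => (hat ε x : ℂ)) (by fun_prop) (by
    refine HasCompactSupport.of_support_subset_isCompact (isCompact_Icc (a := -ε) (b := ε)) ?_
    intro x hx
    by_contra hn
    apply hx
    have : ε < |x| := by
      by_contra h; exact hn (abs_le.1 (not_lt.1 h))
    have h2 : hat ε x = 0 := by
      refine max_eq_left ?_
      have : 1 ≤ |x| / ε := by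
        rw [le_div_iff₀ hε, one_mul]; exact this.le
      linarith
    simp [h2])
  have h0 : hat ε 0 = 1 := by simp [hat]
  have h2 := (Complex.continuous_re.tendsto _).comp h1
  simp only [h0, Complex.ofReal_one, Complex.one_re] at h2
  have h3 := h2.const_sub 1
  rw [sub_self] at h3
  refine squeeze_zero' (Eventually.of_forall fun n => by positivity) ?_ h3
  filter_upwards [hmin.eventually_ge_atTop 1] with n hn
  have hb := bigCount_le (E n) ε hε
  simp only [Fintype.card_fin] at hb
  have hN : (0 : ℝ) < (min (d n) (e n) : ℕ) := by exact_mod_cast hn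
  rw [div_le_iff₀ hN]
  refine hb.trans (le_of_eq ?_)
  simp only [Function.comp, Fintype.card_fin]
  rw [← Complex.ofReal_natCast, ← Complex.ofReal_inv, Complex.re_ofReal_mul, sub_mul, one_mul]
  field_simp

lemma bigCount_symm {m n : Type*} [Fintype m] [DecidableEq m] [Fintype n] (A B : Matrix m n ℂ)
    (ε : ℝ) : bigCount (B - A) ε = bigCount (A - B) ε := by
  rw [← neg_sub, bigCount_neg]

lemma close_sv (d e : ℕ → ℕ)
    (hmin : Tendsto (fun n => min (d n) (e n)) atTop atTop)
    (X Y : ∀ n, Matrix (Fin (d n)) (Fin (e n)) ℂ)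
    (hdiff : DistributedSVConst 0 (fun n => X n - Y n)) :
    CloseSeq (fun n => min (d n) (e n)) (fun n => svs (X n)) (fun n => svs (Y n)) := by
  intro ε hε
  refine ⟨fun n => bigCount (X n - Y n) ε, bigCount_tendsto d e hmin _ hdiff ε hε, ?_⟩
  intro n i hi
  have hi' : i + bigCount (X n - Y n) ε < Fintype.card (Fin (d n)) := by
    rw [Fintype.card_fin]; exact lt_of_lt_of_le hi (min_le_left _ _)
  refine ⟨weyl_sv _ _ ε hε i hi', ?_⟩
  have := weyl_sv (Y n) (X n) ε hε i
  rw [bigCount_symm] at this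
  exact this hi'

lemma close_eig (d : ℕ → ℕ)
    (hmin : Tendsto (fun n => min (d n) (d n)) atTop atTop)
    (X Y : ∀ n, Matrix (Fin (d n)) (Fin (d n)) ℂ)
    (hdiff : DistributedSVConst 0 (fun n => X n - Y n))
    (hX : ∀ n, (X n).IsHermitian) (hY : ∀ n, (Y n).IsHermitian) :
    CloseSeq d (fun n => evs (hX n)) (fun n => evs (hY n)) := by
  intro ε hε
  refine ⟨fun n => bigCount (X n - Y n) ε, ?_, ?_⟩
  · simpa using bigCount_tendsto d d hmin _ hdiff ε hε
  intro n i hi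
  have hi' : i + bigCount (X n - Y n) ε < Fintype.card (Fin (d n)) := by
    rw [Fintype.card_fin]; exact hi
  refine ⟨weyl_eig _ _ ε hε i hi', ?_⟩
  have := weyl_eig (hY n) (hX n) ε hε i
  rw [bigCount_symm] at this
  exact this hi'

lemma tendsto_iff_of_sub {f g : ℕ → ℂ} (h : Tendsto (fun n => f n - g n) atTop (𝓝 0)) (l : ℂ) :
    Tendsto f atTop (𝓝 l) ↔ Tendsto g atTop (𝓝 l) := by
  constructor
  · intro hf
    simpa using hf.sub h
  · intro hg
    simpa using hg.add h

/-- if two matrix-sequences `{X_n}_n`, `{Y_n}_n` of the same sizes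
(`d_n × e_n`, `min{d_n,e_n} → ∞`) have zero-distributed difference
`{X_n − Y_n}_n ∼_σ 0`, then for any measurable symbol `G`:
`{X_n}_n ∼_σ G` iff `{Y_n}_n ∼_σ G`; and if all matrices are Hermitian, also
`{X_n}_n ∼_λ G` iff `{Y_n}_n ∼_λ G`. -/
theorem zero_distributed_difference_same_symbol
    (d e : ℕ → ℕ)
    (hmin : Tendsto (fun n => min (d n) (e n)) atTop atTop)
    (X Y : ∀ n, Matrix (Fin (d n)) (Fin (e n)) ℂ)
    (hdiff : DistributedSVConst 0 (fun n => X n - Y n)) :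
    (∀ (l s t : ℕ) (Ω : Set (Fin l → ℝ)), MeasurableSet Ω →
      0 < volume Ω → volume Ω < ⊤ →
      ∀ G : (Fin l → ℝ) → Matrix (Fin s) (Fin t) ℂ,
        (∀ a b, Measurable fun θ => G θ a b) →
        (DistributedSV Ω G X ↔ DistributedSV Ω G Y)) ∧
    (∀ (hde : ∀ n, e n = d n),
      (∀ n, ((X n).submatrix id (Fin.cast (hde n).symm)).IsHermitian) →
      (∀ n, ((Y n).submatrix id (Fin.cast (hde n).symm)).IsHermitian) →
      ∀ (l s : ℕ) (Ω : Set (Fin l → ℝ)), MeasurableSet Ω →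
        0 < volume Ω → volume Ω < ⊤ →
        ∀ G : (Fin l → ℝ) → Matrix (Fin s) (Fin s) ℂ,
          (∀ a b, Measurable fun θ => G θ a b) →
          (DistributedEig Ω G (fun n => (X n).submatrix id (Fin.cast (hde n).symm)) ↔
            DistributedEig Ω G (fun n => (Y n).submatrix id (Fin.cast (hde n).symm)))) := by
  refine ⟨?_, ?_⟩
  · intro l s t Ω _ _ _ G _
    have hc := close_sv d e hmin X Y hdiff
    refine forall_congr' fun F => forall_congr' fun hF => forall_congr' fun hs => ?_
    apply tendsto_iff_of_sub
    simp only [svSum_eq, Fintype.card_fin]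
    exact good_complex hc F hF hs
  · intro hde
    obtain rfl : e = d := funext hde
    intro hX hY l s Ω _ _ _ G _
    have hc := close_eig e hmin X Y hdiff hX hY
    refine forall_congr' fun F => forall_congr' fun hF => forall_congr' fun hs => ?_
    apply tendsto_iff_of_sub
    have h1 := good_complex hc (fun x => F (x : ℂ)) (hF.comp Complex.continuous_ofReal)
      (hs.comp_isClosedEmbedding Complex.isometry_ofReal.isClosedEmbedding)
    refine h1.congr (fun n => ?_)
    rw [eigSum_eq (hX n), eigSum_eq (hY n)]
    simp only [Fintype.card_fin]
    rfl

end
end
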